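/- In the pure p-spin spherical model with p ≥ 3, the ground-state energy satisfies lim_{N→∞} (1/N) E[ max_{σ ∈ S_N} H_N(σ) ] = E_0. -/

import Mathlib

open MeasureTheory ProbabilityTheory Filter
open scoped ENNReal NNReal

noncomputable section

/-- Euclidean dot product on `ℝ^N`. -/
def dotp {N : ℕ} (σ τ : Fin N → ℝ) : ℝ := ∑ i, σ i * τ i

/-- The sphere `S_N = {σ : ‖σ‖₂² = N}`. -/
def sphereSet (N : ℕ) : Set (Fin N → ℝ) := {σ | ∑ i, (σ i) ^ 2 = (N : ℝ)}

/-- The mixture `ξ(x) = Σ_{k=2}^P c_k² x^k`. -/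
def xiFun (P : ℕ) (c : ℕ → ℝ) (x : ℝ) : ℝ := ∑ k ∈ Finset.Icc 2 P, (c k) ^ 2 * x ^ k

/-- `ξ'`. -/
def xiD1 (P : ℕ) (c : ℕ → ℝ) (x : ℝ) : ℝ :=
  ∑ k ∈ Finset.Icc 2 P, (k : ℝ) * (c k) ^ 2 * x ^ (k - 1)

/-- `ξ''`. -/
def xiD2 (P : ℕ) (c : ℕ → ℝ) (x : ℝ) : ℝ :=
  ∑ k ∈ Finset.Icc 2 P, (k : ℝ) * ((k : ℝ) - 1) * (c k) ^ 2 * x ^ (k - 2)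

/-- The mixed p-spin Hamiltonian built from couplings `g`. -/
def hamiltonian (N P : ℕ) (c : ℕ → ℝ) (g : (k : ℕ) → (Fin k → Fin N) → ℝ)
    (σ : Fin N → ℝ) : ℝ :=
  ∑ k ∈ Finset.Icc 2 P, c k * (N : ℝ) ^ (-(((k : ℝ) - 1) / 2)) *
    ∑ j : Fin k → Fin N, g k j * ∏ i, σ (j i)

/-- Index set for the entries of all the coupling tensors. -/
abbrev GIdx (N P : ℕ) : Type := Σ k : {k : ℕ // k ∈ Finset.Icc 2 P}, (Fin (k : ℕ) → Fin N)

/-- Flatten the couplings into a single Gaussian vector. -/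
def flatten (N P : ℕ) (g : (k : ℕ) → (Fin k → Fin N) → ℝ) : GIdx N P → ℝ :=
  fun i => g i.1 i.2

/-- The couplings `(G^{(k)})_{2 ≤ k ≤ P}` are i.i.d. standard Gaussians. -/
def StdGaussianCouplings {Ω : Type*} [MeasureSpace Ω] (N P : ℕ)
    (G : Ω → (k : ℕ) → (Fin k → Fin N) → ℝ) : Prop :=
  Measure.map (fun ω => flatten N P (G ω)) ℙ = Measure.pi fun _ : GIdx N P => gaussianReal 0 1

/-- The maximum of the Hamiltonian over the sphere. -/
def maxH (N P : ℕ) (c : ℕ → ℝ) (g : (k : ℕ) → (Fin k → Fin N) → ℝ) : ℝ :=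
  ⨆ σ : sphereSet N, hamiltonian N P c g σ.1


/-- Euclidean gradient of the Hamiltonian. -/
def gradH (N P : ℕ) (c : ℕ → ℝ) (g : (k : ℕ) → (Fin k → Fin N) → ℝ)
    (σ : Fin N → ℝ) : Fin N → ℝ :=
  fun i => fderiv ℝ (hamiltonian N P c g) σ (Pi.single i 1)

/-- Euclidean Hessian of the Hamiltonian, as a bilinear form. -/
def hessH (N P : ℕ) (c : ℕ → ℝ) (g : (k : ℕ) → (Fin k → Fin N) → ℝ)
    (σ v w : Fin N → ℝ) : ℝ :=
  fderiv ℝ (fun τ => fderiv ℝ (hamiltonian N P c g) τ w) σ v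

/-- `σ` is a spherical critical point: `∇H(σ) = (⟨∇H(σ),σ⟩/N) σ`. -/
def IsCritPt (N P : ℕ) (c : ℕ → ℝ) (g : (k : ℕ) → (Fin k → Fin N) → ℝ)
    (σ : Fin N → ℝ) : Prop :=
  σ ∈ sphereSet N ∧ gradH N P c g σ = (dotp (gradH N P c g σ) σ / N) • σ

/-- Cardinality of a set, valued in `ℝ≥0∞`. -/
def ecount {α : Type*} (s : Set α) : ℝ≥0∞ := ∑' _ : s, 1

/-- Spherical critical points with energy at least `Nη`. -/
def crtSet (N P : ℕ) (c : ℕ → ℝ) (g : (k : ℕ) → (Fin k → Fin N) → ℝ)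
    (η : ℝ) : Set (Fin N → ℝ) :=
  {σ | IsCritPt N P c g σ ∧ (N : ℝ) * η ≤ hamiltonian N P c g σ}

/-- Index (number of negative eigenvalues) of the spherical Hessian quadratic form at `σ`:
maximal dimension of a subspace of the tangent space on which the form is negative definite. -/
def critIndex (N P : ℕ) (c : ℕ → ℝ) (g : (k : ℕ) → (Fin k → Fin N) → ℝ)
    (σ : Fin N → ℝ) : ℕ :=
  sSup {d : ℕ | ∃ W : Submodule ℝ (Fin N → ℝ), Module.finrank ℝ W = d ∧
    (∀ v ∈ W, dotp v σ = 0) ∧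
    ∀ v ∈ W, v ≠ 0 →
      hessH N P c g σ v v - (dotp (gradH N P c g σ) σ / N) * ∑ i, (v i) ^ 2 < 0}

/-- Critical points of index `N-1-k` in the superlevel set. -/
def crtSetIdx (N P : ℕ) (c : ℕ → ℝ) (g : (k : ℕ) → (Fin k → Fin N) → ℝ)
    (η : ℝ) (k : ℕ) : Set (Fin N → ℝ) :=
  {σ | σ ∈ crtSet N P c g η ∧ critIndex N P c g σ = N - 1 - k}

/-- Coefficients of the pure p-spin model. -/
def pureC (p : ℕ) : ℕ → ℝ := fun k => if k = p then 1 else 0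

/-- The uniform probability measure on the sphere `S_N`. -/
def sphereUniform (N : ℕ) : Measure (Fin N → ℝ) :=
  Measure.map (fun g i => Real.sqrt N * g i / Real.sqrt (∑ j, (g j) ^ 2))
    (Measure.pi fun _ : Fin N => gaussianReal 0 1)

/-- The band around `m`. -/
def band (N : ℕ) (m : Fin N → ℝ) (δ : ℝ) : Set (Fin N → ℝ) :=
  {σ | σ ∈ sphereSet N ∧ |dotp (σ - m) m| < N * δ}

/-- `k`-tuples from the band with pairwise overlaps close to `⟨m,m⟩`. -/
def bandK (N k : ℕ) (m : Fin N → ℝ) (δ ε : ℝ) : Set (Fin k → Fin N → ℝ) :=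
  {σs | (∀ i, σs i ∈ band N m δ) ∧
    ∀ i j, i ≠ j → |dotp (σs i) (σs j) - dotp m m| < N * ε}

/-- `∫₀ᵗ γ(s) ds`, valued in `ℝ≥0∞`. -/
def gammaLInt (γ : ℝ → ℝ) (t : ℝ) : ℝ≥0∞ := ∫⁻ s in Set.Ioo 0 t, ENNReal.ofReal (γ s)

/-- The zero-temperature spherical Parisi functional (Crisanti–Sommers form), with the
convention `1/0 = +∞`. -/
def PFunE (P : ℕ) (c : ℕ → ℝ) (γ : ℝ → ℝ) : ℝ≥0∞ :=
  ⨅ L ∈ {L : ℝ | gammaLInt γ 1 ≤ ENNReal.ofReal L},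
    (∫⁻ t in Set.Ioo (0 : ℝ) 1,
      (ENNReal.ofReal (xiD2 P c t * (L - (gammaLInt γ t).toReal))
        + (ENNReal.ofReal (L - (gammaLInt γ t).toReal))⁻¹)) / 2

/-- The space `𝒰` of order parameters: non-decreasing, non-negative, integrable on `[0,1)`. -/
def calU : Set (ℝ → ℝ) :=
  {γ | (∀ t ∈ Set.Ico (0 : ℝ) 1, 0 ≤ γ t) ∧ MonotoneOn γ (Set.Ico 0 1) ∧
    IntegrableOn γ (Set.Ioo 0 1)}

/-- The support of `γ`: points of `[0,1]` near which `γ` is not constant. -/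
def suppGamma (γ : ℝ → ℝ) : Set ℝ :=
  {q | q ∈ Set.Icc (0 : ℝ) 1 ∧ ∀ ε > 0, ∃ s ∈ Set.Ico (0 : ℝ) 1, ∃ t ∈ Set.Ico (0 : ℝ) 1,
    |s - q| < ε ∧ |t - q| < ε ∧ γ s ≠ γ t}

/-- The superlevel set `L_N(η)`. -/
def levelSet (N P : ℕ) (c : ℕ → ℝ) (g : (k : ℕ) → (Fin k → Fin N) → ℝ)
    (η : ℝ) : Set (Fin N → ℝ) :=
  {σ | σ ∈ sphereSet N ∧ (N : ℝ) * η ≤ hamiltonian N P c g σ}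

/-- Threshold energy of the pure p-spin model. -/
def THRp (p : ℕ) : ℝ := 2 * Real.sqrt (((p : ℝ) - 1) / p)

/-- The function `J` of the pure p-spin complexity. -/
def Jp (p : ℕ) (η : ℝ) : ℝ :=
  η / (THRp p) ^ 2 * Real.sqrt (η ^ 2 - (THRp p) ^ 2)
    - Real.log (η + Real.sqrt (η ^ 2 - (THRp p) ^ 2)) + Real.log (THRp p)

/-- The annealed complexity of the pure p-spin spherical model. -/
def SigmaPure (p : ℕ) (η : ℝ) : ℝ :=
  if η ≤ 0 then Real.log ((p : ℝ) - 1) / 2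
  else if η ≤ THRp p then
    Real.log ((p : ℝ) - 1) / 2 - ((p : ℝ) - 2) / (4 * ((p : ℝ) - 1)) * η ^ 2
  else Real.log ((p : ℝ) - 1) / 2 - ((p : ℝ) - 2) / (4 * ((p : ℝ) - 1)) * η ^ 2 - Jp p η

/-- Couplings, unflattened from a vector indexed by `GIdx N P`. -/
def unflatten (N P : ℕ) (g : GIdx N P → ℝ) : (k : ℕ) → (Fin k → Fin N) → ℝ :=
  fun k j => if h : k ∈ Finset.Icc 2 P then g ⟨⟨k, h⟩, j⟩ else 0

/-- `ξ'''`. -/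
def xiD3 (P : ℕ) (c : ℕ → ℝ) (x : ℝ) : ℝ :=
  ∑ k ∈ Finset.Icc 2 P, (k : ℝ) * ((k : ℝ) - 1) * ((k : ℝ) - 2) * (c k) ^ 2 * x ^ (k - 3)

open scoped RealInnerProductSpace

/-- Parametrization of the zero of the complexity by the one-step replica symmetry breaking
parameters. -/
lemma exists_rsb_parameters (p : ℕ) (hp : 3 ≤ p) (E0 : ℝ) (hthr : THRp p < E0)
    (hzero : SigmaPure p E0 = 0) :
    ∃ z θ : ℝ, 0 < z ∧ 0 < θ ∧ p * z * (z + θ) = 1 ∧ E0 = p * z + θ ∧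
      Real.log (1 / (p * z ^ 2)) = θ * E0 ∧ p * (p - 1) * z ^ 2 < 1 := by
  have hP : (3 : ℝ) ≤ p := by exact_mod_cast hp
  set P : ℝ := (p : ℝ) with hPdef
  have hP0 : 0 < P := by linarith
  have hP1 : 0 < P - 1 := by linarith
  set T := THRp p with hT
  have hT2 : T ^ 2 = 4 * (P - 1) / P := by
    rw [hT, THRp, mul_pow, Real.sq_sqrt (by positivity)]; ring
  have hTpos : 0 < T := by rw [hT, THRp]; positivity
  have hE : 0 < E0 := hTpos.trans hthr
  set S := Real.sqrt (E0 ^ 2 - T ^ 2) with hS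
  have hdpos : 0 < E0 ^ 2 - T ^ 2 := by nlinarith
  have hS2 : S ^ 2 = E0 ^ 2 - T ^ 2 := Real.sq_sqrt hdpos.le
  have hSpos : 0 < S := Real.sqrt_pos.mpr hdpos
  have hSE : S < E0 := by nlinarith [sq_nonneg T, pow_pos hTpos 2]
  set z := (E0 - S) / (2 * (P - 1)) with hz
  have hzpos : 0 < z := div_pos (by linarith) (by linarith)
  have h1 : E0 - S = 2 * (P - 1) * z := by rw [hz]; field_simp
  have h2 : (E0 + S) * (P * z) = 2 := by
    have : (E0 + S) * (E0 - S) = 4 * (P - 1) / P := by rw [← hT2]; linarith [hS2, sq_nonneg S]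
    rw [h1] at this
    field_simp at this
    nlinarith
  have h3 : E0 + S = 2 / (P * z) := by field_simp; linarith
  have hEz : E0 = (P - 1) * z + 1 / (P * z) := by
    have : 2 * E0 = 2 * (P - 1) * z + 2 / (P * z) := by linarith
    linear_combination this / 2
  have hSz : S = 1 / (P * z) - (P - 1) * z := by linear_combination h3 - hEz
  have hlt : P * (P - 1) * z ^ 2 < 1 := by
    have : (P - 1) * z < 1 / (P * z) := by linarith
    rw [lt_div_iff₀ (by positivity)] at this
    nlinarith
  have hθ : 0 < 1 / (P * z) - z := by nlinarith [hSz, hSpos]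
  refine ⟨z, 1 / (P * z) - z, hzpos, hθ, by field_simp; ring, by rw [hEz]; ring, ?_, hlt⟩
  rw [SigmaPure, if_neg (not_le.mpr hE), if_neg (not_le.mpr hthr), Jp] at hzero
  rw [← hT, ← hPdef, ← hS, h3, hT2] at hzero
  have hlogT : Real.log T = Real.log 2 + (Real.log (P - 1) - Real.log P) / 2 := by
    rw [hT, THRp, Real.log_mul (by norm_num) (by positivity), Real.log_sqrt (by positivity),
      Real.log_div (by positivity) (by positivity)]
  rw [hlogT, Real.log_div (by norm_num) (by positivity), Real.log_mul (by positivity)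
    (by positivity)] at hzero
  rw [one_div, Real.log_inv, Real.log_mul (by positivity) (by positivity), Real.log_pow]
  have key : (P - 2) / (4 * (P - 1)) * E0 ^ 2 + E0 / (4 * (P - 1) / P) * S
      = (1 / (P * z) - z) * E0 / 2 := by
    rw [hSz]
    have : (P - 2) / (4 * (P - 1)) * E0 ^ 2
        = (P - 2) / (4 * (P - 1)) * E0 * ((P - 1) * z + 1 / (P * z)) := by
      rw [← hEz]; ring
    rw [this]
    field_simp
    ring
  push_cast
  linarith

/-- The annealed two-point exponent near the diagonal is nonpositive at the ground state. -/
lemma rsb_log_inequality {P E z θ : ℝ} (hP : 3 ≤ P) (hz : 0 < z)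
    (hθ : 0 < θ) (h1 : P * z * (z + θ) = 1) (hE : E = P * z + θ)
    (hlog : Real.log (1 / (P * z ^ 2)) = θ * E) (hlt : P * (P - 1) * z ^ 2 < 1)
    {Y : ℝ} (hY : 1 ≤ Y) :
    E ^ 2 * (Y - 1) / (Y + P - 1) ≤ Real.log Y := by
  set K : ℝ → ℝ := fun Y => Real.log Y - E ^ 2 * (Y - 1) / (Y + P - 1) with hK
  set Y1 := (P - 1) ^ 2 * P * z ^ 2
  set Y2 := 1 / (P * z ^ 2) with hY2
  have hPpos : 0 < P := by linarith
  have hE' : E * (P * z) = 1 + P * (P - 1) * z ^ 2 := by rw [hE]; linear_combination h1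
  have hY2pos : 0 < Y2 := by positivity
  have hfac : ∀ Y, (Y + P - 1) ^ 2 - E ^ 2 * P * Y = (Y - Y1) * (Y - Y2) := by
    intro Y
    have hEE : E = (1 + P * (P - 1) * z ^ 2) / (P * z) := by
      rw [eq_div_iff (by positivity)]; exact hE'
    simp only [Y1, hY2, hEE]
    field_simp
    ring
  have h12 : Y1 < Y2 := by
    rw [hY2, lt_div_iff₀ (by positivity)]
    have : 0 < P * (P - 1) * z ^ 2 := by have : 0 < P - 1 := by linarith
                                         positivity
    simp only [Y1]
    nlinarith
  have h2one : 1 ≤ Y2 := by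
    rw [hY2, le_div_iff₀ (by positivity)]
    nlinarith [mul_pos hPpos (mul_pos hz hθ)]
  have hder : ∀ Y, 0 < Y → HasDerivAt K ((Y - Y1) * (Y - Y2) / (Y * (Y + P - 1) ^ 2)) Y := by
    intro Y hY
    have hne : Y + P - 1 ≠ 0 := by linarith
    have := (Real.hasDerivAt_log hY.ne').sub
      ((((hasDerivAt_id Y).sub_const 1).const_mul (E ^ 2)).div
        (((hasDerivAt_id Y).add_const P).sub_const 1) hne)
    refine this.congr_deriv ?_
    rw [← hfac]
    simp only [id]
    field_simp
    ring
  have hcont : ContinuousOn K (Set.Ici 1) := fun Y hY =>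
    (hder Y (by have : (1:ℝ) ≤ Y := hY
                linarith)).continuousAt.continuousWithinAt
  have K1 : K 1 = 0 := by simp [hK]
  have K2 : K Y2 = 0 := by
    simp only [hK, hlog]
    rw [sub_eq_zero, eq_div_iff (by linarith)]
    have e1 : Y2 * (P * z ^ 2) = 1 := by rw [hY2]; field_simp
    have e2 : Y2 - 1 = Y2 * (P * z * θ) := by linear_combination e1 - Y2 * h1
    have e3 : Y2 + P - 1 = Y2 * (E * (P * z)) := by rw [hE']; linear_combination (1 - P) * e1
    rw [e2, e3]; ring
  suffices 0 ≤ K Y by simp only [hK] at this; linarith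
  rcases le_total Y Y1 with h | h
  · have : MonotoneOn K (Set.Icc 1 Y1) := by
      apply monotoneOn_of_deriv_nonneg (convex_Icc _ _) (hcont.mono (fun x hx => hx.1))
      · intro x hx
        rw [interior_Icc] at hx
        exact (hder x (by linarith [hx.1])).differentiableAt.differentiableWithinAt
      · intro x hx
        rw [interior_Icc] at hx
        rw [(hder x (by linarith [hx.1])).deriv]
        have := hx.1
        have : 0 ≤ (x - Y1) * (x - Y2) := by nlinarith [hx.2]
        positivity
    rw [← K1]; exact this ⟨le_rfl, by linarith⟩ ⟨hY, h⟩ hY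
  rcases le_total Y Y2 with hge | hge
  · have : AntitoneOn K (Set.Icc (max 1 Y1) Y2) := by
      apply antitoneOn_of_deriv_nonpos (convex_Icc _ _)
        (hcont.mono (fun x hx => (le_max_left _ _).trans hx.1))
      · intro x hx
        rw [interior_Icc] at hx
        have := (le_max_left 1 Y1).trans_lt hx.1
        exact (hder x (by linarith)).differentiableAt.differentiableWithinAt
      · intro x hx
        rw [interior_Icc] at hx
        have h1 := (le_max_left 1 Y1).trans_lt hx.1
        have h2 := (le_max_right 1 Y1).trans_lt hx.1
        rw [(hder x (by linarith)).deriv]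
        apply div_nonpos_of_nonpos_of_nonneg
        · nlinarith [hx.2]
        · positivity
    rw [← K2]; exact this ⟨max_le hY h, hge⟩ ⟨max_le h2one h12.le, le_rfl⟩ hge
  · have : MonotoneOn K (Set.Ici Y2) := by
      apply monotoneOn_of_deriv_nonneg (convex_Ici _) (hcont.mono (fun x hx => h2one.trans hx))
      · intro x hx
        rw [interior_Ici] at hx
        have : Y2 < x := hx
        exact (hder x (by linarith)).differentiableAt.differentiableWithinAt
      · intro x hx
        rw [interior_Ici] at hx
        have h3 : Y2 < x := hx
        rw [(hder x (by linarith)).deriv]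
        have : 0 ≤ (x - Y1) * (x - Y2) := by nlinarith
        have : 0 < x := by linarith
        positivity
    rw [← K2]; exact this (Set.mem_Ici.mpr le_rfl) hge hge

/-- Variance of the symmetrized tangential derivative in the plane of the two points. -/
def tangVar (P a x : ℝ) : ℝ := P * (1 - a * x + (P - 1) * a * (1 - x))

/-- Regularized determinant of the symmetrized in-plane covariance. -/
def planeDet (P s a x : ℝ) : ℝ :=
  (P ^ 2 * (1 + a * x) + s) * (tangVar P a x + s) - P ^ 4 * a ^ 2 * x * (1 - x)

/-- Exponential rate of the two-point function at overlap `q`. -/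
def pairRate (p : ℕ) (s E q : ℝ) : ℝ :=
  -(1 / 2) * Real.log (1 - ((p : ℝ) / (p + s)) ^ 2 * (q ^ (p - 1)) ^ 2) +
    E ^ 2 * ((p : ℝ) ^ 2 / (p ^ 2 + s) - (p : ℝ) ^ 2 * (tangVar p (q ^ (p - 2)) (q ^ 2) + s) /
      planeDet p s (q ^ (p - 2)) (q ^ 2))

lemma tangVar_nonneg {P a x : ℝ} (hP : 1 ≤ P) (hx0 : 0 ≤ x) (hx1 : x ≤ 1)
    (ha1 : |a| ≤ 1) (h : (P - 1) * |a| * (1 - x) ≤ 1 - a ^ 2 * x) : 0 ≤ tangVar P a x := by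
  unfold tangVar
  have h0 := neg_abs_le a
  have h1 := le_abs_self a
  have hb : 0 ≤ (P - 1) * (1 - x) := mul_nonneg (by linarith) (by linarith)
  have h2 : -((P - 1) * |a| * (1 - x)) ≤ (P - 1) * a * (1 - x) := by nlinarith
  apply mul_nonneg (by linarith)
  rcases le_total 0 a with ha | ha
  · rw [abs_of_nonneg ha] at *
    nlinarith [mul_nonneg ha hb, mul_nonneg ha (sub_nonneg.mpr hx1)]
  · nlinarith [mul_nonneg (neg_nonneg.mpr ha) hx0, mul_nonneg (sq_nonneg a) hx0]

lemma planeDet_ge {P s a x : ℝ} (hP : 1 ≤ P) (hs : 0 < s) (hx0 : 0 ≤ x) (hx1 : x ≤ 1)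
    (ha1 : |a| ≤ 1) (h : (P - 1) * |a| * (1 - x) ≤ 1 - a ^ 2 * x) : s ^ 2 ≤ planeDet P s a x := by
  have hD := tangVar_nonneg hP hx0 hx1 ha1 h
  have hA : 0 ≤ P ^ 2 * (1 + a * x) := by
    have := neg_abs_le a
    have : 0 ≤ 1 + a * x := by nlinarith
    positivity
  have hAD : P ^ 2 * (1 + a * x) * tangVar P a x - P ^ 4 * a ^ 2 * x * (1 - x)
      = P ^ 3 * (1 - a ^ 2 * x + (P - 1) * a * (1 - x)) := by
    unfold tangVar; ring
  have h0 := neg_abs_le a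
  have hb : 0 ≤ (P - 1) * (1 - x) := mul_nonneg (by linarith) (by linarith)
  have h2 : 0 ≤ 1 - a ^ 2 * x + (P - 1) * a * (1 - x) := by nlinarith
  have h3 : 0 ≤ P ^ 3 * (1 - a ^ 2 * x + (P - 1) * a * (1 - x)) := by positivity
  unfold planeDet
  nlinarith [mul_nonneg hs.le hA, mul_nonneg hs.le hD]

lemma planeEnergy_nonpos {P s a x : ℝ} (hP : 1 ≤ P) (hs : 0 < s) (hx0 : 0 ≤ x) (hx1 : x ≤ 1)
    (ha1 : |a| ≤ 1) (h : (P - 1) * |a| * (1 - x) ≤ 1 - a ^ 2 * x) (ha : a ≤ 0) :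
    P ^ 2 / (P ^ 2 + s) - P ^ 2 * (tangVar P a x + s) / planeDet P s a x ≤ 0 := by
  have hD := tangVar_nonneg hP hx0 hx1 ha1 h
  have hdet := planeDet_ge hP hs hx0 hx1 ha1 h
  have hdet0 : 0 < planeDet P s a x := lt_of_lt_of_le (by positivity) hdet
  rw [sub_nonpos, div_le_div_iff₀ (by positivity) hdet0]
  have : planeDet P s a x ≤ (P ^ 2 + s) * (tangVar P a x + s) := by
    unfold planeDet
    have h1 : 0 ≤ P ^ 4 * a ^ 2 * x * (1 - x) := by
      have := sub_nonneg.mpr hx1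
      positivity
    have h2 : P ^ 2 * (a * x) ≤ 0 := mul_nonpos_of_nonneg_of_nonpos (by positivity)
      (mul_nonpos_of_nonpos_of_nonneg ha hx0)
    nlinarith
  nlinarith [mul_le_mul_of_nonneg_left this (sq_nonneg P)]

lemma planeEnergy_le {P s a x : ℝ} (hP : 1 ≤ P) (hs : 0 < s) (hx0 : 0 ≤ x) (hx1 : x ≤ 1)
    (ha0 : 0 ≤ a) (ha1 : a ≤ 1) :
    0 < 1 + s / P + (P - 1) * a * (1 - x) + s / P * a * x - a ^ 2 * x ∧
    P ^ 2 / (P ^ 2 + s) - P ^ 2 * (tangVar P a x + s) / planeDet P s a x ≤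
      a * x * (1 + s / P - a) /
        (1 + s / P + (P - 1) * a * (1 - x) + s / P * a * x - a ^ 2 * x) := by
  have hP0 : 0 < P := by linarith
  set d := s / P with hd
  have hdpos : 0 < d := by positivity
  have hsd : s = P * d := by rw [hd]; field_simp
  set V := 1 + d + (P - 1) * a * (1 - x) + d * a * x - a ^ 2 * x with hV
  have ha2 : a ^ 2 * x ≤ 1 := by nlinarith [mul_nonneg ha0 hx0]
  have hx1' := sub_nonneg.mpr hx1
  have hP1' := sub_nonneg.mpr hP
  have hVpos : 0 < V := by
    have h1 : 0 ≤ (P - 1) * a * (1 - x) := by positivity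
    have h2 : 0 ≤ d * a * x := by positivity
    linarith
  set D := 1 + d - a * x + (P - 1) * a * (1 - x) with hD
  have hax : a * x ≤ 1 := by nlinarith
  have hDpos : 0 < D := by
    have h1 : 0 ≤ (P - 1) * a * (1 - x) := by positivity
    linarith
  have hnum : V = D + a * x * (1 + d - a) := by rw [hV, hD]; ring
  have hn0 : 0 ≤ a * x * (1 + d - a) := by
    have : 0 ≤ 1 + d - a := by linarith
    positivity
  have e1 : tangVar P a x + s = P * D := by rw [tangVar, hD, hsd]; ring
  have e2 : planeDet P s a x = P ^ 3 * (V + D * (d / P)) := by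
    rw [planeDet, e1, hsd, hV, hD]; field_simp; ring
  refine ⟨hVpos, ?_⟩
  rw [e1, e2, hsd]
  have hVD : 0 < V + D * (d / P) := by positivity
  have : P ^ 2 / (P ^ 2 + P * d) - P ^ 2 * (P * D) / (P ^ 3 * (V + D * (d / P)))
      = (V - D) / ((1 + d / P) * (V + D * (d / P))) := by
    field_simp
    ring
  rw [this, hnum, add_sub_cancel_left, ← hnum]
  apply div_le_div_of_nonneg_left hn0 hVpos
  have : 0 ≤ d / P := by positivity
  nlinarith [mul_nonneg this hVpos.le, mul_nonneg this hDpos.le,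
    mul_nonneg this (mul_nonneg this hDpos.le)]

lemma planeEnergy_le_ratio {P s a x : ℝ} (hP : 3 ≤ P) (hs : 0 < s) (hsP : 3 * s < P)
    (hx0 : 0 ≤ x) (hx1 : x < 1) (ha0 : 0 ≤ a) (ha1 : a ≤ 1)
    (h : (P - 1) * a * (1 - x) ≤ 1 - a ^ 2 * x) :
    (1 - 3 * (s / P)) *
      (P ^ 2 / (P ^ 2 + s) - P ^ 2 * (tangVar P a x + s) / planeDet P s a x) ≤
      1 / 2 * (x * ((1 + s / P) ^ 2 - a ^ 2) /
        (x * ((1 + s / P) ^ 2 - a ^ 2) + P * (1 - x) * (1 + s / P) ^ 2)) := by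
  obtain ⟨hV, hle⟩ := planeEnergy_le (by linarith : (1:ℝ) ≤ P) hs hx0 hx1.le ha0 ha1
  have hP0 : 0 < P := by linarith
  set d := s / P with hd
  have hdpos : 0 < d := by positivity
  have hd3 : 3 * d < 1 := by rw [hd]; rw [← mul_div_assoc, div_lt_one hP0]; exact hsP
  set V := 1 + d + (P - 1) * a * (1 - x) + d * a * x - a ^ 2 * x with hVdef
  refine (mul_le_mul_of_nonneg_left hle (by linarith)).trans ?_
  have hx1' : 0 < 1 - x := by linarith
  have hea : 0 < 1 + d - a := by linarith
  have hea2 : 0 < (1 + d) ^ 2 - a ^ 2 := by nlinarith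
  have hW : 0 < x * ((1 + d) ^ 2 - a ^ 2) + P * (1 - x) * (1 + d) ^ 2 := by positivity
  set W := x * ((1 + d) ^ 2 - a ^ 2) + P * (1 - x) * (1 + d) ^ 2 with hWdef
  rw [← mul_div_assoc (1 - 3 * d), ← mul_div_assoc (1 / 2 : ℝ), div_le_div_iff₀ hV hW]
  have main : (1 - 3 * d) * (2 * a * W) ≤ (1 + d + a) * V := by
    have id1 : (1 + d + a) * V - 2 * a * W =
        (1 - a) * (1 - a ^ 2 * x - (P - 1) * a * (1 - x))
        + (2 * d + d ^ 2) * (1 - a) + a * (1 - x) * (P * d - (2 * P - 1) * (2 * d + d ^ 2)) := by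
      rw [hVdef, hWdef]; ring
    have h1 : 0 ≤ (1 - a) * (1 - a ^ 2 * x - (P - 1) * a * (1 - x)) :=
      mul_nonneg (by linarith) (by linarith)
    have h2 : 0 ≤ (2 * d + d ^ 2) * (1 - a) := mul_nonneg (by positivity) (by linarith)
    have h3 : -(6 * P * d) ≤ P * d - (2 * P - 1) * (2 * d + d ^ 2) := by
      nlinarith [mul_pos hP0 hdpos, mul_pos hdpos hdpos, mul_pos hP0 (mul_pos hdpos hdpos)]
    have h4 := mul_le_mul_of_nonneg_left h3 (mul_nonneg ha0 hx1'.le)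
    have h5 : P * (1 - x) ≤ W := by
      rw [hWdef]
      have := mul_nonneg hx0 hea2.le
      have : P * (1 - x) * 1 ≤ P * (1 - x) * (1 + d) ^ 2 :=
        mul_le_mul_of_nonneg_left (by nlinarith) (by positivity)
      linarith
    have h6 := mul_le_mul_of_nonneg_left h5 (by positivity : 0 ≤ 6 * d * a)
    nlinarith
  have hfin := mul_le_mul_of_nonneg_left main
    (by positivity : 0 ≤ x * (1 + d - a) / 2)
  calc _ = x * (1 + d - a) / 2 * ((1 - 3 * d) * (2 * a * W)) := by ring
    _ ≤ _ := hfin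
    _ = _ := by ring

lemma natCast_mul_pow_mul_one_sub_sq_le {q : ℝ} (hq0 : 0 ≤ q) (hq1 : q ≤ 1) (n : ℕ) :
    (n + 1) * q ^ n * (1 - q ^ 2) ≤ 1 - (q ^ (n + 1)) ^ 2 := by
  have h1 : 1 - (q ^ (n + 1)) ^ 2 = (1 - q ^ 2) * ∑ j ∈ Finset.range (n + 1), (q ^ 2) ^ j := by
    rw [mul_neg_geom_sum]; ring
  have h2 : 2 * ∑ j ∈ Finset.range (n + 1), (q ^ 2) ^ j
      = ∑ j ∈ Finset.range (n + 1), ((q ^ 2) ^ j + (q ^ 2) ^ (n - j)) := by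
    rw [Finset.sum_add_distrib, two_mul, ← Finset.sum_range_reflect (fun j => (q ^ 2) ^ j)]
    simp
  have h3 : (n + 1) * (2 * q ^ n) ≤ ∑ j ∈ Finset.range (n + 1), ((q ^ 2) ^ j + (q ^ 2) ^ (n - j)) := by
    have : ∑ j ∈ Finset.range (n + 1), (2 * q ^ n) = (n + 1) * (2 * q ^ n) := by simp
    rw [← this]
    apply Finset.sum_le_sum
    intro j hj
    have hj' : j ≤ n := Nat.lt_succ_iff.mp (Finset.mem_range.mp hj)
    have : q ^ n = q ^ j * q ^ (n - j) := by rw [← pow_add]; congr 1; omega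
    rw [this, ← pow_mul, ← pow_mul, mul_comm 2 j, mul_comm 2 (n - j), pow_mul, pow_mul]
    nlinarith [sq_nonneg (q ^ j - q ^ (n - j))]
  rw [h1]
  have : (n + 1) * q ^ n ≤ ∑ j ∈ Finset.range (n + 1), (q ^ 2) ^ j := by linarith
  have h4 : 0 ≤ 1 - q ^ 2 := by nlinarith
  nlinarith [mul_le_mul_of_nonneg_left this h4]

lemma overlap_pow_bound {p : ℕ} (hp : 3 ≤ p) {q : ℝ} (hq : |q| ≤ 1) :
    ((p : ℝ) - 1) * |q ^ (p - 2)| * (1 - q ^ 2) ≤ 1 - (q ^ (p - 2)) ^ 2 * q ^ 2 := by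
  obtain ⟨n, rfl⟩ : ∃ n, p = n + 2 := ⟨p - 2, by omega⟩
  have := natCast_mul_pow_mul_one_sub_sq_le (abs_nonneg q) hq n
  simp only [Nat.add_sub_cancel, abs_pow]
  push_cast
  rw [sq_abs] at this
  have e : (|q| ^ (n + 1)) ^ 2 = (q ^ n) ^ 2 * q ^ 2 := by
    rw [← pow_mul, mul_comm, pow_mul, sq_abs]; ring
  rw [e] at this
  linarith

lemma abs_overlap_pow_le_one {p : ℕ} {q : ℝ} (hq : |q| ≤ 1) : |q ^ (p - 2)| ≤ 1 := by
  rw [abs_pow]; exact pow_le_one₀ (abs_nonneg q) hq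

lemma planeDet_overlap_ge {p : ℕ} (hp : 3 ≤ p) {s q : ℝ} (hs : 0 < s) (hq : |q| ≤ 1) :
    s ^ 2 ≤ planeDet p s (q ^ (p - 2)) (q ^ 2) := by
  have hp1 : (1 : ℝ) ≤ p := by exact_mod_cast (by omega : 1 ≤ p)
  exact planeDet_ge hp1 hs (sq_nonneg q) ((sq_le_one_iff_abs_le_one q).mpr hq)
    (abs_overlap_pow_le_one hq) (overlap_pow_bound hp hq)

lemma planeDet_neg_overlap_ge {p : ℕ} (hp : 3 ≤ p) {s q : ℝ} (hs : 0 < s) (hq : |q| ≤ 1) :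
    s ^ 2 ≤ planeDet p s (-q ^ (p - 2)) (q ^ 2) := by
  have hp1 : (1 : ℝ) ≤ p := by exact_mod_cast (by omega : 1 ≤ p)
  refine planeDet_ge hp1 hs (sq_nonneg q) ((sq_le_one_iff_abs_le_one q).mpr hq) ?_ ?_
  · rw [abs_neg]; exact abs_overlap_pow_le_one hq
  · rw [abs_neg, neg_sq]; exact overlap_pow_bound hp hq

lemma ratio_sq_lt_one {p : ℕ} (hp : 3 ≤ p) {s : ℝ} (hs : 0 < s) :
    ((p : ℝ) / (p + s)) ^ 2 < 1 := by
  have hp0 : (0 : ℝ) < p := by exact_mod_cast (by omega : 0 < p)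
  have h1 : (p : ℝ) / (p + s) < 1 := by rw [div_lt_one (by positivity)]; linarith
  have h0 : 0 ≤ (p : ℝ) / (p + s) := by positivity
  nlinarith

lemma overlap_pow_sq_le {p : ℕ} (hp : 3 ≤ p) {q : ℝ} (hq : |q| ≤ 1) :
    (q ^ (p - 1)) ^ 2 ≤ |q| ^ 3 := by
  rw [← sq_abs, abs_pow, ← pow_mul]
  exact pow_le_pow_of_le_one (abs_nonneg q) hq (by omega)

lemma one_sub_ratio_pos {p : ℕ} (hp : 3 ≤ p) {s q : ℝ} (hs : 0 < s) (hq : |q| ≤ 1) :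
    0 < 1 - ((p : ℝ) / (p + s)) ^ 2 * (q ^ (p - 1)) ^ 2 := by
  have h1 := ratio_sq_lt_one hp hs
  have h2 : (q ^ (p - 1)) ^ 2 ≤ 1 :=
    (overlap_pow_sq_le hp hq).trans (pow_le_one₀ (abs_nonneg q) hq)
  nlinarith [sq_nonneg ((p : ℝ) / (p + s)), sq_nonneg (q ^ (p - 1))]

lemma pairRate_lt {p : ℕ} (hp : 3 ≤ p) {s E E0 z θ q : ℝ} (hs : 0 < s) (hsp : 3 * s < p)
    (hz : 0 < z) (hθ : 0 < θ) (h1 : p * z * (z + θ) = 1) (hE0 : E0 = p * z + θ)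
    (hlog : Real.log (1 / (p * z ^ 2)) = θ * E0) (hlt : (p : ℝ) * (p - 1) * z ^ 2 < 1)
    (hE : E ^ 2 < (1 - 3 * (s / p)) * E0 ^ 2) (hq : |q| < 1) (hq0 : q ≠ 0) :
    pairRate p s E q < -(1 / 2) * Real.log (1 - q ^ 2) := by
  have hp3 : (3 : ℝ) ≤ p := by exact_mod_cast hp
  have hp0 : (0 : ℝ) < p := by linarith
  have hx1 : q ^ 2 < 1 := (sq_lt_one_iff_abs_lt_one q).mpr hq
  have hx0 : 0 < q ^ 2 := by positivity
  have hpow : (q ^ (p - 1)) ^ 2 = (q ^ (p - 2)) ^ 2 * q ^ 2 := by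
    rw [← mul_pow, ← pow_succ]; congr 2; omega
  have ha1 := abs_overlap_pow_le_one (p := p) hq.le
  have hob := overlap_pow_bound hp hq.le
  have hτ := one_sub_ratio_pos hp hs hq.le
  have hκ := ratio_sq_lt_one hp hs
  rw [pairRate]
  set a := q ^ (p - 2) with ha
  set x := q ^ 2 with hx
  have ha2 : a ^ 2 ≤ 1 := (sq_le_one_iff_abs_le_one a).mpr ha1
  have hτx : ((p : ℝ) / (p + s)) ^ 2 * (q ^ (p - 1)) ^ 2 < x := by
    have k : a ^ 2 * x ≤ x := mul_le_of_le_one_left hx0.le ha2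
    have k' := mul_le_mul_of_nonneg_left k (sq_nonneg ((p : ℝ) / (p + s)))
    have k'' := mul_lt_mul_of_pos_right hκ hx0
    rw [hpow]
    linarith
  have hYlt : Real.log (1 - x) < Real.log (1 - ((p : ℝ) / (p + s)) ^ 2 * (q ^ (p - 1)) ^ 2) :=
    Real.log_lt_log (by linarith) (by linarith)
  rcases le_or_gt a 0 with hneg | hpos
  · have := planeEnergy_nonpos (by linarith : (1 : ℝ) ≤ p) hs hx0.le hx1.le ha1 hob hneg
    have := mul_nonpos_of_nonneg_of_nonpos (sq_nonneg E) this
    linarith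
  · rw [abs_of_pos hpos] at ha1 hob
    have hr := planeEnergy_le_ratio hp3 hs hsp hx0.le hx1 hpos.le ha1 hob
    set Q := (p : ℝ) ^ 2 / (p ^ 2 + s) - (p : ℝ) ^ 2 * (tangVar p a x + s) / planeDet p s a x
    set e := 1 + s / p with he
    have he1 : 1 < e := by rw [he]; have : 0 < s / p := by positivity
                           linarith
    set Y := (1 - ((p : ℝ) / (p + s)) ^ 2 * (q ^ (p - 1)) ^ 2) / (1 - x) with hY
    have hκe : (p : ℝ) / (p + s) = 1 / e := by rw [he]; field_simp
    have hx1' : 0 < 1 - x := by linarith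
    have he2 : 0 < e ^ 2 := by positivity
    have hea : 0 < e ^ 2 - a ^ 2 := by nlinarith
    have hYe : Y - 1 = x * (e ^ 2 - a ^ 2) / (e ^ 2 * (1 - x)) := by
      rw [hY, hκe, hpow]; field_simp; ring
    have hY1 : 0 < Y - 1 := by rw [hYe]; positivity
    have hratio : (Y - 1) / (Y + p - 1) = x * (e ^ 2 - a ^ 2) /
        (x * (e ^ 2 - a ^ 2) + p * (1 - x) * e ^ 2) := by
      have : Y + p - 1 = (x * (e ^ 2 - a ^ 2) + p * (1 - x) * e ^ 2) / (e ^ 2 * (1 - x)) := by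
        have : Y + p - 1 = (Y - 1) + p := by ring
        rw [this, hYe]; field_simp
      rw [this, hYe, div_div_div_cancel_right₀ (by positivity)]
    rw [← hratio] at hr
    have hmain := rsb_log_inequality hp3 hz hθ h1 hE0 hlog hlt (by linarith : 1 ≤ Y)
    have hrpos : 0 < (Y - 1) / (Y + p - 1) := div_pos hY1 (by linarith)
    have hlogY : Real.log Y = Real.log (1 - ((p : ℝ) / (p + s)) ^ 2 * (q ^ (p - 1)) ^ 2)
        - Real.log (1 - x) := by rw [hY, Real.log_div hτ.ne' hx1'.ne']
    have hd : 0 < 1 - 3 * (s / p) := by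
      have : 3 * (s / p) < 1 := by rw [← mul_div_assoc, div_lt_one hp0]; exact hsp
      linarith
    have hEQ : E ^ 2 * Q < 1 / 2 * Real.log Y := by
      have k1 : (1 - 3 * (s / p)) * (E ^ 2 * Q) ≤ E ^ 2 * (1 / 2 * ((Y - 1) / (Y + p - 1))) := by
        have := mul_le_mul_of_nonneg_left hr (sq_nonneg E)
        rwa [mul_left_comm]
      have k2 : E ^ 2 * (1 / 2 * ((Y - 1) / (Y + p - 1))) <
          (1 - 3 * (s / p)) * E0 ^ 2 * (1 / 2 * ((Y - 1) / (Y + p - 1))) :=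
        mul_lt_mul_of_pos_right hE (mul_pos one_half_pos hrpos)
      have k3 : (1 - 3 * (s / p)) * (E ^ 2 * Q) <
          (1 - 3 * (s / p)) * (1 / 2 * Real.log Y) := by
        refine (k1.trans_lt k2).trans_le ?_
        rw [mul_assoc]
        refine mul_le_mul_of_nonneg_left ?_ hd.le
        rw [mul_div_assoc] at hmain
        linarith
      exact lt_of_mul_lt_mul_left k3 hd.le
    linarith

lemma exists_pairRate_le_cubic {p : ℕ} (hp : 3 ≤ p) {s : ℝ} (E : ℝ) (hs : 0 < s) :
    ∃ C > 0, ∀ q : ℝ, |q| ≤ 1 → pairRate p s E q ≤ C * |q| ^ 3 := by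
  have hp0 : (0 : ℝ) < p := by exact_mod_cast (by omega : 0 < p)
  have hp1 : (1 : ℝ) ≤ p := by exact_mod_cast (by omega : 1 ≤ p)
  have hκ := ratio_sq_lt_one hp hs
  set κ := ((p : ℝ) / (p + s)) ^ 2 with hκdef
  have hκ0 : 0 ≤ κ := sq_nonneg _
  have hd : 0 < s / p := by positivity
  refine ⟨1 / (1 - κ) + E ^ 2 * ((1 + s / p) / (s / p)), ?_, fun q hq => ?_⟩
  · have : 0 < 1 - κ := by linarith
    positivity
  have hq3 : 0 ≤ |q| ^ 3 := by positivity
  have hx1 : q ^ 2 ≤ 1 := (sq_le_one_iff_abs_le_one q).mpr hq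
  have hτ := one_sub_ratio_pos hp hs hq
  have hτ3 := overlap_pow_sq_le hp hq
  have hq31 : |q| ^ 3 ≤ 1 := pow_le_one₀ (abs_nonneg q) hq
  rw [pairRate, add_mul, ← hκdef]
  rw [← hκdef] at hτ
  set τ := κ * (q ^ (p - 1)) ^ 2 with hτdef
  have hτ0 : 0 ≤ τ := by positivity
  have hτκ : τ ≤ κ := by nlinarith
  have hτq : τ ≤ |q| ^ 3 := by nlinarith [sq_nonneg (q ^ (p - 1))]
  apply add_le_add
  · have hl := Real.one_sub_inv_le_log_of_pos hτ
    have : (1 - τ)⁻¹ - 1 = τ / (1 - τ) := by field_simp; ring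
    have h2 : τ / (1 - τ) ≤ |q| ^ 3 / (1 - κ) :=
      div_le_div₀ hq3 hτq (by linarith) (by linarith)
    have h3 : 0 ≤ |q| ^ 3 / (1 - κ) := div_nonneg hq3 (by linarith)
    rw [one_div_mul_eq_div]
    linarith
  · rw [mul_assoc]
    apply mul_le_mul_of_nonneg_left _ (sq_nonneg E)
    have hrhs : 0 ≤ (1 + s / p) / (s / p) * |q| ^ 3 := by positivity
    rcases le_total (q ^ (p - 2)) 0 with ha | ha
    · exact (planeEnergy_nonpos hp1 hs (sq_nonneg q) hx1 (abs_overlap_pow_le_one hq)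
        (overlap_pow_bound hp hq) ha).trans hrhs
    · have ha1 := (le_abs_self _).trans (abs_overlap_pow_le_one (p := p) hq)
      obtain ⟨hV, hle⟩ := planeEnergy_le hp1 hs (sq_nonneg q) hx1 ha ha1
      refine hle.trans ?_
      set a := q ^ (p - 2)
      have hax : a * q ^ 2 ≤ |q| ^ 3 := by
        have : a * q ^ 2 = q ^ p := by rw [← pow_add]; congr 1; omega
        rw [this]
        refine (le_abs_self _).trans ?_
        rw [abs_pow]
        exact pow_le_pow_of_le_one (abs_nonneg q) hq (by omega)
      have hax0 : 0 ≤ a * q ^ 2 := by positivity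
      rw [div_mul_eq_mul_div (1 + s / (p : ℝ)), mul_comm (1 + s / (p : ℝ))]
      apply div_le_div₀ (by positivity) _ hd
      · have h1 : 0 ≤ ((p : ℝ) - 1) * a * (1 - q ^ 2) :=
          mul_nonneg (mul_nonneg (by linarith) ha) (by linarith)
        have h2 : 0 ≤ s / p * a * q ^ 2 := by positivity
        have h3 : a ^ 2 * q ^ 2 ≤ 1 := by nlinarith
        linarith
      · apply mul_le_mul hax (by linarith) (by linarith) hq3

lemma continuousOn_pairRate {p : ℕ} (hp : 3 ≤ p) {s : ℝ} (E : ℝ) (hs : 0 < s) :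
    ContinuousOn (pairRate p s E) {q | |q| ≤ 1} := by
  unfold pairRate
  apply ContinuousOn.add
  · apply ContinuousOn.mul continuousOn_const
    apply ContinuousOn.log (by fun_prop)
    intro q hq
    exact (one_sub_ratio_pos hp hs hq).ne'
  · apply ContinuousOn.mul continuousOn_const
    apply ContinuousOn.sub continuousOn_const
    apply ContinuousOn.div
    · unfold tangVar; fun_prop
    · unfold planeDet tangVar; fun_prop
    · intro q hq
      exact (lt_of_lt_of_le (by positivity) (planeDet_overlap_ge hp hs hq)).ne'

lemma exists_pairRate_le_log {p : ℕ} (hp : 3 ≤ p) {s E E0 z θ : ℝ} (hs : 0 < s)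
    (hsp : 3 * s < p)
    (hz : 0 < z) (hθ : 0 < θ) (h1 : p * z * (z + θ) = 1) (hE0 : E0 = p * z + θ)
    (hlog : Real.log (1 / (p * z ^ 2)) = θ * E0) (hlt : (p : ℝ) * (p - 1) * z ^ 2 < 1)
    (hE : E ^ 2 < (1 - 3 * (s / p)) * E0 ^ 2) :
    ∃ c > 0, c < 1 / 2 ∧ ∀ q : ℝ, |q| < 1 →
      pairRate p s E q ≤ (1 / 2 - c) * -Real.log (1 - q ^ 2) := by
  obtain ⟨C, hC, hcub⟩ := exists_pairRate_le_cubic hp E hs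
  have hL : ∀ q : ℝ, |q| < 1 → q ^ 2 ≤ -Real.log (1 - q ^ 2) := fun q hq => by
    have hx1 : q ^ 2 < 1 := (sq_lt_one_iff_abs_lt_one q).mpr hq
    have := Real.log_le_sub_one_of_pos (by linarith : 0 < 1 - q ^ 2)
    linarith
  set S : Set ℝ := {q | 1 / (4 * C) ≤ |q|} ∩ {q | q ^ 2 ≤ 1 - Real.exp (-(4 * C))} with hS
  have hS1 : ∀ q ∈ S, |q| < 1 := fun q hq => by
    have h2 : q ^ 2 ≤ 1 - Real.exp (-(4 * C)) := hq.2
    have := Real.exp_pos (-(4 * C))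
    exact (sq_lt_one_iff_abs_lt_one q).mp (by linarith)
  have hScomp : IsCompact S := by
    apply Metric.isCompact_of_isClosed_isBounded
    · exact (isClosed_le (by fun_prop) (by fun_prop)).inter
        (isClosed_le (by fun_prop) (by fun_prop))
    · refine (Metric.isBounded_closedBall (x := (0 : ℝ)) (r := 1)).subset fun q hq => ?_
      simpa using (hS1 q hq).le
  have hout : ∀ q : ℝ, |q| < 1 → q ∉ S →
      pairRate p s E q ≤ 1 / 4 * -Real.log (1 - q ^ 2) := fun q hq hqS => by
    have hx1 : q ^ 2 < 1 := (sq_lt_one_iff_abs_lt_one q).mpr hq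
    by_cases hsm : 1 / (4 * C) ≤ |q|
    · have hbig : 1 - Real.exp (-(4 * C)) < q ^ 2 := by
        by_contra hcon
        exact hqS ⟨hsm, not_lt.mp hcon⟩
      have h3 : Real.log (1 - q ^ 2) < -(4 * C) := by
        rw [Real.log_lt_iff_lt_exp (by linarith)]; linarith
      have h4 := hcub q hq.le
      have h5 : |q| ^ 3 ≤ 1 := pow_le_one₀ (abs_nonneg q) hq.le
      nlinarith
    · have hsm' := not_le.mp hsm
      have h4 := hcub q hq.le
      have h6 : C * |q| < 1 / 4 := by
        have := mul_lt_mul_of_pos_left hsm' hC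
        have e : C * (1 / (4 * C)) = 1 / 4 := by field_simp
        linarith
      have h7 : C * |q| ^ 3 ≤ 1 / 4 * q ^ 2 := by
        have e : C * |q| ^ 3 = C * |q| * q ^ 2 := by rw [← sq_abs q]; ring
        rw [e]
        exact mul_le_mul_of_nonneg_right h6.le (sq_nonneg q)
      linarith [hL q hq]
  rcases S.eq_empty_or_nonempty with hem | hne
  · refine ⟨1 / 4, by norm_num, by norm_num, fun q hq => ?_⟩
    have := hout q hq (by rw [hem]; simp)
    linarith
  · have hpos : ∀ q ∈ S, 0 < |q| := fun q hq =>
      lt_of_lt_of_le (by positivity) (show 1 / (4 * C) ≤ |q| from hq.1)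
    have hLpos : ∀ q ∈ S, 0 < -Real.log (1 - q ^ 2) := fun q hq => by
      have := abs_pos.mp (hpos q hq)
      exact lt_of_lt_of_le (by positivity) (hL q (hS1 q hq))
    have hcont : ContinuousOn (fun q => pairRate p s E q / -Real.log (1 - q ^ 2)) S := by
      apply ContinuousOn.div
      · exact (continuousOn_pairRate hp E hs).mono fun q hq => (hS1 q hq).le
      · apply ContinuousOn.neg
        apply ContinuousOn.log (by fun_prop)
        intro q hq
        have hx1 : q ^ 2 < 1 := (sq_lt_one_iff_abs_lt_one q).mpr (hS1 q hq)
        exact (sub_pos.mpr hx1).ne'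
      · intro q hq
        exact (hLpos q hq).ne'
    obtain ⟨q₀, hq₀, hmax⟩ := hScomp.exists_isMaxOn hne hcont
    have hm : pairRate p s E q₀ / -Real.log (1 - q₀ ^ 2) < 1 / 2 := by
      rw [div_lt_iff₀ (hLpos q₀ hq₀)]
      have := pairRate_lt hp hs hsp hz hθ h1 hE0 hlog hlt hE (hS1 q₀ hq₀)
        (abs_pos.mp (hpos q₀ hq₀))
      linarith
    set m := pairRate p s E q₀ / -Real.log (1 - q₀ ^ 2)
    refine ⟨min (1 / 4) (1 / 2 - m), lt_min (by norm_num) (by linarith),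
      lt_of_le_of_lt (min_le_left _ _) (by norm_num), fun q hq => ?_⟩
    have hL0 : 0 ≤ -Real.log (1 - q ^ 2) := (sq_nonneg q).trans (hL q hq)
    by_cases hqS : q ∈ S
    · have h8 : pairRate p s E q / -Real.log (1 - q ^ 2) ≤ m := hmax hqS
      rw [div_le_iff₀ (hLpos q hqS)] at h8
      refine h8.trans (mul_le_mul_of_nonneg_right ?_ hL0)
      linarith [min_le_right (1 / 4) (1 / 2 - m)]
    · refine (hout q hq hqS).trans (mul_le_mul_of_nonneg_right ?_ hL0)
      linarith [min_le_left (1 / 4) (1 / 2 - m)]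

lemma integral_cexp_gaussianReal (c : ℂ) {D : ℝ} (hD : -1 < D) :
    ∫ x : ℝ, Complex.exp (c * x - D / 2 * x ^ 2) ∂(gaussianReal 0 1) =
      ((Real.sqrt (1 + D))⁻¹ : ℝ) * Complex.exp (c ^ 2 / (2 * (1 + D))) := by
  have hD0 : 0 < 1 + D := by linarith
  have hD0' : (1 + D : ℂ) ≠ 0 := by exact_mod_cast hD0.ne'
  have hpi := Real.pi_pos
  simp_rw [integral_gaussianReal_eq_integral_smul one_ne_zero, Complex.real_smul]
  have h1 : ∀ x : ℝ, (gaussianPDFReal 0 1 x : ℂ) * Complex.exp (c * x - D / 2 * x ^ 2) =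
      ((Real.sqrt (2 * Real.pi))⁻¹ : ℝ) *
        Complex.exp ((-((1 + D) / 2 : ℝ) : ℂ) * x ^ 2 + c * x + 0) := fun x => by
    rw [gaussianPDFReal_def]
    simp only [NNReal.coe_one, mul_one, sub_zero]
    rw [Complex.ofReal_mul, mul_assoc, Complex.ofReal_exp, ← Complex.exp_add]
    congr 2
    push_cast
    ring
  simp_rw [h1]
  rw [integral_const_mul, integral_cexp_quadratic (by simp; linarith), ← mul_assoc]
  congr 1
  · rw [neg_neg, ← Complex.ofReal_div, show (1 / 2 : ℂ) = ((1 / 2 : ℝ) : ℂ) by push_cast; rfl,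
      ← Complex.ofReal_cpow (by positivity), ← Complex.ofReal_mul, ← Real.sqrt_eq_rpow]
    congr 1
    rw [show Real.pi / ((1 + D) / 2) = (2 * Real.pi) / (1 + D) by field_simp,
      Real.sqrt_div (by positivity)]
    field_simp
  · congr 1
    push_cast
    field_simp
    ring

lemma integral_exp_gaussianReal (c : ℝ) {D : ℝ} (hD : -1 < D) :
    ∫ x : ℝ, Real.exp (c * x - D / 2 * x ^ 2) ∂(gaussianReal 0 1) =
      (Real.sqrt (1 + D))⁻¹ * Real.exp (c ^ 2 / (2 * (1 + D))) := by
  have := integral_cexp_gaussianReal c hD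
  apply Complex.ofReal_injective
  rw [← integral_complex_ofReal]
  push_cast at this ⊢
  exact this

lemma integral_cexp_gaussianReal_prod (m A B : ℝ) {D : ℝ} (hD : 0 ≤ D) (hAD : B ^ 2 ≤ A * D)
    (hA : 0 ≤ A) (hquad : ∀ x y : ℝ, 0 ≤ A * x ^ 2 + 2 * B * (x * y) + D * y ^ 2) :
    ∫ ζ : ℝ × ℝ, Complex.exp (-(ζ.1 * m : ℝ) * Complex.I -
        (1 / 2 * (A * ζ.1 ^ 2 + 2 * B * (ζ.1 * ζ.2) + D * ζ.2 ^ 2) : ℝ))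
        ∂((gaussianReal 0 1).prod (gaussianReal 0 1)) =
      ((Real.sqrt ((1 + A) * (1 + D) - B ^ 2))⁻¹ *
        Real.exp (-(1 / 2) * (m ^ 2 * (1 + D) / ((1 + A) * (1 + D) - B ^ 2))) : ℝ) := by
  have hD1 : 0 < 1 + D := by linarith
  have hD1' : (1 + D : ℂ) ≠ 0 := by exact_mod_cast hD1.ne'
  rw [integral_prod]
  · have hin : ∀ ζ : ℝ, ∫ η : ℝ, Complex.exp (-(ζ * m : ℝ) * Complex.I -
        (1 / 2 * (A * ζ ^ 2 + 2 * B * (ζ * η) + D * η ^ 2) : ℝ)) ∂(gaussianReal 0 1) =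
        ((Real.sqrt (1 + D))⁻¹ : ℝ) * Complex.exp ((-m * Complex.I) * ζ -
          (A - B ^ 2 / (1 + D) : ℝ) / 2 * ζ ^ 2) := fun ζ => by
      have : ∀ η : ℝ, Complex.exp (-(ζ * m : ℝ) * Complex.I -
        (1 / 2 * (A * ζ ^ 2 + 2 * B * (ζ * η) + D * η ^ 2) : ℝ)) =
          Complex.exp ((-m * Complex.I) * ζ - A / 2 * ζ ^ 2) *
          Complex.exp ((-(B * ζ : ℝ) : ℂ) * η - D / 2 * η ^ 2) := fun η => by
        rw [← Complex.exp_add]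
        congr 1
        push_cast
        ring
      simp_rw [this]
      rw [integral_const_mul, integral_cexp_gaussianReal _ (by linarith), mul_left_comm,
        ← Complex.exp_add]
      congr 2
      push_cast
      field_simp
      ring
    have hBD : B ^ 2 / (1 + D) ≤ A := by
      rw [div_le_iff₀ hD1]; nlinarith
    have hΔ : 1 + (A - B ^ 2 / (1 + D)) = ((1 + A) * (1 + D) - B ^ 2) / (1 + D) := by
      field_simp; ring
    have hΔpos : 0 < (1 + A) * (1 + D) - B ^ 2 := by nlinarith
    simp only [hin]
    rw [integral_const_mul, integral_cexp_gaussianReal _ (by linarith)]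
    have hexp : (-(m : ℂ) * Complex.I) ^ 2 / (2 * (1 + ((A - B ^ 2 / (1 + D) : ℝ) : ℂ))) =
        ((-(1 / 2) * (m ^ 2 * (1 + D) / ((1 + A) * (1 + D) - B ^ 2)) : ℝ) : ℂ) := by
      rw [show (1 : ℂ) + ((A - B ^ 2 / (1 + D) : ℝ) : ℂ) =
        ((1 + (A - B ^ 2 / (1 + D)) : ℝ) : ℂ) by push_cast; rfl, hΔ, mul_pow, Complex.I_sq,
        show (-(m : ℂ)) ^ 2 * -1 / (2 * (((((1 + A) * (1 + D) - B ^ 2) / (1 + D)) : ℝ) : ℂ)) =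
          ((m ^ 2 * -1 / (2 * (((1 + A) * (1 + D) - B ^ 2) / (1 + D))) : ℝ) : ℂ) by
            push_cast; ring]
      congr 1
      field_simp
    rw [hexp, ← Complex.ofReal_exp, ← Complex.ofReal_mul, ← Complex.ofReal_mul, ← mul_assoc,
      ← mul_inv, ← Real.sqrt_mul hD1.le, hΔ, mul_div_cancel₀ _ hD1.ne']
  · refine Integrable.of_bound (C := 1) (by fun_prop) (ae_of_all _ fun ζ => ?_)
    rw [Complex.norm_exp]
    simp only [Complex.sub_re, Complex.mul_re, Complex.neg_re, Complex.ofReal_re, Complex.I_re,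
      mul_zero, Complex.neg_im, Complex.ofReal_im, Complex.I_im, neg_zero, zero_mul, sub_zero,
      zero_sub]
    rw [Real.exp_le_one_iff]
    linarith [hquad ζ.1 ζ.2]

/-- Gaussian integral of a Gaussian weight whose linear forms split into orthogonal pairs. -/
lemma integral_exp_neg_sum_sq_blocks {κ K : Type*} [Fintype κ] [NormedAddCommGroup K]
    [InnerProductSpace ℝ K] [FiniteDimensional ℝ K] [MeasurableSpace K] [BorelSpace K]
    (a b : κ → K) (m : κ → ℝ) (haa : ∀ i j, i ≠ j → ⟪a i, a j⟫ = 0)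
    (hab : ∀ i j, i ≠ j → ⟪a i, b j⟫ = 0) (hbb : ∀ i j, i ≠ j → ⟪b i, b j⟫ = 0) :
    ∫ g, Real.exp (-(1 / 2) * ∑ k, ((⟪a k, g⟫ - m k) ^ 2 + ⟪b k, g⟫ ^ 2)) ∂(stdGaussian K) =
      ∏ k, ((Real.sqrt ((1 + ‖a k‖ ^ 2) * (1 + ‖b k‖ ^ 2) - ⟪a k, b k⟫ ^ 2))⁻¹ *
        Real.exp (-(1 / 2) * (m k ^ 2 * (1 + ‖b k‖ ^ 2) /
          ((1 + ‖a k‖ ^ 2) * (1 + ‖b k‖ ^ 2) - ⟪a k, b k⟫ ^ 2)))) := by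
  set γ := gaussianReal 0 1 with hγ
  have hchar : ∀ y : ℝ, ∫ ζ : ℝ, Complex.exp ((ζ * y : ℝ) * Complex.I) ∂γ =
      Complex.exp (-(1 / 2 * y ^ 2 : ℝ)) := fun y => by
    have := charFun_gaussianReal (μ := 0) (v := 1) y
    rw [charFun_apply_real] at this
    simp only [NNReal.coe_one, Complex.ofReal_zero, mul_zero, zero_mul, zero_sub,
      Complex.ofReal_one, one_mul] at this
    rw [hγ]
    convert this using 2
    · ext ζ; congr 1; push_cast; ring
    · push_cast; ring
  set F : K → (κ → ℝ × ℝ) → ℂ := fun g ζ =>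
    ∏ k, (Complex.exp (((ζ k).1 * (⟪a k, g⟫ - m k) : ℝ) * Complex.I) *
      Complex.exp (((ζ k).2 * ⟪b k, g⟫ : ℝ) * Complex.I)) with hF
  have hpt : ∀ g : K, ((Real.exp (-(1 / 2) * ∑ k, ((⟪a k, g⟫ - m k) ^ 2 + ⟪b k, g⟫ ^ 2)) : ℝ) : ℂ)
      = ∫ ζ, F g ζ ∂(Measure.pi fun _ : κ => γ.prod γ) := fun g => by
    rw [hF]
    simp only
    rw [integral_fintype_prod_eq_prod (fun k (ζ : ℝ × ℝ) =>
      Complex.exp ((ζ.1 * (⟪a k, g⟫ - m k) : ℝ) * Complex.I) *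
      Complex.exp ((ζ.2 * ⟪b k, g⟫ : ℝ) * Complex.I))]
    have : ∀ k, ∫ ζ : ℝ × ℝ, Complex.exp ((ζ.1 * (⟪a k, g⟫ - m k) : ℝ) * Complex.I) *
      Complex.exp ((ζ.2 * ⟪b k, g⟫ : ℝ) * Complex.I) ∂(γ.prod γ) =
        Complex.exp (-(1 / 2 * ((⟪a k, g⟫ - m k) ^ 2 + ⟪b k, g⟫ ^ 2) : ℝ)) := fun k => by
      rw [integral_prod_mul (fun ζ : ℝ => Complex.exp ((ζ * (⟪a k, g⟫ - m k) : ℝ) * Complex.I))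
        (fun ζ : ℝ => Complex.exp ((ζ * ⟪b k, g⟫ : ℝ) * Complex.I)), hchar, hchar,
        ← Complex.exp_add]
      congr 1
      push_cast
      ring
    simp_rw [this]
    rw [← Complex.exp_sum, Complex.ofReal_exp, Finset.mul_sum]
    congr 1
    push_cast
    refine Finset.sum_congr rfl fun k _ => ?_
    ring
  have hInt : Integrable (Function.uncurry F)
      ((stdGaussian K).prod (Measure.pi fun _ : κ => γ.prod γ)) := by
    refine Integrable.of_bound (C := 1) ?_ (ae_of_all _ fun x => ?_)
    · apply Measurable.aestronglyMeasurable
      simp only [hF, Function.uncurry_def]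
      refine Finset.measurable_prod _ fun k _ => ?_
      fun_prop
    · simp only [hF, Function.uncurry_def, norm_prod, norm_mul, Complex.norm_exp_ofReal_mul_I,
        mul_one, Finset.prod_const_one, le_refl]
  have hin : ∀ ζ : κ → ℝ × ℝ, ∫ g, F g ζ ∂(stdGaussian K) =
      ∏ k, Complex.exp (-((ζ k).1 * m k : ℝ) * Complex.I -
        (1 / 2 * (‖a k‖ ^ 2 * (ζ k).1 ^ 2 + 2 * ⟪a k, b k⟫ * ((ζ k).1 * (ζ k).2) +
          ‖b k‖ ^ 2 * (ζ k).2 ^ 2) : ℝ)) := fun ζ => by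
    set v : κ → K := fun k => (ζ k).1 • a k + (ζ k).2 • b k with hv
    have hF' : ∀ g, F g ζ = Complex.exp (∑ k, (-((ζ k).1 * m k : ℝ) * Complex.I)) *
        Complex.exp (⟪g, ∑ k, v k⟫ * Complex.I) := fun g => by
      rw [hF]
      simp only
      simp_rw [← Complex.exp_add]
      rw [← Complex.exp_sum, inner_sum, Complex.ofReal_sum, Finset.sum_mul,
        ← Finset.sum_add_distrib]
      congr 1
      refine Finset.sum_congr rfl fun k _ => ?_
      rw [hv]
      simp only [inner_add_right, inner_smul_right, real_inner_comm g]
      push_cast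
      ring
    simp_rw [hF']
    rw [integral_const_mul, ← charFun_apply, charFun_stdGaussian, ← Complex.exp_add,
      ← Complex.exp_sum]
    congr 1
    have hvo : ∀ i j, i ≠ j → ⟪v i, v j⟫ = 0 := fun i j hij => by
      simp only [hv, inner_add_left, inner_add_right, inner_smul_left, inner_smul_right,
        haa i j hij, hab i j hij, hbb i j hij, real_inner_comm (a j) (b i), hab j i hij.symm]
      simp
    have hnorm : ‖∑ k, v k‖ ^ 2 = ∑ k, ‖v k‖ ^ 2 := by
      rw [← real_inner_self_eq_norm_sq, sum_inner]
      refine Finset.sum_congr rfl fun i _ => ?_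
      rw [inner_sum, Finset.sum_eq_single i (fun j _ hj => hvo i j hj.symm) (by simp),
        real_inner_self_eq_norm_sq]
    have hvk : ∀ k, ‖v k‖ ^ 2 = ‖a k‖ ^ 2 * (ζ k).1 ^ 2 + 2 * ⟪a k, b k⟫ * ((ζ k).1 * (ζ k).2) +
          ‖b k‖ ^ 2 * (ζ k).2 ^ 2 := fun k => by
      rw [hv]
      simp only
      rw [norm_add_sq_real, norm_smul, norm_smul, mul_pow, mul_pow, Real.norm_eq_abs,
        Real.norm_eq_abs, sq_abs, sq_abs, inner_smul_left, inner_smul_right]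
      simp only [conj_trivial]
      ring
    rw [Finset.sum_sub_distrib, sub_eq_add_neg]
    congr 1
    rw [← Complex.ofReal_pow, hnorm, ← Complex.ofReal_sum, ← Finset.mul_sum]
    simp_rw [← hvk]
    push_cast
    ring
  apply Complex.ofReal_injective
  rw [← integral_complex_ofReal]
  simp_rw [hpt]
  rw [integral_integral_swap hInt]
  simp_rw [hin]
  rw [integral_fintype_prod_eq_prod (fun k (ζ : ℝ × ℝ) =>
    Complex.exp (-(ζ.1 * m k : ℝ) * Complex.I -
        (1 / 2 * (‖a k‖ ^ 2 * ζ.1 ^ 2 + 2 * ⟪a k, b k⟫ * (ζ.1 * ζ.2) +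
          ‖b k‖ ^ 2 * ζ.2 ^ 2) : ℝ))), Complex.ofReal_prod]
  refine Finset.prod_congr rfl fun k _ => ?_
  refine integral_cexp_gaussianReal_prod _ _ _ (sq_nonneg _) ?_ (sq_nonneg _) fun x y => ?_
  · have := abs_real_inner_le_norm (a k) (b k)
    rw [← sq_abs, ← mul_pow]
    gcongr
  · have := sq_nonneg ‖x • a k + y • b k‖
    rw [norm_add_sq_real, norm_smul, norm_smul, mul_pow, mul_pow, Real.norm_eq_abs,
        Real.norm_eq_abs, sq_abs, sq_abs, inner_smul_left, inner_smul_right] at this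
    simp only [conj_trivial] at this
    linarith

/-- The elementary tensor `x₁ ⊗ ⋯ ⊗ x_p` as a vector of coordinates. -/
def elemTensor {p N : ℕ} (x : Fin p → EuclideanSpace ℝ (Fin N)) :
    EuclideanSpace ℝ (Fin p → Fin N) :=
  WithLp.toLp 2 fun j => ∏ l, x l (j l)

lemma elemTensor_apply {p N : ℕ} (x : Fin p → EuclideanSpace ℝ (Fin N)) (j : Fin p → Fin N) :
    elemTensor x j = ∏ l, x l (j l) := rfl

lemma inner_elemTensor {p N : ℕ} (x y : Fin p → EuclideanSpace ℝ (Fin N)) :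
    ⟪elemTensor x, elemTensor y⟫ = ∏ l, ⟪x l, y l⟫ := by
  simp only [PiLp.inner_apply, elemTensor_apply, RCLike.inner_apply, conj_trivial]
  rw [Finset.prod_univ_sum, Fintype.piFinset_univ]
  simp_rw [Finset.prod_mul_distrib]

lemma elemTensor_update_apply {p N : ℕ} (x : Fin p → EuclideanSpace ℝ (Fin N)) (i : Fin p)
    (u : EuclideanSpace ℝ (Fin N)) (j : Fin p → Fin N) :
    elemTensor (Function.update x i u) j =
      u (j i) * ∏ l ∈ Finset.univ \ {i}, x l (j l) := by
  rw [elemTensor_apply]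
  have : (fun l => Function.update x i u l (j l)) =
      Function.update (fun l => x l (j l)) i (u (j i)) := by
    ext l
    by_cases h : l = i
    · subst h; simp
    · simp [h]
  rw [this, Finset.prod_update_of_mem (Finset.mem_univ i)]

lemma continuous_elemTensor {p N : ℕ} :
    Continuous (elemTensor : (Fin p → EuclideanSpace ℝ (Fin N)) → _) := by
  unfold elemTensor
  fun_prop

/-- The tensor power `e^{⊗p}`. -/
def tensorPow (p : ℕ) {N : ℕ} (e : EuclideanSpace ℝ (Fin N)) :
    EuclideanSpace ℝ (Fin p → Fin N) :=
  elemTensor fun _ => e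

/-- The derivative at `e` of the tensor power. -/
def tensorDeriv (p : ℕ) {N : ℕ} (e : EuclideanSpace ℝ (Fin N)) :
    EuclideanSpace ℝ (Fin N) →ₗ[ℝ] EuclideanSpace ℝ (Fin p → Fin N) where
  toFun u := ∑ i, elemTensor (Function.update (fun _ => e) i u)
  map_add' u v := by
    rw [← Finset.sum_add_distrib]
    refine Finset.sum_congr rfl fun i _ => ?_
    ext j
    simp only [PiLp.add_apply, elemTensor_update_apply, add_mul]
  map_smul' c u := by
    rw [Finset.smul_sum]
    refine Finset.sum_congr rfl fun i _ => ?_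
    ext j
    simp only [PiLp.smul_apply, elemTensor_update_apply, smul_eq_mul, RingHom.id_apply, mul_assoc]

lemma tensorDeriv_apply {p N : ℕ} (e u : EuclideanSpace ℝ (Fin N)) :
    tensorDeriv p e u = ∑ i, elemTensor (Function.update (fun _ => e) i u) := rfl

lemma continuous_tensorPow {p N : ℕ} :
    Continuous (tensorPow p : EuclideanSpace ℝ (Fin N) → _) :=
  continuous_elemTensor.comp (continuous_pi fun _ => continuous_id)

lemma continuous_tensorDeriv {p N : ℕ} (u : EuclideanSpace ℝ (Fin N)) :
    Continuous fun e => tensorDeriv p e u := by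
  simp_rw [tensorDeriv_apply]
  refine continuous_finsetSum _ fun i _ => continuous_elemTensor.comp ?_
  exact (continuous_pi fun _ => continuous_id).update i continuous_const

lemma inner_tensorPow {p N : ℕ} (e f : EuclideanSpace ℝ (Fin N)) :
    ⟪tensorPow p e, tensorPow p f⟫ = ⟪e, f⟫ ^ p := by
  simp [tensorPow, inner_elemTensor]

lemma tensorDeriv_self {p N : ℕ} (e : EuclideanSpace ℝ (Fin N)) :
    tensorDeriv p e e = (p : ℝ) • tensorPow p e := by
  rw [tensorDeriv_apply, tensorPow]
  have : ∀ i : Fin p, Function.update (fun _ => e) i e = fun _ => e := fun i =>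
    Function.update_eq_self i (fun _ => e)
  simp_rw [this]
  rw [Finset.sum_const, Finset.card_univ, Fintype.card_fin, Nat.cast_smul_eq_nsmul]

lemma inner_tensorDeriv {p N : ℕ} (e f u w : EuclideanSpace ℝ (Fin N)) :
    ⟪tensorDeriv p e u, tensorDeriv p f w⟫ =
      p * ⟪e, f⟫ ^ (p - 1) * ⟪u, w⟫ + p * (p - 1 : ℝ) * ⟪e, f⟫ ^ (p - 2) * (⟪u, f⟫ * ⟪e, w⟫) := by
  have hterm : ∀ i k : Fin p, ⟪elemTensor (Function.update (fun _ => e) i u),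
      elemTensor (Function.update (fun _ => f) k w)⟫ =
      if k = i then ⟪e, f⟫ ^ (p - 1) * ⟪u, w⟫ else ⟪e, f⟫ ^ (p - 2) * (⟪u, f⟫ * ⟪e, w⟫) := by
    intro i k
    rw [inner_elemTensor, ← Finset.mul_prod_erase Finset.univ _ (Finset.mem_univ i)]
    split_ifs with h
    · subst h
      rw [Finset.prod_congr rfl (g := fun _ => ⟪e, f⟫), Finset.prod_const,
        Finset.card_erase_of_mem (Finset.mem_univ k)]
      · simp [mul_comm]
      · intro l hl
        have := Finset.ne_of_mem_erase hl
        simp [this]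
    · have hk : k ∈ Finset.univ.erase i := by simp [h]
      rw [← Finset.mul_prod_erase _ _ hk]
      rw [Finset.prod_congr rfl (g := fun _ => ⟪e, f⟫), Finset.prod_const,
        Finset.card_erase_of_mem hk, Finset.card_erase_of_mem (Finset.mem_univ i)]
      · simp only [Function.update_self, Function.update_of_ne h,
          Function.update_of_ne (Ne.symm h), Finset.card_univ, Fintype.card_fin, Nat.sub_sub]
        ring
      · intro l hl
        have h1 := Finset.ne_of_mem_erase hl
        have h2 := Finset.ne_of_mem_erase (Finset.mem_of_mem_erase hl)
        simp [h1, h2]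
  rw [tensorDeriv_apply, tensorDeriv_apply, sum_inner]
  simp_rw [inner_sum, hterm]
  have hsum : ∀ i : Fin p, ∑ k : Fin p, (if k = i then ⟪e, f⟫ ^ (p - 1) * ⟪u, w⟫
      else ⟪e, f⟫ ^ (p - 2) * (⟪u, f⟫ * ⟪e, w⟫)) =
      ⟪e, f⟫ ^ (p - 1) * ⟪u, w⟫ + (p - 1 : ℝ) * (⟪e, f⟫ ^ (p - 2) * (⟪u, f⟫ * ⟪e, w⟫)) := by
    intro i
    rw [← Finset.add_sum_erase _ _ (Finset.mem_univ i), if_pos rfl,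
      Finset.sum_congr rfl (g := fun _ => ⟪e, f⟫ ^ (p - 2) * (⟪u, f⟫ * ⟪e, w⟫)),
      Finset.sum_const, Finset.card_erase_of_mem (Finset.mem_univ i), nsmul_eq_mul,
      Finset.card_univ, Fintype.card_fin, Nat.cast_sub (by have := i.2; omega), Nat.cast_one]
    intro k hk
    rw [if_neg (Finset.ne_of_mem_erase hk)]
  simp_rw [hsum]
  rw [Finset.sum_const, Finset.card_univ, Fintype.card_fin, nsmul_eq_mul]
  ring

/-- Gaussian weight favouring the points `e` at which the gradient of `⟪e^{⊗p}, g⟫` is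
close to `c • e`. -/
def gradWeight (p : ℕ) {N : ℕ} (s c : ℝ) (e : EuclideanSpace ℝ (Fin N))
    (g : EuclideanSpace ℝ (Fin p → Fin N)) : ℝ :=
  Real.exp (-(1 / 2) * (‖(tensorDeriv p e).adjoint g - c • e‖ ^ 2 / s))

lemma inner_adjoint_sub {p N : ℕ} (c : ℝ) (e u : EuclideanSpace ℝ (Fin N))
    (g : EuclideanSpace ℝ (Fin p → Fin N)) :
    ⟪u, (tensorDeriv p e).adjoint g - c • e⟫ = ⟪tensorDeriv p e u, g⟫ - c * ⟪u, e⟫ := by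
  rw [inner_sub_right, LinearMap.adjoint_inner_right, inner_smul_right]

lemma continuous_gradWeight {p N : ℕ} (s c : ℝ) :
    Continuous fun x : EuclideanSpace ℝ (Fin N) × EuclideanSpace ℝ (Fin p → Fin N) =>
      gradWeight p s c x.1 x.2 := by
  unfold gradWeight
  have : ∀ x : EuclideanSpace ℝ (Fin N) × EuclideanSpace ℝ (Fin p → Fin N),
      ‖(tensorDeriv p x.1).adjoint x.2 - c • x.1‖ ^ 2 =
      ∑ i, (⟪tensorDeriv p x.1 (EuclideanSpace.basisFun (Fin N) ℝ i), x.2⟫ -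
        c * ⟪EuclideanSpace.basisFun (Fin N) ℝ i, x.1⟫) ^ 2 := fun x => by
    rw [← (EuclideanSpace.basisFun (Fin N) ℝ).sum_sq_inner_right]
    simp_rw [inner_adjoint_sub]
  simp_rw [this]
  have h := fun i => (continuous_tensorDeriv (p := p) (EuclideanSpace.basisFun (Fin N) ℝ i)).comp
    (continuous_fst (X := EuclideanSpace ℝ (Fin N)) (Y := EuclideanSpace ℝ (Fin p → Fin N)))
  simp only [Function.comp_def] at h
  fun_prop

lemma gradWeight_pos {p N : ℕ} (s c : ℝ) (e : EuclideanSpace ℝ (Fin N))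
    (g : EuclideanSpace ℝ (Fin p → Fin N)) : 0 < gradWeight p s c e g := Real.exp_pos _

lemma gradWeight_le_one {p N : ℕ} {s : ℝ} (hs : 0 < s) (c : ℝ) (e : EuclideanSpace ℝ (Fin N))
    (g : EuclideanSpace ℝ (Fin p → Fin N)) : gradWeight p s c e g ≤ 1 := by
  unfold gradWeight
  rw [Real.exp_le_one_iff]
  have : 0 ≤ ‖(tensorDeriv p e).adjoint g - c • e‖ ^ 2 / s := by positivity
  linarith

lemma exists_orthonormalBasis_option {m : ℕ} {e : EuclideanSpace ℝ (Fin (m + 1))}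
    (he : ‖e‖ = 1) :
    ∃ b : OrthonormalBasis (Option (Fin m)) ℝ (EuclideanSpace ℝ (Fin (m + 1))), b none = e := by
  have hv : Orthonormal ℝ (Set.domRestrict ({none} : Set (Option (Fin m))) fun _ => e) := by
    refine ⟨fun i => he, fun i j hij => ?_⟩
    exact absurd (Subsingleton.elim i j) hij
  obtain ⟨b, hb⟩ := hv.exists_orthonormalBasis_extension_of_card_eq (by simp)
  exact ⟨b, hb none rfl⟩

lemma exists_orthonormalBasis_bool_sum {n : ℕ} {e u : EuclideanSpace ℝ (Fin (n + 2))}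
    (he : ‖e‖ = 1) (hu : ‖u‖ = 1) (heu : ⟪e, u⟫ = 0) :
    ∃ b : OrthonormalBasis (Bool ⊕ Fin n) ℝ (EuclideanSpace ℝ (Fin (n + 2))),
      b (Sum.inl false) = e ∧ b (Sum.inl true) = u := by
  set v : Bool ⊕ Fin n → EuclideanSpace ℝ (Fin (n + 2)) :=
    fun k => if k = Sum.inl false then e else u with hvdef
  have hv : Orthonormal ℝ (Set.domRestrict (Set.range (Sum.inl : Bool → Bool ⊕ Fin n)) v) := by
    refine ⟨?_, ?_⟩
    · rintro ⟨_, ⟨i, rfl⟩⟩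
      cases i <;> simp [hvdef, Set.domRestrict, he, hu]
    · rintro ⟨_, ⟨i, rfl⟩⟩ ⟨_, ⟨j, rfl⟩⟩ hij
      cases i <;> cases j <;>
        simp [hvdef, Set.domRestrict, heu, real_inner_comm e u] at hij ⊢
  obtain ⟨b, hb⟩ := hv.exists_orthonormalBasis_extension_of_card_eq (by simp [add_comm])
  exact ⟨b, by rw [hb _ ⟨false, rfl⟩]; simp [hvdef], by rw [hb _ ⟨true, rfl⟩]; simp [hvdef]⟩

/-- Expectation of the weight at a fixed unit vector of `ℝ^{m+1}`. -/
def onePoint (p m : ℕ) (s c : ℝ) : ℝ :=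
  (Real.sqrt (1 + p ^ 2 / s))⁻¹ * Real.exp (-(1 / 2) * (c ^ 2 / (s + p ^ 2))) *
    (Real.sqrt (1 + p / s))⁻¹ ^ m

lemma integral_gradWeight {p m : ℕ} {s : ℝ} (c : ℝ) (hs : 0 < s)
    {e : EuclideanSpace ℝ (Fin (m + 1))} (he : ‖e‖ = 1) :
    ∫ g, gradWeight p s c e g ∂(stdGaussian (EuclideanSpace ℝ (Fin p → Fin (m + 1)))) =
      onePoint p m s c := by
  obtain ⟨b, hb⟩ := exists_orthonormalBasis_option he
  set r := (Real.sqrt s)⁻¹ with hr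
  have hr2 : r ^ 2 = 1 / s := by rw [hr, inv_pow, Real.sq_sqrt hs.le, one_div]
  have hee : ⟪e, e⟫ = 1 := by rw [real_inner_self_eq_norm_sq, he, one_pow]
  have hbe : ∀ k, ⟪b k, e⟫ = if k = none then 1 else 0 := fun k => by
    rw [← hb]; exact orthonormal_iff_ite.mp b.orthonormal k none
  have hbb := orthonormal_iff_ite.mp b.orthonormal
  have hW : ∀ g, gradWeight p s c e g = Real.exp (-(1 / 2) * ∑ k : Option (Fin m),
      ((⟪r • tensorDeriv p e (b k), g⟫ - (if k = none then c * r else 0)) ^ 2 +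
        ⟪(0 : EuclideanSpace ℝ (Fin p → Fin (m + 1))), g⟫ ^ 2)) := fun g => by
    rw [gradWeight, ← b.sum_sq_inner_right, Finset.sum_div]
    congr 2
    refine Finset.sum_congr rfl fun k _ => ?_
    rw [inner_adjoint_sub, hbe, inner_smul_left, inner_zero_left, div_eq_mul_one_div, ← hr2]
    simp only [conj_trivial]
    split_ifs <;> ring
  simp_rw [hW]
  have hG : ∀ k l, ⟪tensorDeriv p e (b k), tensorDeriv p e (b l)⟫ =
      if k = l then (if k = none then (p : ℝ) ^ 2 else p) else 0 := fun k l => by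
    rw [inner_tensorDeriv, hee, hbb, hbe, real_inner_comm, hbe]
    rcases k with _ | k <;> rcases l with _ | l <;> simp
    ring
  rw [integral_exp_neg_sum_sq_blocks (fun k => r • tensorDeriv p e (b k)) (fun _ => 0)
    (fun k => if k = none then c * r else 0)]
  · rw [Fintype.prod_option, onePoint]
    have hn : ∀ k, ‖r • tensorDeriv p e (b k)‖ ^ 2 = (if k = none then (p : ℝ) ^ 2 else p) / s := by
      intro k
      rw [norm_smul, mul_pow, Real.norm_eq_abs, sq_abs, hr2, ← real_inner_self_eq_norm_sq, hG,
        if_pos rfl]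
      ring
    simp only [hn, reduceCtorEq, if_true, if_false, norm_zero, inner_zero_right]
    simp only [ne_eq, OfNat.ofNat_ne_zero, not_false_eq_true, zero_pow, add_zero, mul_one,
      sub_zero, zero_div, mul_zero, Real.exp_zero, Finset.prod_const, Finset.card_univ,
      Fintype.card_fin]
    congr 3
    congr 1
    rw [mul_pow, hr2]
    field_simp
  · intro i j hij
    rw [inner_smul_left, inner_smul_right, hG, if_neg hij]; simp
  · intro i j hij; simp
  · intro i j hij; simp

/-- Expectation of the product of the weights at two unit vectors of `ℝ^{n+2}` with overlap `q`. -/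
def twoPoint (p n : ℕ) (s c q : ℝ) : ℝ :=
  (Real.sqrt (planeDet p s (q ^ (p - 2)) (q ^ 2) / s ^ 2))⁻¹ *
    Real.exp (-(c ^ 2 * (tangVar p (q ^ (p - 2)) (q ^ 2) + s) /
      planeDet p s (q ^ (p - 2)) (q ^ 2))) *
    (Real.sqrt (planeDet p s (-q ^ (p - 2)) (q ^ 2) / s ^ 2))⁻¹ *
    (Real.sqrt ((1 + p / s) ^ 2 - (p / s * q ^ (p - 1)) ^ 2))⁻¹ ^ n

lemma integral_gradWeight_mul_gradWeight {p n : ℕ} (hp : 3 ≤ p) {s : ℝ} (c : ℝ) (hs : 0 < s)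
    {e f : EuclideanSpace ℝ (Fin (n + 2))} (he : ‖e‖ = 1) (hf : ‖f‖ = 1) (hq : |⟪e, f⟫| < 1) :
    ∫ g, gradWeight p s c e g * gradWeight p s c f g
      ∂(stdGaussian (EuclideanSpace ℝ (Fin p → Fin (n + 2)))) = twoPoint p n s c ⟪e, f⟫ := by
  set q := ⟪e, f⟫ with hqdef
  have hq2 : q ^ 2 < 1 := (sq_lt_one_iff_abs_lt_one q).mpr hq
  set t := Real.sqrt (1 - q ^ 2) with ht
  have ht2 : t ^ 2 = 1 - q ^ 2 := Real.sq_sqrt (by linarith)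
  have htpos : 0 < t := Real.sqrt_pos.mpr (by linarith)
  set u := t⁻¹ • (f - q • e) with hu
  have ee : ⟪e, e⟫ = 1 := by rw [real_inner_self_eq_norm_sq, he, one_pow]
  have ff : ⟪f, f⟫ = 1 := by rw [real_inner_self_eq_norm_sq, hf, one_pow]
  have ef : ⟪e, f⟫ = q := rfl
  have fe : ⟪f, e⟫ = q := by rw [real_inner_comm]
  have hfu : f = q • e + t • u := by
    rw [hu, smul_smul, mul_inv_cancel₀ htpos.ne', one_smul]; abel
  have eu : ⟪e, u⟫ = 0 := by
    rw [hu, inner_smul_right, inner_sub_right, inner_smul_right, ee, ef]; ring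
  have ue : ⟪u, e⟫ = 0 := by rw [real_inner_comm, eu]
  have uf : ⟪u, f⟫ = t := by
    rw [hu, inner_smul_left, inner_sub_left, inner_smul_left, ff, ef]
    simp only [conj_trivial]
    rw [← pow_two, ← ht2]; field_simp
  have uu : ⟪u, u⟫ = 1 := by
    have : ⟪u, f⟫ = t * ⟪u, u⟫ := by
      have h := congrArg (fun x => ⟪u, x⟫) hfu
      simp only [inner_add_right, inner_smul_right, ue] at h
      rw [h]; ring
    rw [uf] at this
    have h2 : t * 1 = t * ⟪u, u⟫ := by rw [mul_one]; exact this
    exact (mul_left_cancel₀ htpos.ne' h2).symm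
  have hunorm : ‖u‖ = 1 := by
    rw [real_inner_self_eq_norm_sq] at uu
    exact (pow_eq_one_iff_of_nonneg (norm_nonneg u) two_ne_zero).mp uu
  obtain ⟨b, hb0, hb1⟩ := exists_orthonormalBasis_bool_sum he hunorm eu
  have hbb := orthonormal_iff_ite.mp b.orthonormal
  have be : ∀ i, ⟪e, b (Sum.inr i)⟫ = 0 := fun i => by rw [← hb0, hbb]; simp
  have bu : ∀ i, ⟪u, b (Sum.inr i)⟫ = 0 := fun i => by rw [← hb1, hbb]; simp
  have bf : ∀ i, ⟪f, b (Sum.inr i)⟫ = 0 := fun i => by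
    rw [hfu, inner_add_left, inner_smul_left, inner_smul_left, be, bu]; simp
  have bi : ∀ i j, ⟪b (Sum.inr i), b (Sum.inr j)⟫ = if i = j then 1 else 0 := fun i j => by
    rw [hbb]; simp
  set w := t • e - q • u with hw
  have ew : ⟪e, w⟫ = t := by
    rw [hw, inner_sub_right, inner_smul_right, inner_smul_right, ee, eu]; ring
  have uw : ⟪u, w⟫ = -q := by
    rw [hw, inner_sub_right, inner_smul_right, inner_smul_right, uu, ue]; ring
  have fw : ⟪f, w⟫ = 0 := by
    rw [hw, inner_sub_right, inner_smul_right, inner_smul_right, fe, real_inner_comm, uf]; ring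
  have ww : ⟪w, w⟫ = 1 := by
    nth_rewrite 1 [hw]
    rw [inner_sub_left, inner_smul_left, inner_smul_left, ew, uw]
    simp only [conj_trivial]; nlinarith
  have bw : ∀ i, ⟪w, b (Sum.inr i)⟫ = 0 := fun i => by
    rw [hw, inner_sub_left, inner_smul_left, inner_smul_left, be, bu]; simp
  have be' : ∀ i, ⟪b (Sum.inr i), e⟫ = 0 := fun i => by rw [real_inner_comm, be]
  have bf' : ∀ i, ⟪b (Sum.inr i), f⟫ = 0 := fun i => by rw [real_inner_comm, bf]
  have wf : ⟪w, f⟫ = 0 := by rw [real_inner_comm, fw]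
  have hpar : ∀ v, ‖v‖ ^ 2 = ⟪e, v⟫ ^ 2 + ⟪u, v⟫ ^ 2 + ∑ i, ⟪b (Sum.inr i), v⟫ ^ 2 := fun v => by
    rw [← b.sum_sq_inner_right, Fintype.sum_sum_type, Fintype.sum_bool, hb0, hb1]; ring
  have hpar' : ∀ v, ‖v‖ ^ 2 = ⟪f, v⟫ ^ 2 + ⟪w, v⟫ ^ 2 + ∑ i, ⟪b (Sum.inr i), v⟫ ^ 2 := fun v => by
    rw [hpar]
    congr 1
    rw [hw, hfu, inner_add_left, inner_sub_left]
    simp only [inner_smul_left, conj_trivial]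
    linear_combination (-⟪e, v⟫ ^ 2 - ⟪u, v⟫ ^ 2) * ht2
  set S := tensorDeriv p (N := n + 2) with hS
  have hzero : ∀ e' f' x y, ⟪x, y⟫ = 0 → ⟪e', y⟫ = 0 → ⟪S e' x, S f' y⟫ = 0 := by
    intro e' f' x y h1 h2
    rw [hS, inner_tensorDeriv, h1, h2]; ring
  have hzero' : ∀ e' f' x y, ⟪x, y⟫ = 0 → ⟪e', y⟫ = 0 → ⟪S f' y, S e' x⟫ = 0 := by
    intro e' f' x y h1 h2
    rw [real_inner_comm, hzero e' f' x y h1 h2]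
  set a := q ^ (p - 2) with ha
  have hpm : q ^ (p - 1) = a * q := by rw [ha, ← pow_succ]; congr 1; omega
  set r := (Real.sqrt s)⁻¹ with hr
  have hr2 : r ^ 2 = 1 / s := by rw [hr, inv_pow, Real.sq_sqrt hs.le, one_div]
  set h := (Real.sqrt (2 * s))⁻¹ with hh
  have hh2 : h ^ 2 = 1 / (2 * s) := by rw [hh, inv_pow, Real.sq_sqrt (by positivity), one_div]
  set A : Bool ⊕ Fin n → EuclideanSpace ℝ (Fin p → Fin (n + 2)) :=
    Sum.elim (fun i => if i then h • (S e e - S f f) else h • (S e e + S f f))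
      (fun i => r • S e (b (Sum.inr i))) with hA
  set B : Bool ⊕ Fin n → EuclideanSpace ℝ (Fin p → Fin (n + 2)) :=
    Sum.elim (fun i => if i then h • (S e u - S f w) else h • (S e u + S f w))
      (fun i => r • S f (b (Sum.inr i))) with hB
  set M : Bool ⊕ Fin n → ℝ := Sum.elim (fun i => if i then 0 else 2 * c * h) (fun _ => 0) with hM
  have hW : ∀ g, gradWeight p s c e g * gradWeight p s c f g =
      Real.exp (-(1 / 2) * ∑ k, ((⟪A k, g⟫ - M k) ^ 2 + ⟪B k, g⟫ ^ 2)) := fun g => by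
    rw [gradWeight, gradWeight, ← Real.exp_add, hpar, hpar' (_ - c • f)]
    simp only [inner_adjoint_sub, ee, ff, ue, be', bf', wf]
    rw [Fintype.sum_sum_type, Fintype.sum_bool]
    simp only [hA, hB, hM, Sum.elim_inl, Sum.elim_inr, if_true, Bool.false_eq_true, if_false,
      inner_smul_left, inner_add_left, inner_sub_left, conj_trivial, sub_zero, mul_zero, mul_one,
      mul_pow, hr2, Finset.sum_add_distrib, ← Finset.mul_sum]
    congr 1
    simp only [hS]
    generalize ∑ i, ⟪tensorDeriv p e (b (Sum.inr i)), g⟫ ^ 2 = Z1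
    generalize ∑ i, ⟪tensorDeriv p f (b (Sum.inr i)), g⟫ ^ 2 = Z2
    have e1 : ∀ X1 X2 : ℝ, (h * (X1 + X2) - 2 * c * h) ^ 2 = h ^ 2 * (X1 + X2 - 2 * c) ^ 2 :=
      fun _ _ => by ring
    rw [e1, hh2]
    field_simp
    ring
  simp_rw [hW]
  have Sii : ∀ i j, ⟪S e (b (Sum.inr i)), S e (b (Sum.inr j))⟫ = if i = j then (p : ℝ) else 0 :=
    fun i j => by rw [hS, inner_tensorDeriv, bi, be, ee]; split_ifs <;> simp
  have Sjj : ∀ i j, ⟪S f (b (Sum.inr i)), S f (b (Sum.inr j))⟫ = if i = j then (p : ℝ) else 0 :=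
    fun i j => by rw [hS, inner_tensorDeriv, bi, bf, ff]; split_ifs <;> simp
  have Sij : ∀ i j, ⟪S e (b (Sum.inr i)), S f (b (Sum.inr j))⟫ =
      if i = j then (p : ℝ) * q ^ (p - 1) else 0 :=
    fun i j => by rw [hS, inner_tensorDeriv, bi, be, ef]; split_ifs <;> simp
  have p1 : ⟪S e e, S e e⟫ = (p : ℝ) ^ 2 := by rw [hS, inner_tensorDeriv, ee]; ring
  have p2 : ⟪S f f, S f f⟫ = (p : ℝ) ^ 2 := by rw [hS, inner_tensorDeriv, ff]; ring
  have p3 : ⟪S e e, S f f⟫ = (p : ℝ) ^ 2 * (a * q ^ 2) := by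
    rw [hS, inner_tensorDeriv, ef, hpm, ← ha]; ring
  have p4 : ⟪S e u, S e u⟫ = p := by rw [hS, inner_tensorDeriv, ee, uu, eu]; ring
  have p5 : ⟪S f w, S f w⟫ = p := by rw [hS, inner_tensorDeriv, ff, ww, fw]; ring
  have p6 : ⟪S e u, S f w⟫ = -(p * (a * q ^ 2)) + p * (p - 1) * a * (1 - q ^ 2) := by
    rw [hS, inner_tensorDeriv, ef, hpm, ← ha, uw, uf, ew]
    linear_combination (p : ℝ) * (p - 1) * a * ht2
  have p7 : ⟪S e e, S e u⟫ = 0 := hzero _ _ _ _ eu eu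
  have p8 : ⟪S f f, S f w⟫ = 0 := hzero _ _ _ _ fw fw
  have p9 : ⟪S e e, S f w⟫ = (p : ℝ) ^ 2 * a * q * t := by
    rw [hS, inner_tensorDeriv, ef, hpm, ← ha, ew]; ring
  have p10 : ⟪S f f, S e u⟫ = (p : ℝ) ^ 2 * a * q * t := by
    rw [hS, inner_tensorDeriv, fe, hpm, ← ha, real_inner_comm, uf]; ring
  rw [integral_exp_neg_sum_sq_blocks A B M]
  · have nrm : ∀ (x : ℝ) (y : EuclideanSpace ℝ (Fin p → Fin (n + 2))),
        ‖x • y‖ ^ 2 = x ^ 2 * ⟪y, y⟫ := fun x y => by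
      rw [norm_smul, mul_pow, Real.norm_eq_abs, sq_abs, real_inner_self_eq_norm_sq]
    have hsne := hs.ne'
    have nA0 : ‖A (Sum.inl false)‖ ^ 2 = p ^ 2 * (1 + a * q ^ 2) / s := by
      simp only [hA, Sum.elim_inl, Bool.false_eq_true, if_false, nrm, hh2, inner_add_left,
        inner_add_right, p1, p2, p3, real_inner_comm (S e e) (S f f)]
      field_simp; ring
    have nA1 : ‖A (Sum.inl true)‖ ^ 2 = p ^ 2 * (1 + -a * q ^ 2) / s := by
      simp only [hA, Sum.elim_inl, if_true, nrm, hh2, inner_sub_left,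
        inner_sub_right, p1, p2, p3, real_inner_comm (S e e) (S f f)]
      field_simp; ring
    have nB0 : ‖B (Sum.inl false)‖ ^ 2 = tangVar p a (q ^ 2) / s := by
      simp only [hB, Sum.elim_inl, Bool.false_eq_true, if_false, nrm, hh2, inner_add_left,
        inner_add_right, p4, p5, p6, real_inner_comm (S e u) (S f w), tangVar]
      field_simp; ring
    have nB1 : ‖B (Sum.inl true)‖ ^ 2 = tangVar p (-a) (q ^ 2) / s := by
      simp only [hB, Sum.elim_inl, if_true, nrm, hh2, inner_sub_left,
        inner_sub_right, p4, p5, p6, real_inner_comm (S e u) (S f w), tangVar]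
      field_simp; ring
    have nAB0 : ⟪A (Sum.inl false), B (Sum.inl false)⟫ = p ^ 2 * a * q * t / s := by
      simp only [hA, hB, Sum.elim_inl, Bool.false_eq_true, if_false, inner_smul_left,
        inner_smul_right, conj_trivial, inner_add_left, inner_add_right, p7, p8, p9, p10]
      linear_combination (2 * (p ^ 2 * a * q * t)) * hh2
    have nAB1 : ⟪A (Sum.inl true), B (Sum.inl true)⟫ = -(p ^ 2 * a * q * t / s) := by
      simp only [hA, hB, Sum.elim_inl, if_true, inner_smul_left,
        inner_smul_right, conj_trivial, inner_sub_left, inner_sub_right, p7, p8, p9, p10]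
      linear_combination (-2 * (p ^ 2 * a * q * t)) * hh2
    have nAi : ∀ i, ‖A (Sum.inr i)‖ ^ 2 = p / s := fun i => by
      simp only [hA, Sum.elim_inr, nrm, hr2, Sii, if_true]; ring
    have nBi : ∀ i, ‖B (Sum.inr i)‖ ^ 2 = p / s := fun i => by
      simp only [hB, Sum.elim_inr, nrm, hr2, Sjj, if_true]; ring
    have nABi : ∀ i, ⟪A (Sum.inr i), B (Sum.inr i)⟫ = p / s * q ^ (p - 1) := fun i => by
      simp only [hA, hB, Sum.elim_inr, inner_smul_left, inner_smul_right, conj_trivial, Sij,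
        if_true]
      linear_combination (p * q ^ (p - 1)) * hr2
    rw [Fintype.prod_sum_type, Fintype.prod_bool]
    simp only [nA0, nA1, nB0, nB1, nAB0, nAB1, nAi, nBi, nABi]
    simp only [hM, Sum.elim_inl, Sum.elim_inr, if_true, Bool.false_eq_true, if_false]
    have d0 : (1 + p ^ 2 * (1 + a * q ^ 2) / s) * (1 + tangVar p a (q ^ 2) / s) -
        (p ^ 2 * a * q * t / s) ^ 2 = planeDet p s a (q ^ 2) / s ^ 2 := by
      rw [planeDet]
      field_simp
      rw [ht2]; ring
    have d1 : (1 + p ^ 2 * (1 + -a * q ^ 2) / s) * (1 + tangVar p (-a) (q ^ 2) / s) -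
        (-(p ^ 2 * a * q * t / s)) ^ 2 = planeDet p s (-a) (q ^ 2) / s ^ 2 := by
      rw [planeDet]
      field_simp
      rw [ht2]; ring
    have hdet : 0 < planeDet p s a (q ^ 2) :=
      lt_of_lt_of_le (by positivity) (planeDet_overlap_ge hp hs hq.le)
    rw [d0, d1, twoPoint, ← ha]
    simp only [ne_eq, OfNat.ofNat_ne_zero, not_false_eq_true, zero_pow, zero_mul, zero_div,
      mul_zero, Real.exp_zero, mul_one, Finset.prod_const, Finset.card_univ, Fintype.card_fin]
    rw [mul_comm (Real.sqrt (planeDet p s (-a) (q ^ 2) / s ^ 2))⁻¹, ← pow_two (1 + (p : ℝ) / s)]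
    congr 4
    rw [mul_pow, hh2]
    field_simp
    ring
  all_goals
    have z1 : ∀ x i, ⟪x, b (Sum.inr i)⟫ = 0 → ⟪S e x, S e (b (Sum.inr i))⟫ = 0 :=
      fun x i hx => hzero _ _ _ _ hx (be i)
    have z2 : ∀ x i, ⟪x, b (Sum.inr i)⟫ = 0 → ⟪S e x, S f (b (Sum.inr i))⟫ = 0 :=
      fun x i hx => hzero _ _ _ _ hx (be i)
    have z3 : ∀ x i, ⟪x, b (Sum.inr i)⟫ = 0 → ⟪S f x, S e (b (Sum.inr i))⟫ = 0 :=
      fun x i hx => hzero _ _ _ _ hx (bf i)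
    have z4 : ∀ x i, ⟪x, b (Sum.inr i)⟫ = 0 → ⟪S f x, S f (b (Sum.inr i))⟫ = 0 :=
      fun x i hx => hzero _ _ _ _ hx (bf i)
    have z5 : ∀ x i, ⟪x, b (Sum.inr i)⟫ = 0 → ⟪S e (b (Sum.inr i)), S e x⟫ = 0 :=
      fun x i hx => hzero' _ _ _ _ hx (be i)
    have z6 : ∀ x i, ⟪x, b (Sum.inr i)⟫ = 0 → ⟪S f (b (Sum.inr i)), S e x⟫ = 0 :=
      fun x i hx => hzero' _ _ _ _ hx (be i)
    have z7 : ∀ x i, ⟪x, b (Sum.inr i)⟫ = 0 → ⟪S e (b (Sum.inr i)), S f x⟫ = 0 :=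
      fun x i hx => hzero' _ _ _ _ hx (bf i)
    have z8 : ∀ x i, ⟪x, b (Sum.inr i)⟫ = 0 → ⟪S f (b (Sum.inr i)), S f x⟫ = 0 :=
      fun x i hx => hzero' _ _ _ _ hx (bf i)
    have p3' : ⟪S f f, S e e⟫ = (p : ℝ) ^ 2 * (a * q ^ 2) := by rw [real_inner_comm, p3]
    have p6' : ⟪S f w, S e u⟫ = -(p * (a * q ^ 2)) + p * (p - 1) * a * (1 - q ^ 2) := by
      rw [real_inner_comm, p6]
    rintro (i | i) (j | j) hij
    · rcases i with _ | _ <;> rcases j with _ | _ <;> first | exact absurd rfl hij | skip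
      all_goals
        simp only [hA, hB, Sum.elim_inl, if_true, Bool.false_eq_true, if_false, inner_smul_left,
          inner_smul_right, conj_trivial, inner_add_left, inner_add_right, inner_sub_left,
          inner_sub_right, p1, p2, p3, p3', p4, p5, p6, p6', p7, p8, p9, p10]
        ring
    · rcases i with _ | _ <;>
        simp [hA, hB, inner_smul_left, inner_smul_right, inner_add_left, inner_sub_left, z1, z2,
          z3, z4, be, bf, bu, bw]
    · rcases j with _ | _ <;>
        simp [hA, hB, inner_smul_left, inner_smul_right, inner_add_right, inner_sub_right, z5, z6,
          z7, z8, be, bf, bu, bw]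
    · have hne : i ≠ j := fun h => hij (by rw [h])
      simp [hA, hB, inner_smul_left, inner_smul_right, Sii, Sjj, Sij, hne]

/-- Subexponential prefactor of the normalized two-point function at overlap `q`. -/
def overlapPref (p : ℕ) (s q : ℝ) : ℝ :=
  (1 - ((p : ℝ) / (p + s)) ^ 2 * (q ^ (p - 1)) ^ 2) * ((p + s) * (p ^ 2 + s)) /
    Real.sqrt (planeDet p s (q ^ (p - 2)) (q ^ 2) * planeDet p s (-q ^ (p - 2)) (q ^ 2))

lemma continuousAt_overlapPref_zero {p : ℕ} (hp : 3 ≤ p) {s : ℝ} (hs : 0 < s) :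
    ContinuousAt (overlapPref p s) 0 := by
  have h1 := planeDet_overlap_ge hp hs (q := 0) (by simp)
  have h2 := planeDet_neg_overlap_ge hp hs (q := 0) (by simp)
  have hs2 : 0 < s ^ 2 := by positivity
  unfold overlapPref
  refine ContinuousAt.div (by fun_prop) ?_
    (Real.sqrt_pos.mpr (mul_pos (hs2.trans_le h1) (hs2.trans_le h2))).ne'
  unfold planeDet tangVar
  fun_prop

lemma overlapPref_zero {p : ℕ} (hp : 3 ≤ p) {s : ℝ} (hs : 0 < s) : overlapPref p s 0 = 1 := by
  have hp0 : (0 : ℝ) < p := by exact_mod_cast (by omega : 0 < p)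
  have e1 : p - 1 ≠ 0 := by omega
  have e2 : p - 2 ≠ 0 := by omega
  have : planeDet p s 0 0 = (p + s) * (p ^ 2 + s) := by unfold planeDet tangVar; ring
  simp only [overlapPref, zero_pow e1, zero_pow e2, neg_zero, ne_eq, OfNat.ofNat_ne_zero,
    not_false_eq_true, zero_pow, this]
  rw [Real.sqrt_mul_self (by positivity)]
  field_simp
  ring

lemma overlapPref_nonneg {p : ℕ} (hp : 3 ≤ p) {s q : ℝ} (hs : 0 < s) (hq : |q| ≤ 1) :
    0 ≤ overlapPref p s q := by
  have := (one_sub_ratio_pos hp hs hq).le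
  unfold overlapPref
  positivity

lemma overlapPref_le {p : ℕ} (hp : 3 ≤ p) {s q : ℝ} (hs : 0 < s) (hq : |q| ≤ 1) :
    overlapPref p s q ≤ (p + s) * (p ^ 2 + s) / s ^ 2 := by
  have h1 := planeDet_overlap_ge hp hs hq
  have h2 := planeDet_neg_overlap_ge hp hs hq
  have h3 : s ^ 2 ≤ Real.sqrt
      (planeDet p s (q ^ (p - 2)) (q ^ 2) * planeDet p s (-q ^ (p - 2)) (q ^ 2)) := by
    apply Real.le_sqrt_of_sq_le
    rw [pow_two (s ^ 2)]
    exact mul_le_mul h1 h2 (by positivity) ((by positivity : (0:ℝ) ≤ s ^ 2).trans h1)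
  unfold overlapPref
  refine div_le_div₀ (by positivity) ?_ (by positivity) h3
  refine mul_le_of_le_one_left (by positivity) ?_
  have : 0 ≤ ((p : ℝ) / (p + s)) ^ 2 * (q ^ (p - 1)) ^ 2 := by positivity
  linarith

lemma twoPoint_eq {p n : ℕ} (hp : 3 ≤ p) {s q : ℝ} (E : ℝ) (hs : 0 < s) (hq : |q| ≤ 1) :
    twoPoint p n s (p * E * Real.sqrt (n + 2)) q =
      onePoint p (n + 1) s (p * E * Real.sqrt (n + 2)) ^ 2 *
        (overlapPref p s q * Real.exp ((n + 2) * pairRate p s E q)) := by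
  have hp0 : (0 : ℝ) < p := by exact_mod_cast (by omega : 0 < p)
  have hD := (by positivity : (0:ℝ) < s ^ 2).trans_le (planeDet_overlap_ge hp hs hq)
  have hD' := (by positivity : (0:ℝ) < s ^ 2).trans_le (planeDet_neg_overlap_ge hp hs hq)
  have hx := one_sub_ratio_pos hp hs hq
  unfold twoPoint onePoint overlapPref pairRate
  generalize hDd : planeDet p s (q ^ (p - 2)) (q ^ 2) = D at *
  generalize planeDet p s (-q ^ (p - 2)) (q ^ 2) = D' at *
  generalize tangVar p (q ^ (p - 2)) (q ^ 2) = t at *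
  have hc : (p * E * Real.sqrt (n + 2)) ^ 2 = (n + 2) * (p ^ 2 * E ^ 2) := by
    rw [mul_pow, Real.sq_sqrt (by positivity)]; ring
  have hfac : (1 + (p : ℝ) / s) ^ 2 - (p / s * q ^ (p - 1)) ^ 2 =
      (1 + p / s) ^ 2 * (1 - ((p : ℝ) / (p + s)) ^ 2 * (q ^ (p - 1)) ^ 2) := by
    field_simp
    ring
  rw [hfac, hc]
  set x := 1 - ((p : ℝ) / (p + s)) ^ 2 * (q ^ (p - 1)) ^ 2 with hxdef
  have hexp : Real.exp ((n + 2) * (-(1 / 2) * Real.log x + E ^ 2 * ((p : ℝ) ^ 2 / (p ^ 2 + s) -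
      (p : ℝ) ^ 2 * (t + s) / D))) = ((Real.sqrt x)⁻¹ ^ n * x⁻¹) *
      (Real.exp ((n + 2) * (p ^ 2 * E ^ 2) / (p ^ 2 + s)) *
        Real.exp (-((n + 2) * (p ^ 2 * E ^ 2) * (t + s) / D))) := by
    have h1 : (Real.sqrt x)⁻¹ ^ n * x⁻¹ = Real.exp ((n + 2) * (-(1 / 2) * Real.log x)) := by
      have : x⁻¹ = (Real.sqrt x)⁻¹ ^ 2 := by rw [inv_pow, Real.sq_sqrt hx.le]
      rw [this, ← pow_add, ← Real.exp_log (Real.sqrt_pos.mpr hx), ← Real.exp_neg,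
        ← Real.exp_nat_mul, Real.log_sqrt hx.le]
      congr 1; push_cast; ring
    rw [h1, ← Real.exp_add, ← Real.exp_add]
    congr 1; ring
  rw [hexp, Real.sqrt_mul (by positivity), Real.sqrt_sq (by positivity), Real.sqrt_mul hD.le,
    Real.sqrt_div hD.le, Real.sqrt_div hD'.le, Real.sqrt_sq hs.le]
  have hsq : ((Real.sqrt (1 + p ^ 2 / s))⁻¹ *
      Real.exp (-(1 / 2) * ((n + 2) * (p ^ 2 * E ^ 2) / (s + p ^ 2))) *
      (Real.sqrt (1 + p / s))⁻¹ ^ (n + 1)) ^ 2 =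
      (1 + p ^ 2 / s)⁻¹ * Real.exp (-((n + 2) * (p ^ 2 * E ^ 2) / (p ^ 2 + s))) *
        ((1 + p / s)⁻¹ ^ n * (1 + p / s)⁻¹) := by
    rw [mul_pow, mul_pow, inv_pow, Real.sq_sqrt (by positivity), ← Real.exp_nat_mul,
      ← pow_mul, mul_comm (n + 1), pow_mul, inv_pow, Real.sq_sqrt (by positivity), pow_succ]
    congr 3
    push_cast
    rw [add_comm s]; ring
  rw [hsq, Real.exp_neg ((n + 2) * (p ^ 2 * E ^ 2) / (p ^ 2 + s)), mul_inv, mul_pow]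
  have hsD := Real.sqrt_pos.mpr hD
  have hsD' := Real.sqrt_pos.mpr hD'
  have hE := Real.exp_pos ((n + 2) * (p ^ 2 * E ^ 2) / (p ^ 2 + s))
  generalize Real.exp ((n + 2) * (p ^ 2 * E ^ 2) / (p ^ 2 + s)) = X at *
  generalize Real.exp (-((n + 2) * (p ^ 2 * E ^ 2) * (t + s) / D)) = Y at *
  generalize (Real.sqrt x)⁻¹ ^ n = Z at *
  have hinv : (1 + (p : ℝ) / s)⁻¹ = s / (p + s) := by field_simp; ring
  have hinv2 : (1 + (p : ℝ) ^ 2 / s)⁻¹ = s / (p ^ 2 + s) := by field_simp; ring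
  generalize hW : (1 + (p : ℝ) / s)⁻¹ ^ n = W at *
  rw [hinv, hinv2]
  generalize Real.sqrt D = d at *
  generalize Real.sqrt D' = d' at *
  field_simp

lemma integral_exp_neg_sum_sq_basis {κ V : Type*} [Fintype κ] [NormedAddCommGroup V]
    [InnerProductSpace ℝ V] [FiniteDimensional ℝ V] [MeasurableSpace V] [BorelSpace V]
    (b : OrthonormalBasis κ ℝ V) {D : κ → ℝ} (hD : ∀ k, -1 < D k) :
    ∫ x, Real.exp (-∑ k, D k / 2 * ⟪b k, x⟫ ^ 2) ∂(stdGaussian V) =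
      ∏ k, (Real.sqrt (1 + D k))⁻¹ := by
  classical
  rw [stdGaussian_eq_map_pi_orthonormalBasis b, integral_map (Measurable.aemeasurable (by fun_prop))
    (Continuous.aestronglyMeasurable (by fun_prop))]
  have : ∀ x : κ → ℝ, Real.exp (-∑ k, D k / 2 * ⟪b k, ∑ i, x i • b i⟫ ^ 2) =
      ∏ k, Real.exp (0 * x k - D k / 2 * x k ^ 2) := fun x => by
    rw [← Real.exp_sum, ← Finset.sum_neg_distrib]
    congr 1
    refine Finset.sum_congr rfl fun k _ => ?_
    have : ⟪b k, ∑ i, x i • b i⟫ = x k := by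
      simp [inner_sum, inner_smul_right, orthonormal_iff_ite.mp b.orthonormal]
    rw [this]; ring
  simp_rw [this]
  rw [integral_fintype_prod_eq_prod (fun k (y : ℝ) => Real.exp (0 * y - D k / 2 * y ^ 2))]
  refine Finset.prod_congr rfl fun k _ => ?_
  rw [integral_exp_gaussianReal 0 (hD k)]
  simp

lemma integrable_exp_neg_sum_sq_basis {κ V : Type*} [Fintype κ] [NormedAddCommGroup V]
    [InnerProductSpace ℝ V] [FiniteDimensional ℝ V] [MeasurableSpace V] [BorelSpace V]
    (b : OrthonormalBasis κ ℝ V) {D : κ → ℝ} (hD : ∀ k, -1 < D k) :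
    Integrable (fun x => Real.exp (-∑ k, D k / 2 * ⟪b k, x⟫ ^ 2)) (stdGaussian V) := by
  by_contra h
  have h1 := integral_exp_neg_sum_sq_basis b hD
  rw [integral_undef h] at h1
  refine (Finset.prod_pos fun k _ => ?_).ne h1
  have := hD k
  exact inv_pos.mpr (Real.sqrt_pos.mpr (by linarith))

/-- The normalized overlap of a Gaussian vector with a fixed direction is rarely close to one. -/
lemma stdGaussian_overlap_tail {m : ℕ} (hm : 1 ≤ m) {e : EuclideanSpace ℝ (Fin (m + 1))}
    (he : ‖e‖ = 1) {u : ℝ} (hu0 : 0 < u) (hu1 : u ≤ 1) :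
    stdGaussian (EuclideanSpace ℝ (Fin (m + 1))) {x | (1 - u) * ‖x‖ ^ 2 ≤ ⟪e, x⟫ ^ 2} ≤
      ENNReal.ofReal (2 * Real.sqrt (m + 1) * Real.sqrt u ^ m) := by
  obtain ⟨b, hb⟩ := exists_orthonormalBasis_option he
  have hm0 : (0 : ℝ) < m := by exact_mod_cast hm
  set l : ℝ := m / (m + 1) / u with hl
  have hlu : l * u = m / (m + 1) := by rw [hl]; field_simp
  have hl0 : 0 < l := by positivity
  have hlt : l * u < 1 := by rw [hlu, div_lt_one (by positivity)]; linarith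
  set D : Option (Fin m) → ℝ := fun k => if k = none then -(l * u) else l * (1 - u) with hDdef
  have hD : ∀ k, -1 < D k := by
    intro k
    simp only [hDdef]
    split_ifs
    · linarith
    · have : 0 ≤ l * (1 - u) := mul_nonneg hl0.le (by linarith)
      linarith
  have hexp : ∀ x, -∑ k, D k / 2 * ⟪b k, x⟫ ^ 2 = l / 2 * (⟪e, x⟫ ^ 2 - (1 - u) * ‖x‖ ^ 2) := by
    intro x
    rw [← b.sum_sq_inner_right, Fintype.sum_option, Fintype.sum_option, hb]
    simp only [hDdef, if_true, reduceCtorEq, if_false, ← Finset.mul_sum]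
    ring
  have hInt := integrable_exp_neg_sum_sq_basis b hD
  have hval := integral_exp_neg_sum_sq_basis b hD
  have hmark := mul_meas_ge_le_integral_of_nonneg
    (Eventually.of_forall fun x => (Real.exp_pos _).le) hInt 1
  rw [hval, one_mul] at hmark
  have hsub : {x | (1 - u) * ‖x‖ ^ 2 ≤ ⟪e, x⟫ ^ 2} ⊆
      {x | 1 ≤ Real.exp (-∑ k, D k / 2 * ⟪b k, x⟫ ^ 2)} := by
    intro x hx
    simp only [Set.mem_ofPred_eq] at hx ⊢
    rw [hexp, Real.one_le_exp_iff]
    exact mul_nonneg (by positivity) (by linarith)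
  refine (measure_mono hsub).trans ?_
  rw [← ofReal_measureReal]
  refine ENNReal.ofReal_le_ofReal (hmark.trans ?_)
  rw [Fintype.prod_option]
  simp only [hDdef, if_true, reduceCtorEq, if_false, Finset.prod_const, Finset.card_univ,
    Fintype.card_fin]
  have h1 : (Real.sqrt (1 + -(l * u)))⁻¹ = Real.sqrt (m + 1) := by
    rw [hlu, ← Real.sqrt_inv]
    congr 1
    field_simp; ring
  have h2 : (Real.sqrt (1 + l * (1 - u)))⁻¹ ≤ Real.sqrt ((m + 1) / m) * Real.sqrt u := by
    rw [← Real.sqrt_inv, ← Real.sqrt_mul (by positivity)]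
    apply Real.sqrt_le_sqrt
    have : m / (m + 1) / u ≤ 1 + l * (1 - u) := by
      rw [← hl]; nlinarith
    calc (1 + l * (1 - u))⁻¹ ≤ (m / (m + 1) / u)⁻¹ := by gcongr
      _ = _ := by field_simp
  have h3 : Real.sqrt ((m + 1) / m) ^ m ≤ 2 := by
    have h4 : ((m + 1 : ℝ) / m) ^ m ≤ 4 := by
      have : (m + 1 : ℝ) / m ≤ Real.exp (1 / m) := by
        have := Real.add_one_le_exp (1 / (m : ℝ))
        have h5 : (m + 1 : ℝ) / m = 1 / m + 1 := by field_simp; ring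
        linarith
      calc ((m + 1 : ℝ) / m) ^ m ≤ Real.exp (1 / m) ^ m := by gcongr
        _ = Real.exp 1 := by rw [← Real.exp_nat_mul]; congr 1; field_simp
        _ ≤ 4 := by linarith [Real.exp_one_lt_d9]
    have h6 : (Real.sqrt ((m + 1) / m) ^ m) ^ 2 ≤ 2 ^ 2 := by
      rw [← pow_mul, mul_comm, pow_mul, Real.sq_sqrt (by positivity)]
      linarith
    exact abs_le_of_sq_le_sq' h6 (by norm_num) |>.2
  rw [h1]
  calc Real.sqrt (m + 1) * (Real.sqrt (1 + l * (1 - u)))⁻¹ ^ m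
      ≤ Real.sqrt (m + 1) * (Real.sqrt ((m + 1) / m) * Real.sqrt u) ^ m := by gcongr
    _ = Real.sqrt ((m + 1) / m) ^ m * (Real.sqrt (m + 1) * Real.sqrt u ^ m) := by
        rw [mul_pow]; ring
    _ ≤ 2 * (Real.sqrt (m + 1) * Real.sqrt u ^ m) := by gcongr
    _ = _ := by ring

/-- Almost every Gaussian vector is nonzero and not collinear to a given direction. -/
lemma ae_overlap_lt_one {m : ℕ} (hm : 1 ≤ m) {e : EuclideanSpace ℝ (Fin (m + 1))}
    (he : ‖e‖ = 1) :
    ∀ᵐ x ∂(stdGaussian (EuclideanSpace ℝ (Fin (m + 1)))),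
      x ≠ 0 ∧ |⟪e, ‖x‖⁻¹ • x⟫| < 1 := by
  have hlim : Tendsto (fun u : ℝ => ENNReal.ofReal (2 * Real.sqrt (m + 1) * Real.sqrt u ^ m))
      (nhdsWithin 0 (Set.Ioi 0)) (nhds 0) := by
    have : Continuous fun u : ℝ => ENNReal.ofReal (2 * Real.sqrt (m + 1) * Real.sqrt u ^ m) := by
      exact ENNReal.continuous_ofReal.comp (by fun_prop)
    have h := (this.tendsto 0).mono_left (nhdsWithin_le_nhds (s := Set.Ioi 0))
    rwa [Real.sqrt_zero, zero_pow (by omega), mul_zero, ENNReal.ofReal_zero] at h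
  have hnull : stdGaussian (EuclideanSpace ℝ (Fin (m + 1))) {x | ‖x‖ ^ 2 ≤ ⟪e, x⟫ ^ 2} = 0 := by
    refine le_antisymm (ge_of_tendsto hlim ?_) zero_le
    filter_upwards [Ioc_mem_nhdsGT (zero_lt_one' ℝ)] with u hu
    refine (measure_mono fun x hx => ?_).trans (stdGaussian_overlap_tail hm he hu.1 hu.2)
    simp only [Set.mem_ofPred_eq] at hx ⊢
    have : 0 ≤ u * ‖x‖ ^ 2 := mul_nonneg hu.1.le (sq_nonneg _)
    linarith
  have hae : ∀ᵐ x ∂(stdGaussian (EuclideanSpace ℝ (Fin (m + 1)))),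
      ¬ ‖x‖ ^ 2 ≤ ⟪e, x⟫ ^ 2 := by
    rw [ae_iff]; simpa using hnull
  filter_upwards [hae] with x hx
  have hx0 : x ≠ 0 := by rintro rfl; simp at hx
  refine ⟨hx0, ?_⟩
  rw [inner_smul_right, ← sq_lt_one_iff_abs_lt_one, mul_pow, inv_pow]
  have : 0 < ‖x‖ ^ 2 := by have := norm_pos_iff.mpr hx0; positivity
  rw [inv_mul_lt_iff₀ this]
  linarith

/-- Entropic cost `-log (1 - q ^ 2)` of the overlap `q` between `e` and the direction of `x`. -/
def overlapCost {N : ℕ} (e x : EuclideanSpace ℝ (Fin N)) : ℝ :=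
  -Real.log (1 - ⟪e, ‖x‖⁻¹ • x⟫ ^ 2)

lemma measurable_overlapCost {N : ℕ} (e : EuclideanSpace ℝ (Fin N)) :
    Measurable (overlapCost e) := by
  unfold overlapCost
  fun_prop

lemma measure_le_overlapCost {n : ℕ} {e : EuclideanSpace ℝ (Fin (n + 2))} (he : ‖e‖ = 1) {t : ℝ}
    (ht : 0 ≤ t) :
    stdGaussian (EuclideanSpace ℝ (Fin (n + 2))) {x | t ≤ overlapCost e x} ≤
      ENNReal.ofReal (2 * Real.sqrt (n + 2) * Real.exp (-(t * (n + 1) / 2))) := by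
  have h := stdGaussian_overlap_tail (m := n + 1) (by omega) he (Real.exp_pos (-t))
    (Real.exp_le_one_iff.mpr (by linarith))
  have hval : 2 * Real.sqrt ((n + 1 : ℕ) + 1) * Real.sqrt (Real.exp (-t)) ^ (n + 1) =
      2 * Real.sqrt (n + 2) * Real.exp (-(t * (n + 1) / 2)) := by
    rw [← Real.exp_half, ← Real.exp_nat_mul]
    push_cast
    congr 3
    · ring
    · ring
  rw [hval] at h
  refine le_trans (measure_mono_ae ?_) h
  filter_upwards [ae_overlap_lt_one (m := n + 1) (by omega) he] with x ⟨hx0, hx1⟩ hx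
  have hx : t ≤ overlapCost e x := hx
  change (1 - Real.exp (-t)) * ‖x‖ ^ 2 ≤ ⟪e, x⟫ ^ 2
  unfold overlapCost at hx
  have hq : ⟪e, ‖x‖⁻¹ • x⟫ ^ 2 < 1 := (sq_lt_one_iff_abs_lt_one _).mpr hx1
  have h1 : 1 - ⟪e, ‖x‖⁻¹ • x⟫ ^ 2 ≤ Real.exp (-t) := by
    rw [← Real.log_le_iff_le_exp (by linarith)]; linarith
  rw [inner_smul_right, mul_pow, inv_pow] at h1
  have hxp : 0 < ‖x‖ ^ 2 := by have := norm_pos_iff.mpr hx0; positivity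
  have h2 : (‖x‖ ^ 2)⁻¹ * ⟪e, x⟫ ^ 2 * ‖x‖ ^ 2 = ⟪e, x⟫ ^ 2 := by field_simp
  nlinarith

lemma lintegral_exp_overlapCost_le {n : ℕ} {e : EuclideanSpace ℝ (Fin (n + 2))} (he : ‖e‖ = 1)
    {c : ℝ} (hc : 0 < c) (hc2 : c < 1 / 2) (hn : 1 ≤ c * (n + 2)) (K : ℕ) :
    ∫⁻ x, {x | (K : ℝ) / (n + 2) ≤ overlapCost e x}.indicator
        (fun x => ENNReal.ofReal (Real.exp ((n + 2) * ((1 / 2 - c) * overlapCost e x)))) x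
        ∂(stdGaussian (EuclideanSpace ℝ (Fin (n + 2)))) ≤
      ENNReal.ofReal (2 * Real.exp 1 * Real.sqrt (n + 2) * Real.exp (-(c / 2)) ^ K /
        (1 - Real.exp (-(c / 2)))) := by
  have hN : (0 : ℝ) < n + 2 := by positivity
  set S : ℕ → Set (EuclideanSpace ℝ (Fin (n + 2))) :=
    fun k => {x | ((K + k : ℕ) : ℝ) / (n + 2) ≤ overlapCost e x} with hS
  have hSm : ∀ k, MeasurableSet (S k) := fun k =>
    measurableSet_le measurable_const (measurable_overlapCost e)
  set w : ℕ → ℝ≥0∞ := fun k => ENNReal.ofReal (Real.exp ((1 / 2 - c) * ((K + k : ℕ) + 1))) with hw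
  have hpt : ∀ x, {x | (K : ℝ) / (n + 2) ≤ overlapCost e x}.indicator
      (fun x => ENNReal.ofReal (Real.exp ((n + 2) * ((1 / 2 - c) * overlapCost e x)))) x ≤
      ∑' k, (S k).indicator (fun _ => w k) x := by
    intro x
    by_cases hx : (K : ℝ) / (n + 2) ≤ overlapCost e x
    · rw [Set.indicator_of_mem (by exact hx)]
      have hfn : 0 ≤ (n + 2) * overlapCost e x := by
        rw [div_le_iff₀ hN] at hx
        have : (0 : ℝ) ≤ K := by positivity
        linarith
      have hKle : K ≤ ⌊(n + 2) * overlapCost e x⌋₊ := by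
        rw [Nat.le_floor_iff hfn]
        rw [div_le_iff₀ hN] at hx
        linarith
      obtain ⟨k, hk⟩ := Nat.exists_eq_add_of_le hKle
      refine le_trans ?_ (ENNReal.le_tsum k)
      have hfl := Nat.floor_le hfn
      have hlt := Nat.lt_floor_add_one ((n + 2) * overlapCost e x)
      rw [hk] at hfl hlt
      have hmem : x ∈ S k := by
        change ((K + k : ℕ) : ℝ) / (n + 2) ≤ overlapCost e x
        rw [div_le_iff₀ hN]; linarith
      rw [Set.indicator_of_mem hmem]
      refine ENNReal.ofReal_le_ofReal (Real.exp_le_exp.mpr ?_)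
      have : (1 / 2 - c) * ((n + 2) * overlapCost e x) ≤ (1 / 2 - c) * ((K + k : ℕ) + 1) :=
        mul_le_mul_of_nonneg_left hlt.le (by linarith)
      linarith
    · rw [Set.indicator_of_notMem (by exact hx)]
      exact zero_le
  refine (lintegral_mono hpt).trans ?_
  rw [lintegral_tsum fun k => (measurable_const.indicator (hSm k)).aemeasurable]
  have hr0 : 0 < Real.exp (-(c / 2)) := Real.exp_pos _
  have hr1 : Real.exp (-(c / 2)) < 1 := by
    rw [← Real.exp_zero, Real.exp_lt_exp]; linarith
  have hterm : ∀ k, ∫⁻ x, (S k).indicator (fun _ => w k) x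
      ∂(stdGaussian (EuclideanSpace ℝ (Fin (n + 2)))) ≤
      ENNReal.ofReal (2 * Real.exp 1 * Real.sqrt (n + 2) * Real.exp (-(c / 2)) ^ K *
        Real.exp (-(c / 2)) ^ k) := by
    intro k
    rw [lintegral_indicator_const (hSm k)]
    refine (mul_le_mul_right (measure_le_overlapCost he (by positivity)) _).trans ?_
    rw [hw, ← ENNReal.ofReal_mul (Real.exp_pos _).le]
    refine ENNReal.ofReal_le_ofReal ?_
    rw [mul_assoc _ (Real.exp (-(c / 2)) ^ K), ← pow_add, ← Real.exp_nat_mul]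
    have : Real.exp ((1 / 2 - c) * ((K + k : ℕ) + 1)) *
        (2 * Real.sqrt (n + 2) * Real.exp (-(((K + k : ℕ) : ℝ) / (n + 2) * (n + 1) / 2))) =
        2 * Real.sqrt (n + 2) * Real.exp ((1 / 2 - c) * ((K + k : ℕ) + 1) +
          -(((K + k : ℕ) : ℝ) / (n + 2) * (n + 1) / 2)) := by
      rw [Real.exp_add]; ring
    have h2 : 2 * Real.exp 1 * Real.sqrt (n + 2) * Real.exp ((K + k : ℕ) * -(c / 2)) =
        2 * Real.sqrt (n + 2) * Real.exp (1 + (K + k : ℕ) * -(c / 2)) := by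
      rw [Real.exp_add]; ring
    rw [this, h2]
    refine mul_le_mul_of_nonneg_left (Real.exp_le_exp.mpr ?_) (by positivity)
    have hj : (0 : ℝ) ≤ (K + k : ℕ) := by positivity
    generalize ((K + k : ℕ) : ℝ) = j at *
    have h3 : j / (n + 2) * (n + 1) = j - j / (n + 2) := by field_simp; ring
    have h4 : j / (n + 2) ≤ c * j := by
      rw [div_le_iff₀ hN]; nlinarith
    rw [h3]
    linarith
  refine (ENNReal.tsum_le_tsum hterm).trans ?_
  rw [← ENNReal.ofReal_tsum_of_nonneg (fun k => by positivity)
    ((summable_geometric_of_lt_one hr0.le hr1).mul_left _), tsum_mul_left,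
    tsum_geometric_of_lt_one hr0.le hr1, ← div_eq_mul_inv]

lemma lintegral_pair_le {p : ℕ} (hp : 3 ≤ p) {s E E0 z θ : ℝ} (hs : 0 < s)
    (hsp : 3 * s < p) (hz : 0 < z) (hθ : 0 < θ) (h1 : p * z * (z + θ) = 1) (hE0 : E0 = p * z + θ)
    (hlog : Real.log (1 / (p * z ^ 2)) = θ * E0) (hlt : (p : ℝ) * (p - 1) * z ^ 2 < 1)
    (hE : E ^ 2 < (1 - 3 * (s / p)) * E0 ^ 2) {η : ℝ} (hη : 0 < η) :
    ∀ᶠ n : ℕ in atTop, ∀ e : EuclideanSpace ℝ (Fin (n + 2)), ‖e‖ = 1 →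
      ∫⁻ x, ENNReal.ofReal (overlapPref p s ⟪e, ‖x‖⁻¹ • x⟫ *
        Real.exp ((n + 2) * pairRate p s E ⟪e, ‖x‖⁻¹ • x⟫))
        ∂(stdGaussian (EuclideanSpace ℝ (Fin (n + 2)))) ≤ ENNReal.ofReal (1 + η) := by
  obtain ⟨c, hc, hc2, hrate⟩ := exists_pairRate_le_log hp hs hsp hz hθ h1 hE0 hlog hlt hE
  obtain ⟨C, hC, hcub⟩ := exists_pairRate_le_cubic hp E hs
  set P : ℝ := (p + s) * (p ^ 2 + s) / s ^ 2 with hP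
  have hP0 : 0 < P := by positivity
  set y : ℕ → ℝ := fun n => ((n : ℝ) + 2) ^ (1 / 5 : ℝ) with hy
  have hy5 : ∀ n, y n ^ 5 = n + 2 := fun n => by
    rw [hy, ← Real.rpow_natCast, ← Real.rpow_mul (by positivity)]; norm_num
  have hylim : Tendsto y atTop atTop :=
    (tendsto_rpow_atTop (by norm_num)).comp
      (tendsto_atTop_add_const_right _ _ tendsto_natCast_atTop_atTop)
  have hcont : ContinuousAt (fun v : ℝ × ℝ => overlapPref p s v.1 * Real.exp (C * v.2)) (0, 0) :=
    ContinuousAt.mul (ContinuousAt.comp (g := overlapPref p s) (f := Prod.fst)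
      (continuousAt_overlapPref_zero hp hs) continuousAt_fst) (by fun_prop)
  have hone : overlapPref p s 0 * Real.exp (C * 0) = 1 := by simp [overlapPref_zero hp hs]
  have hnear := Tendsto.eventually_lt_const (u := 1 + η / 2) (by
    change overlapPref p s 0 * Real.exp (C * 0) < 1 + η / 2
    rw [hone]; linarith) hcont
  obtain ⟨δ, hδ, hball⟩ := Metric.eventually_nhds_iff.mp hnear
  set R : ℝ := P * (2 * Real.exp 1 * Real.exp (c / 2) / (1 - Real.exp (-(c / 2)))) with hR
  have hdecay : Tendsto (fun n => R * (y n ^ 3 * Real.exp (-(c / 2) * y n))) atTop (nhds 0) := by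
    have := (Real.tendsto_pow_mul_exp_neg_atTop_nhds_zero 3).comp
      (hylim.const_mul_atTop (half_pos hc))
    have h := this.const_mul (R * (c / 2)⁻¹ ^ 3)
    rw [mul_zero] at h
    refine h.congr fun n => ?_
    simp only [Function.comp_apply, mul_pow, neg_mul]
    field_simp
  filter_upwards [hylim.eventually_ge_atTop 1, hylim.eventually_gt_atTop (1 / δ),
    hdecay.eventually_lt_const (half_pos hη),
    (tendsto_natCast_atTop_atTop (R := ℝ)).eventually_ge_atTop (1 / c)] with n hy1 hyδ hsmall hnc
    e he
  have hN : (0 : ℝ) < n + 2 := by positivity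
  have hn : 1 ≤ c * (n + 2) := by
    rw [div_le_iff₀ hc] at hnc; nlinarith
  set K := ⌊y n⌋₊ with hK
  have hKle : (K : ℝ) ≤ y n := Nat.floor_le (by linarith)
  have hKge : y n < K + 1 := Nat.lt_floor_add_one _
  have hpt : ∀ᵐ x ∂(stdGaussian (EuclideanSpace ℝ (Fin (n + 2)))),
      ENNReal.ofReal (overlapPref p s ⟪e, ‖x‖⁻¹ • x⟫ *
        Real.exp ((n + 2) * pairRate p s E ⟪e, ‖x‖⁻¹ • x⟫)) ≤
      ENNReal.ofReal (1 + η / 2) + ENNReal.ofReal P *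
        {x | (K : ℝ) / (n + 2) ≤ overlapCost e x}.indicator
        (fun x => ENNReal.ofReal (Real.exp ((n + 2) * ((1 / 2 - c) * overlapCost e x)))) x := by
    filter_upwards [ae_overlap_lt_one (m := n + 1) (by omega) he] with x ⟨hx0, hx1⟩
    by_cases hx : (K : ℝ) / (n + 2) ≤ overlapCost e x
    · rw [Set.indicator_of_mem (by exact hx)]
      refine le_trans ?_ le_add_self
      rw [← ENNReal.ofReal_mul hP0.le]
      refine ENNReal.ofReal_le_ofReal ?_
      refine mul_le_mul (overlapPref_le hp hs hx1.le) ?_ (Real.exp_pos _).le hP0.le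
      exact Real.exp_le_exp.mpr (mul_le_mul_of_nonneg_left (hrate _ hx1) hN.le)
    · refine le_trans ?_ le_self_add
      refine ENNReal.ofReal_le_ofReal ?_
      rw [not_le] at hx
      unfold overlapCost at hx
      set q := ⟪e, ‖x‖⁻¹ • x⟫ with hq
      have hq1 : q ^ 2 < 1 := (sq_lt_one_iff_abs_lt_one _).mpr hx1
      have hl := Real.log_le_sub_one_of_pos (by linarith : 0 < 1 - q ^ 2)
      have hq2 : q ^ 2 ≤ ((y n)⁻¹ ^ 2) ^ 2 := by
        have h3 : (K : ℝ) / (n + 2) ≤ y n / y n ^ 5 := by rw [hy5]; gcongr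
        have h4 : y n / y n ^ 5 = ((y n)⁻¹ ^ 2) ^ 2 := by
          have : y n ≠ 0 := by linarith
          field_simp
        linarith
      have habs : |q| ≤ (y n)⁻¹ ^ 2 := abs_le_of_sq_le_sq hq2 (by positivity)
      have hinv : (y n)⁻¹ < δ := by
        rw [inv_lt_comm₀ (by linarith) hδ, ← one_div]; exact hyδ
      have hinv1 : (y n)⁻¹ ≤ 1 := inv_le_one_of_one_le₀ hy1
      have hinv0 : 0 < (y n)⁻¹ := inv_pos.mpr (by linarith)
      have hmem := @hball (q, (y n)⁻¹) (by
        rw [Prod.dist_eq, max_lt_iff]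
        simp only [dist_zero_right, Real.norm_eq_abs]
        rw [abs_of_pos hinv0]
        exact ⟨by nlinarith, hinv⟩)
      have hmem : overlapPref p s q * Real.exp (C * (y n)⁻¹) < 1 + η / 2 := hmem
      refine le_trans ?_ hmem.le
      refine mul_le_mul_of_nonneg_left (Real.exp_le_exp.mpr ?_) (overlapPref_nonneg hp hs hx1.le)
      calc (n + 2) * pairRate p s E q ≤ (n + 2) * (C * |q| ^ 3) := by
            gcongr; exact hcub q hx1.le
        _ ≤ (n + 2) * (C * ((y n)⁻¹ ^ 2) ^ 3) := by gcongr
        _ = C * (y n)⁻¹ := by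
            rw [← hy5]
            have : y n ≠ 0 := by linarith
            field_simp
  refine (lintegral_mono_ae hpt).trans ?_
  rw [lintegral_add_left measurable_const, lintegral_const, measure_univ, mul_one,
    lintegral_const_mul' _ _ ENNReal.ofReal_ne_top]
  refine (add_le_add_right
    (mul_le_mul_right (lintegral_exp_overlapCost_le he hc hc2 hn K) _) _).trans ?_
  have hr1 : Real.exp (-(c / 2)) < 1 := by
    rw [← Real.exp_zero, Real.exp_lt_exp]; linarith
  have hr2 : 0 < 1 - Real.exp (-(c / 2)) := by linarith
  rw [← ENNReal.ofReal_mul hP0.le, ← ENNReal.ofReal_add (by positivity) (by positivity)]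
  refine ENNReal.ofReal_le_ofReal ?_
  have hsq : Real.sqrt (n + 2) ≤ y n ^ 3 := by
    refine Real.sqrt_le_iff.mpr ⟨by positivity, ?_⟩
    rw [← hy5, ← pow_mul]
    exact pow_le_pow_right₀ hy1 (by norm_num)
  have hexpK : Real.exp (-(c / 2)) ^ K ≤ Real.exp (c / 2) * Real.exp (-(c / 2) * y n) := by
    rw [← Real.exp_nat_mul, ← Real.exp_add]
    apply Real.exp_le_exp.mpr
    nlinarith
  have : P * (2 * Real.exp 1 * Real.sqrt (n + 2) * Real.exp (-(c / 2)) ^ K /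
      (1 - Real.exp (-(c / 2)))) ≤ R * (y n ^ 3 * Real.exp (-(c / 2) * y n)) := by
    calc _ ≤ P * (2 * Real.exp 1 * y n ^ 3 * (Real.exp (c / 2) * Real.exp (-(c / 2) * y n)) /
        (1 - Real.exp (-(c / 2)))) := by gcongr
      _ = _ := by rw [hR]; ring
  linarith

section WeightIrreducible

attribute [local irreducible] gradWeight

/-- Average of the weight over the random direction of a Gaussian vector. -/
def avgWeight (p : ℕ) {N : ℕ} (s c : ℝ) (g : EuclideanSpace ℝ (Fin p → Fin N)) : ℝ :=
  ∫ x, gradWeight p s c (‖x‖⁻¹ • x) g ∂(stdGaussian (EuclideanSpace ℝ (Fin N)))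

lemma measurable_gradWeight_dir {p N : ℕ} (s c : ℝ) :
    Measurable fun v : EuclideanSpace ℝ (Fin N) × EuclideanSpace ℝ (Fin p → Fin N) =>
      gradWeight p s c (‖v.1‖⁻¹ • v.1) v.2 :=
  (continuous_gradWeight s c).measurable.comp (by fun_prop :
    Measurable fun v : EuclideanSpace ℝ (Fin N) × EuclideanSpace ℝ (Fin p → Fin N) =>
      (‖v.1‖⁻¹ • v.1, v.2))

lemma measurable_gradWeight {p N : ℕ} (s c : ℝ) (e : EuclideanSpace ℝ (Fin N)) :
    Measurable fun g : EuclideanSpace ℝ (Fin p → Fin N) => gradWeight p s c e g :=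
  (continuous_gradWeight s c).measurable.comp measurable_prodMk_left

lemma stronglyMeasurable_avgWeight {p N : ℕ} (s c : ℝ) :
    StronglyMeasurable (avgWeight p s c : EuclideanSpace ℝ (Fin p → Fin N) → ℝ) :=
  ((measurable_gradWeight_dir s c).stronglyMeasurable.integral_prod_left
    (μ := stdGaussian (EuclideanSpace ℝ (Fin N))))

lemma integrable_gradWeight_dir {p N : ℕ} {s : ℝ} (hs : 0 < s) (c : ℝ)
    (g : EuclideanSpace ℝ (Fin p → Fin N)) :
    Integrable (fun x => gradWeight p s c (‖x‖⁻¹ • x) g)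
      (stdGaussian (EuclideanSpace ℝ (Fin N))) := by
  refine Integrable.of_bound ((measurable_gradWeight_dir s c).comp
    (measurable_prodMk_right (y := g))).aestronglyMeasurable 1 (Eventually.of_forall fun x => ?_)
  rw [Real.norm_of_nonneg (gradWeight_pos _ _ _ _).le]
  exact gradWeight_le_one hs _ _ _

lemma avgWeight_nonneg {p N : ℕ} (s c : ℝ) (g : EuclideanSpace ℝ (Fin p → Fin N)) :
    0 ≤ avgWeight p s c g :=
  integral_nonneg fun _ => (gradWeight_pos _ _ _ _).le

lemma avgWeight_le_one {p N : ℕ} {s : ℝ} (hs : 0 < s) (c : ℝ)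
    (g : EuclideanSpace ℝ (Fin p → Fin N)) : avgWeight p s c g ≤ 1 := by
  have := integral_mono (integrable_gradWeight_dir hs c g) (integrable_const 1)
    fun x => gradWeight_le_one hs c (‖x‖⁻¹ • x) g
  simpa [avgWeight] using this

lemma norm_dir {N : ℕ} {x : EuclideanSpace ℝ (Fin N)} (hx : x ≠ 0) : ‖‖x‖⁻¹ • x‖ = 1 := by
  rw [norm_smul, norm_inv, norm_norm, inv_mul_cancel₀ (norm_ne_zero_iff.mpr hx)]

lemma ae_ne_zero {n : ℕ} : ∀ᵐ x ∂(stdGaussian (EuclideanSpace ℝ (Fin (n + 2)))), x ≠ 0 := by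
  filter_upwards [ae_overlap_lt_one (m := n + 1) (by omega)
    (e := EuclideanSpace.single 0 1) (by simp)] with x hx using hx.1

lemma integral_avgWeight {p n : ℕ} {s : ℝ} (hs : 0 < s) (c : ℝ) :
    ∫ g, avgWeight p s c g ∂(stdGaussian (EuclideanSpace ℝ (Fin p → Fin (n + 2)))) =
      onePoint p (n + 1) s c := by
  unfold avgWeight
  rw [integral_integral_swap]
  · rw [integral_congr_ae (g := fun _ => onePoint p (n + 1) s c)]
    · simp
    · filter_upwards [ae_ne_zero] with x hx
      exact integral_gradWeight c hs (norm_dir hx)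
  · refine Integrable.of_bound ((measurable_gradWeight_dir s c).comp
      measurable_swap).aestronglyMeasurable 1 (Eventually.of_forall fun x => ?_)
    change ‖gradWeight p s c (‖x.2‖⁻¹ • x.2) x.1‖ ≤ 1
    rw [Real.norm_of_nonneg (gradWeight_pos _ _ _ _).le]
    exact gradWeight_le_one hs _ _ _

lemma lintegral_sq_lintegral {X K : Type*} [MeasurableSpace X] [MeasurableSpace K]
    (γ : Measure X) (μ : Measure K) [SFinite γ] [SFinite μ] {W : X × K → ℝ≥0∞}
    (hW : Measurable W) :
    ∫⁻ g, (∫⁻ x, W (x, g) ∂γ) ^ 2 ∂μ = ∫⁻ x, ∫⁻ y, ∫⁻ g, W (x, g) * W (y, g) ∂μ ∂γ ∂γ := by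
  have hsq : ∀ g, (∫⁻ x, W (x, g) ∂γ) ^ 2 = ∫⁻ x, ∫⁻ y, W (x, g) * W (y, g) ∂γ ∂γ := by
    intro g
    have hg : Measurable fun x => W (x, g) := hW.comp (measurable_prodMk_right (y := g))
    simp_rw [lintegral_const_mul _ hg]
    rw [lintegral_mul_const _ hg, pow_two]
  simp_rw [hsq]
  have hm3 : Measurable fun v : K × X × X => W (v.2.1, v.1) * W (v.2.2, v.1) :=
    (hW.comp (measurable_snd.fst.prodMk measurable_fst)).mul
      (hW.comp (measurable_snd.snd.prodMk measurable_fst))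
  rw [lintegral_lintegral_swap]
  · rw [lintegral_congr fun x => lintegral_lintegral_swap _]
    intro x
    exact (hm3.comp (measurable_fst.prodMk
      (measurable_const.prodMk measurable_snd))).aemeasurable
  · exact (Measurable.lintegral_prod_right' (hm3.comp
      (measurable_fst.fst.prodMk (measurable_fst.snd.prodMk measurable_snd)))).aemeasurable

lemma lintegral_gradWeight_mul {p n : ℕ} (hp : 3 ≤ p) {s E : ℝ} (hs : 0 < s)
    {e f : EuclideanSpace ℝ (Fin (n + 2))} (he : ‖e‖ = 1) (hf : ‖f‖ = 1) (hq : |⟪e, f⟫| < 1) :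
    ∫⁻ g, ENNReal.ofReal (gradWeight p s (p * E * Real.sqrt (n + 2)) e g) *
        ENNReal.ofReal (gradWeight p s (p * E * Real.sqrt (n + 2)) f g)
        ∂(stdGaussian (EuclideanSpace ℝ (Fin p → Fin (n + 2)))) =
      ENNReal.ofReal (onePoint p (n + 1) s (p * E * Real.sqrt (n + 2)) ^ 2 *
        (overlapPref p s ⟪e, f⟫ * Real.exp ((n + 2) * pairRate p s E ⟪e, f⟫))) := by
  rw [← twoPoint_eq hp E hs hq.le, ← integral_gradWeight_mul_gradWeight hp _ hs he hf hq,
    ofReal_integral_eq_lintegral_ofReal]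
  · refine lintegral_congr fun g => ?_
    rw [ENNReal.ofReal_mul (gradWeight_pos _ _ _ _).le]
  · refine Integrable.of_bound (Measurable.aestronglyMeasurable ?_) 1
      (Eventually.of_forall fun g => ?_)
    · exact (measurable_gradWeight _ _ _).mul (measurable_gradWeight _ _ _)
    · rw [Real.norm_of_nonneg (mul_pos (gradWeight_pos _ _ _ _) (gradWeight_pos _ _ _ _)).le]
      exact mul_le_one₀ (gradWeight_le_one hs _ _ _) (gradWeight_pos _ _ _ _).le
        (gradWeight_le_one hs _ _ _)
  · exact Eventually.of_forall fun g =>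
      (mul_pos (gradWeight_pos _ _ _ _) (gradWeight_pos _ _ _ _)).le

lemma lintegral_avgWeight_sq_le {p n : ℕ} (hp : 3 ≤ p) {s E B : ℝ} (hs : 0 < s)
    (hB : ∀ e : EuclideanSpace ℝ (Fin (n + 2)), ‖e‖ = 1 →
      ∫⁻ x, ENNReal.ofReal (overlapPref p s ⟪e, ‖x‖⁻¹ • x⟫ *
        Real.exp ((n + 2) * pairRate p s E ⟪e, ‖x‖⁻¹ • x⟫))
        ∂(stdGaussian (EuclideanSpace ℝ (Fin (n + 2)))) ≤ ENNReal.ofReal B) :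
    ∫⁻ g, ENNReal.ofReal (avgWeight p s (p * E * Real.sqrt (n + 2)) g ^ 2)
      ∂(stdGaussian (EuclideanSpace ℝ (Fin p → Fin (n + 2)))) ≤
      ENNReal.ofReal (onePoint p (n + 1) s (p * E * Real.sqrt (n + 2)) ^ 2) * ENNReal.ofReal B := by
  have hsq : ∀ g : EuclideanSpace ℝ (Fin p → Fin (n + 2)),
      ENNReal.ofReal (avgWeight p s (p * E * Real.sqrt (n + 2)) g ^ 2) =
      (∫⁻ x, ENNReal.ofReal (gradWeight p s (p * E * Real.sqrt (n + 2)) (‖x‖⁻¹ • x) g)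
        ∂(stdGaussian (EuclideanSpace ℝ (Fin (n + 2))))) ^ 2 := by
    intro g
    rw [ENNReal.ofReal_pow (avgWeight_nonneg s _ g), avgWeight,
      ofReal_integral_eq_lintegral_ofReal (integrable_gradWeight_dir hs _ g)
        (Eventually.of_forall fun _ => (gradWeight_pos _ _ _ _).le)]
  simp_rw [hsq]
  rw [lintegral_sq_lintegral _ _ (measurable_gradWeight_dir (p := p) (N := n + 2) s
    (p * E * Real.sqrt (n + 2))).ennreal_ofReal]
  have hpt : ∀ᵐ x ∂(stdGaussian (EuclideanSpace ℝ (Fin (n + 2)))),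
      ∫⁻ y, ∫⁻ g, ENNReal.ofReal (gradWeight p s (p * E * Real.sqrt (n + 2)) (‖x‖⁻¹ • x) g) *
        ENNReal.ofReal (gradWeight p s (p * E * Real.sqrt (n + 2)) (‖y‖⁻¹ • y) g)
          ∂(stdGaussian (EuclideanSpace ℝ (Fin p → Fin (n + 2))))
          ∂(stdGaussian (EuclideanSpace ℝ (Fin (n + 2)))) ≤
      ENNReal.ofReal (onePoint p (n + 1) s (p * E * Real.sqrt (n + 2)) ^ 2) *
        ENNReal.ofReal B := by
    filter_upwards [ae_ne_zero] with x hx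
    have hx1 := norm_dir hx
    refine le_trans ?_ (mul_le_mul_right (hB _ hx1) _)
    rw [← lintegral_const_mul' _ _ ENNReal.ofReal_ne_top]
    refine lintegral_mono_ae ?_
    filter_upwards [ae_overlap_lt_one (m := n + 1) (by omega) hx1] with y ⟨hy, hq⟩
    rw [← ENNReal.ofReal_mul (sq_nonneg _), lintegral_gradWeight_mul hp hs hx1 (norm_dir hy) hq]
  refine (lintegral_mono_ae hpt).trans ?_
  rw [lintegral_const, measure_univ, mul_one]

lemma onePoint_pos {p m : ℕ} {s : ℝ} (hs : 0 < s) (c : ℝ) : 0 < onePoint p m s c := by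
  unfold onePoint
  positivity

/-- The averaged weight is at least half its expectation with high probability. -/
lemma measure_avgWeight_lt_le {p n : ℕ} (hp : 3 ≤ p) {s E η : ℝ} (hs : 0 < s) (hη : 0 < η)
    (hB : ∀ e : EuclideanSpace ℝ (Fin (n + 2)), ‖e‖ = 1 →
      ∫⁻ x, ENNReal.ofReal (overlapPref p s ⟪e, ‖x‖⁻¹ • x⟫ *
        Real.exp ((n + 2) * pairRate p s E ⟪e, ‖x‖⁻¹ • x⟫))
        ∂(stdGaussian (EuclideanSpace ℝ (Fin (n + 2)))) ≤ ENNReal.ofReal (1 + η)) :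
    (stdGaussian (EuclideanSpace ℝ (Fin p → Fin (n + 2)))).real
      {g | avgWeight p s (p * E * Real.sqrt (n + 2)) g <
        onePoint p (n + 1) s (p * E * Real.sqrt (n + 2)) / 2} ≤ 4 * η := by
  have h2 := lintegral_avgWeight_sq_le hp hs hB
  set c := p * E * Real.sqrt (n + 2) with hc
  set m := onePoint p (n + 1) s c with hm
  have hm0 : 0 < m := onePoint_pos hs c
  set γ := stdGaussian (EuclideanSpace ℝ (Fin p → Fin (n + 2))) with hγ
  set Y : EuclideanSpace ℝ (Fin p → Fin (n + 2)) → ℝ := avgWeight p s c with hY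
  have hYm : StronglyMeasurable Y := stronglyMeasurable_avgWeight s c
  have hY0 : ∀ g, 0 ≤ Y g := avgWeight_nonneg s c
  have hY1 : ∀ g, Y g ≤ 1 := avgWeight_le_one hs c
  have hYi : Integrable Y γ := Integrable.of_bound hYm.aestronglyMeasurable 1
    (Eventually.of_forall fun g => by rw [Real.norm_of_nonneg (hY0 g)]; exact hY1 g)
  have hYi2 : Integrable (fun g => Y g ^ 2) γ :=
    Integrable.of_bound (hYm.pow 2).aestronglyMeasurable 1
    (Eventually.of_forall fun g => by
      rw [Real.norm_of_nonneg (sq_nonneg _)]; exact pow_le_one₀ (hY0 g) (hY1 g))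
  have hE1 : ∫ g, Y g ∂γ = m := integral_avgWeight hs c
  have hE2 : ∫ g, Y g ^ 2 ∂γ ≤ m ^ 2 * (1 + η) := by
    rw [← ofReal_integral_eq_lintegral_ofReal hYi2 (Eventually.of_forall fun g => sq_nonneg _),
      ← ENNReal.ofReal_mul (sq_nonneg _)] at h2
    exact (ENNReal.ofReal_le_ofReal_iff (by positivity)).mp h2
  have hInt : Integrable (fun g => (Y g - m) ^ 2) γ := by
    have : (fun g => (Y g - m) ^ 2) = fun g => Y g ^ 2 - 2 * m * Y g + m ^ 2 := by
      ext g; ring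
    rw [this]
    exact (hYi2.sub (hYi.const_mul _)).add (integrable_const _)
  have hvar : ∫ g, (Y g - m) ^ 2 ∂γ ≤ m ^ 2 * η := by
    have : (fun g => (Y g - m) ^ 2) = fun g => Y g ^ 2 - 2 * m * Y g + m ^ 2 := by
      ext g; ring
    have hi : Integrable (fun g => Y g ^ 2 - 2 * m * Y g) γ := hYi2.sub (hYi.const_mul _)
    rw [this, integral_add hi (integrable_const _),
      integral_sub hYi2 (hYi.const_mul _), integral_const_mul, hE1]
    simp only [integral_const, probReal_univ, one_smul]
    nlinarith
  have hmark := mul_meas_ge_le_integral_of_nonneg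
    (Eventually.of_forall fun g => sq_nonneg (Y g - m)) hInt (m ^ 2 / 4)
  have hsub : {g | Y g < m / 2} ⊆ {g | m ^ 2 / 4 ≤ (Y g - m) ^ 2} := by
    intro g hg
    have hg : Y g < m / 2 := hg
    change m ^ 2 / 4 ≤ (Y g - m) ^ 2
    nlinarith
  have hle : γ.real {g | Y g < m / 2} ≤ γ.real {g | m ^ 2 / 4 ≤ (Y g - m) ^ 2} :=
    measureReal_mono hsub
  have hm2 : 0 < m ^ 2 := by positivity
  have h5 : m ^ 2 * (γ.real {g | m ^ 2 / 4 ≤ (Y g - m) ^ 2}) ≤ m ^ 2 * (4 * η) := by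
    linarith
  exact hle.trans (le_of_mul_le_mul_left h5 hm2)

end WeightIrreducible

lemma norm_tensorPow {p N : ℕ} {e : EuclideanSpace ℝ (Fin N)} (he : ‖e‖ = 1) :
    ‖tensorPow p e‖ = 1 := by
  have h : ‖tensorPow p e‖ ^ 2 = 1 := by
    rw [← real_inner_self_eq_norm_sq, inner_tensorPow, real_inner_self_eq_norm_sq, he]
    simp
  exact (pow_eq_one_iff_of_nonneg (norm_nonneg _) two_ne_zero).mp h

lemma abs_inner_tensorPow_le {p N : ℕ} {e : EuclideanSpace ℝ (Fin N)} (he : ‖e‖ = 1)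
    (g : EuclideanSpace ℝ (Fin p → Fin N)) : |⟪tensorPow p e, g⟫| ≤ ‖g‖ := by
  have := abs_real_inner_le_norm (tensorPow p e) g
  rwa [norm_tensorPow he, one_mul] at this

/-- The injective norm (without absolute value) of the tensor `g`. -/
def supTensor (p : ℕ) {N : ℕ} (g : EuclideanSpace ℝ (Fin p → Fin N)) : ℝ :=
  ⨆ e : Metric.sphere (0 : EuclideanSpace ℝ (Fin N)) 1, ⟪tensorPow p e.1, g⟫

lemma bddAbove_tensorPow {p N : ℕ} (g : EuclideanSpace ℝ (Fin p → Fin N)) :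
    BddAbove (Set.range fun e : Metric.sphere (0 : EuclideanSpace ℝ (Fin N)) 1 =>
      ⟪tensorPow p e.1, g⟫) := by
  refine ⟨‖g‖, ?_⟩
  rintro _ ⟨e, rfl⟩
  exact (le_abs_self _).trans (abs_inner_tensorPow_le (by simp) g)

lemma le_supTensor {p N : ℕ} {e : EuclideanSpace ℝ (Fin N)} (he : ‖e‖ = 1)
    (g : EuclideanSpace ℝ (Fin p → Fin N)) : ⟪tensorPow p e, g⟫ ≤ supTensor p g :=
  le_ciSup (bddAbove_tensorPow g) (⟨e, by simpa using he⟩ : Metric.sphere _ _)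

lemma nonempty_sphere {N : ℕ} (hN : 1 ≤ N) :
    Nonempty (Metric.sphere (0 : EuclideanSpace ℝ (Fin N)) 1) :=
  ⟨⟨EuclideanSpace.single ⟨0, hN⟩ 1, by simp⟩⟩

lemma supTensor_le {p N : ℕ} (hN : 1 ≤ N) {g : EuclideanSpace ℝ (Fin p → Fin N)} {a : ℝ}
    (h : ∀ e : EuclideanSpace ℝ (Fin N), ‖e‖ = 1 → ⟪tensorPow p e, g⟫ ≤ a) :
    supTensor p g ≤ a := by
  have := nonempty_sphere hN
  exact ciSup_le fun e => h e.1 (by simp)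

lemma abs_supTensor_le {p N : ℕ} (hN : 1 ≤ N) (g : EuclideanSpace ℝ (Fin p → Fin N)) :
    |supTensor p g| ≤ ‖g‖ := by
  obtain ⟨e, he⟩ := nonempty_sphere hN
  have he : ‖e‖ = 1 := by simpa using he
  refine abs_le.mpr ⟨?_, supTensor_le hN fun f hf =>
    (le_abs_self _).trans (abs_inner_tensorPow_le hf g)⟩
  exact (abs_le.mp (abs_inner_tensorPow_le he g)).1.trans (le_supTensor he g)

lemma continuous_supTensor {p N : ℕ} (hN : 1 ≤ N) :
    Continuous (supTensor p : EuclideanSpace ℝ (Fin p → Fin N) → ℝ) := by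
  refine (LipschitzWith.of_le_add fun g g' => supTensor_le hN fun e he => ?_).continuous
  have h1 := le_supTensor he g'
  have h2 := (le_abs_self _).trans (abs_inner_tensorPow_le he (g - g'))
  rw [inner_sub_right] at h2
  rw [dist_eq_norm]
  linarith

lemma integrable_supTensor {p N : ℕ} (hN : 1 ≤ N) :
    Integrable (supTensor p) (stdGaussian (EuclideanSpace ℝ (Fin p → Fin N))) :=
  IsGaussian.integrable_id.mono (continuous_supTensor hN).aestronglyMeasurable
    (Eventually.of_forall fun g => by simpa using abs_supTensor_le hN g)

lemma integral_inner_sq_stdGaussian {V : Type*} [NormedAddCommGroup V]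
    [InnerProductSpace ℝ V] [FiniteDimensional ℝ V] [MeasurableSpace V] [BorelSpace V] (u : V) :
    ∫ x, ⟪u, x⟫ ^ 2 ∂(stdGaussian V) = ‖u‖ ^ 2 := by
  have h := variance_dual_stdGaussian (innerSL ℝ u)
  rw [variance_of_integral_eq_zero (by fun_prop) (integral_strongDual_stdGaussian _)] at h
  simpa using h

lemma integrable_inner_sq_stdGaussian {V : Type*} [NormedAddCommGroup V]
    [InnerProductSpace ℝ V] [FiniteDimensional ℝ V] [MeasurableSpace V] [BorelSpace V] (u : V) :
    Integrable (fun x => ⟪u, x⟫ ^ 2) (stdGaussian V) :=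
  (IsGaussian.memLp_dual (stdGaussian V) (innerSL ℝ u) 2 (by simp)).integrable_sq

lemma integrable_abs_inner_stdGaussian {V : Type*} [NormedAddCommGroup V]
    [InnerProductSpace ℝ V] [FiniteDimensional ℝ V] [MeasurableSpace V] [BorelSpace V] (u : V) :
    Integrable (fun x => |⟪u, x⟫|) (stdGaussian V) :=
  ((IsGaussian.memLp_dual (stdGaussian V) (innerSL ℝ u) 1 (by simp)).integrable le_rfl).abs

lemma integral_abs_inner_stdGaussian_le {V : Type*} [NormedAddCommGroup V]
    [InnerProductSpace ℝ V] [FiniteDimensional ℝ V] [MeasurableSpace V] [BorelSpace V] {u : V}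
    (hu : ‖u‖ = 1) : ∫ x, |⟪u, x⟫| ∂(stdGaussian V) ≤ 1 := by
  have h : ∫ x, |⟪u, x⟫| ∂(stdGaussian V) ≤ ∫ x, (1 / 2 + 1 / 2 * ⟪u, x⟫ ^ 2) ∂(stdGaussian V) := by
    refine integral_mono (integrable_abs_inner_stdGaussian u)
      ((integrable_const _).add ((integrable_inner_sq_stdGaussian u).const_mul _)) fun x => ?_
    have := sq_nonneg (|⟪u, x⟫| - 1)
    have h2 := sq_abs ⟪u, x⟫
    simp only
    nlinarith
  rw [integral_add (integrable_const _) ((integrable_inner_sq_stdGaussian u).const_mul _),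
    integral_const_mul, integral_inner_sq_stdGaussian, hu] at h
  simp only [integral_const, probReal_univ, one_smul] at h
  linarith

lemma exists_gradWeight_ge {p n : ℕ} {s : ℝ} (hs : 0 < s) (c : ℝ)
    (g : EuclideanSpace ℝ (Fin p → Fin (n + 2))) :
    ∃ e : EuclideanSpace ℝ (Fin (n + 2)), ‖e‖ = 1 ∧ avgWeight p s c g ≤ gradWeight p s c e g := by
  obtain ⟨x, hx, h⟩ := exists_notMem_null_integral_le (integrable_gradWeight_dir hs c g)
    (ae_iff.mp (ae_ne_zero (n := n)))
  exact ⟨‖x‖⁻¹ • x, norm_dir (by simpa using hx), h⟩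

lemma sq_le_of_le_gradWeight {p N : ℕ} {s a : ℝ} (hs : 0 < s) (c : ℝ) (ha : 0 < a)
    {e : EuclideanSpace ℝ (Fin N)} (he : ‖e‖ = 1) {g : EuclideanSpace ℝ (Fin p → Fin N)}
    (h : a ≤ gradWeight p s c e g) :
    (p * ⟪tensorPow p e, g⟫ - c) ^ 2 ≤ 2 * s * -Real.log a := by
  have h1 := Real.log_le_log ha h
  rw [gradWeight, Real.log_exp] at h1
  have h2 := abs_real_inner_le_norm e ((tensorDeriv p e).adjoint g - c • e)
  rw [inner_adjoint_sub, tensorDeriv_self, real_inner_self_eq_norm_sq, he, inner_smul_left] at h2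
  simp only [conj_trivial, one_pow, mul_one, one_mul] at h2
  have h3 := pow_le_pow_left₀ (abs_nonneg _) h2 2
  rw [sq_abs] at h3
  refine h3.trans ?_
  have h4 : ‖(tensorDeriv p e).adjoint g - c • e‖ ^ 2 / s ≤ 2 * -Real.log a := by linarith
  rw [div_le_iff₀ hs] at h4
  linarith

/-- Upper bound for the exponential rate at which the expected weight decays. -/
def decayRate (p : ℕ) (s E : ℝ) : ℝ :=
  1 + Real.log (1 + p / s) / 2 + Real.log (1 + p ^ 2 / s) / 2 + E ^ 2 / 2

lemma neg_log_onePoint_le {p n : ℕ} {s : ℝ} (hs : 0 < s) (E : ℝ) :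
    -Real.log (onePoint p (n + 1) s (p * E * Real.sqrt (n + 2)) / 2) ≤
      (n + 2) * decayRate p s E := by
  have h1 : 0 ≤ Real.log (1 + p / s) := Real.log_nonneg (by
    have : (0:ℝ) ≤ p / s := by positivity
    linarith)
  have h2 : 0 ≤ Real.log (1 + (p:ℝ) ^ 2 / s) := Real.log_nonneg (by
    have : (0:ℝ) ≤ (p:ℝ) ^ 2 / s := by positivity
    linarith)
  have h3 : (p * E * Real.sqrt (n + 2)) ^ 2 / (s + p ^ 2) ≤ (n + 2) * E ^ 2 := by
    rw [mul_pow, Real.sq_sqrt (by positivity), div_le_iff₀ (by positivity)]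
    have : 0 ≤ (n + 2) * E ^ 2 * s := by positivity
    nlinarith
  have hl2 : Real.log 2 ≤ 1 := by linarith [Real.log_two_lt_d9]
  rw [onePoint, Real.log_div (by positivity) two_ne_zero, Real.log_mul (by positivity) (by positivity),
    Real.log_mul (by positivity) (by positivity), Real.log_exp, Real.log_pow, Real.log_inv,
    Real.log_inv, Real.log_sqrt (by positivity), Real.log_sqrt (by positivity), decayRate]
  push_cast
  have hn : (0 : ℝ) ≤ n := by positivity
  nlinarith [mul_nonneg hn h1, mul_nonneg hn h2]

lemma supTensor_ge_of_avgWeight {p n : ℕ} (hp : 3 ≤ p) {s E : ℝ} (hs : 0 < s)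
    {g : EuclideanSpace ℝ (Fin p → Fin (n + 2))}
    (h : onePoint p (n + 1) s (p * E * Real.sqrt (n + 2)) / 2 ≤
      avgWeight p s (p * E * Real.sqrt (n + 2)) g) :
    Real.sqrt (n + 2) * (E - Real.sqrt (2 * s * decayRate p s E) / p) ≤ supTensor p g := by
  have hp0 : (0 : ℝ) < p := by exact_mod_cast (by omega : 0 < p)
  obtain ⟨e, he, hle⟩ := exists_gradWeight_ge hs (p * E * Real.sqrt (n + 2)) g
  refine le_trans ?_ (le_supTensor he g)
  have h1 := sq_le_of_le_gradWeight hs _ (half_pos (onePoint_pos hs _)) he (h.trans hle)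
  have h2 : (p * ⟪tensorPow p e, g⟫ - p * E * Real.sqrt (n + 2)) ^ 2 ≤
      (n + 2) * (2 * s * decayRate p s E) := by
    refine h1.trans ?_
    have := mul_le_mul_of_nonneg_left (neg_log_onePoint_le (p := p) (n := n) hs E)
      (by positivity : 0 ≤ 2 * s)
    linarith
  have h3 := Real.abs_le_sqrt h2
  rw [Real.sqrt_mul (by positivity)] at h3
  have h4 := (abs_le.mp h3).1
  rw [mul_sub, ← sub_nonneg]
  have h5 : ⟪tensorPow p e, g⟫ - (Real.sqrt (n + 2) * E -
      Real.sqrt (n + 2) * (Real.sqrt (2 * s * decayRate p s E) / p)) =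
      (p * ⟪tensorPow p e, g⟫ - p * E * Real.sqrt (n + 2) +
        Real.sqrt (n + 2) * Real.sqrt (2 * s * decayRate p s E)) / p := by
    field_simp
    ring
  rw [h5]
  exact div_nonneg (by linarith) hp0.le

lemma integral_supTensor_ge {p n : ℕ} (hp : 3 ≤ p) {s E η : ℝ} (hs : 0 < s) (hη : 0 < η)
    (hE : 0 ≤ E - Real.sqrt (2 * s * decayRate p s E) / p)
    (hB : ∀ e : EuclideanSpace ℝ (Fin (n + 2)), ‖e‖ = 1 →
      ∫⁻ x, ENNReal.ofReal (overlapPref p s ⟪e, ‖x‖⁻¹ • x⟫ *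
        Real.exp ((n + 2) * pairRate p s E ⟪e, ‖x‖⁻¹ • x⟫))
        ∂(stdGaussian (EuclideanSpace ℝ (Fin (n + 2)))) ≤ ENNReal.ofReal (1 + η)) :
    Real.sqrt (n + 2) * (E - Real.sqrt (2 * s * decayRate p s E) / p) * (1 - 4 * η) - 1 ≤
      ∫ g, supTensor p g ∂(stdGaussian (EuclideanSpace ℝ (Fin p → Fin (n + 2)))) := by
  have hmeas := measure_avgWeight_lt_le hp hs hη hB
  set a := Real.sqrt (n + 2) * (E - Real.sqrt (2 * s * decayRate p s E) / p) with ha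
  have ha0 : 0 ≤ a := by positivity
  set A : Set (EuclideanSpace ℝ (Fin p → Fin (n + 2))) :=
    {g | avgWeight p s (p * E * Real.sqrt (n + 2)) g <
        onePoint p (n + 1) s (p * E * Real.sqrt (n + 2)) / 2} with hA
  have hAm : MeasurableSet A :=
    measurableSet_lt (stronglyMeasurable_avgWeight _ _).measurable measurable_const
  obtain ⟨e, he⟩ := nonempty_sphere (N := n + 2) (by omega)
  have he : ‖e‖ = 1 := by simpa using he
  have hi1 : Integrable (fun g => Aᶜ.indicator (fun _ => a) g)
      (stdGaussian (EuclideanSpace ℝ (Fin p → Fin (n + 2)))) :=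
    (integrable_const a).indicator hAm.compl
  have hmono : ∫ g, (Aᶜ.indicator (fun _ => a) g - |⟪tensorPow p e, g⟫|)
      ∂(stdGaussian (EuclideanSpace ℝ (Fin p → Fin (n + 2)))) ≤
      ∫ g, supTensor p g ∂(stdGaussian (EuclideanSpace ℝ (Fin p → Fin (n + 2)))) := by
    refine integral_mono (hi1.sub (integrable_abs_inner_stdGaussian _))
      (integrable_supTensor (by omega)) fun g => ?_
    by_cases hg : g ∈ A
    · have h1 := neg_abs_le ⟪tensorPow p e, g⟫
      have h2 := le_supTensor he g
      simp only [Set.indicator_of_notMem (Set.notMem_compl_iff.mpr hg)]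
      linarith
    · have h1 := abs_nonneg ⟪tensorPow p e, g⟫
      have h2 := supTensor_ge_of_avgWeight hp hs (not_lt.mp hg)
      simp only [Set.indicator_of_mem (Set.mem_compl hg)]
      linarith
  rw [integral_sub hi1 (integrable_abs_inner_stdGaussian _), integral_indicator_const _ hAm.compl,
    probReal_compl_eq_one_sub hAm, smul_eq_mul] at hmono
  have h3 := integral_abs_inner_stdGaussian_le (norm_tensorPow (p := p) he)
  nlinarith [mul_le_mul_of_nonneg_left hmeas ha0]

lemma tendsto_decayRate {p : ℕ} (hp : 3 ≤ p) (E : ℝ) :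
    Tendsto (fun s => Real.sqrt (2 * s * decayRate p s E) / p) (nhdsWithin 0 (Set.Ioi 0))
      (nhds 0) := by
  have hp0 : (0 : ℝ) < p := by exact_mod_cast (by omega : 0 < p)
  have hc : ContinuousAt (fun s : ℝ => Real.sqrt (2 * s + (s * Real.log (s + p) - s * Real.log s) +
      (s * Real.log (s + p ^ 2) - s * Real.log s) + s * E ^ 2) / p) 0 := by
    have h1 := Real.continuous_mul_log.continuousAt (x := 0)
    have h2 : ContinuousAt (fun s : ℝ => Real.log (s + p)) 0 :=
      ContinuousAt.log (by fun_prop) (by simp; omega)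
    have h3 : ContinuousAt (fun s : ℝ => Real.log (s + p ^ 2)) 0 :=
      ContinuousAt.log (by fun_prop) (by simp; omega)
    fun_prop
  have ht := hc.tendsto.mono_left (nhdsWithin_le_nhds (s := Set.Ioi 0))
  simp only [zero_mul, mul_zero, sub_zero, add_zero, Real.sqrt_zero, zero_div] at ht
  refine ht.congr' ?_
  filter_upwards [self_mem_nhdsWithin] with s hs
  have hs : 0 < s := hs
  have e1 : 1 + (p : ℝ) / s = (s + p) / s := by field_simp
  have e2 : 1 + (p : ℝ) ^ 2 / s = (s + p ^ 2) / s := by field_simp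
  rw [decayRate, e1, e2, Real.log_div (by positivity) hs.ne', Real.log_div (by positivity) hs.ne']
  congr 2
  ring

/-- Asymptotic lower bound for the expected injective norm of a Gaussian tensor. -/
lemma eventually_le_integral_supTensor {p : ℕ} (hp : 3 ≤ p) {E0 z θ : ℝ} (hz : 0 < z) (hθ : 0 < θ)
    (h1 : p * z * (z + θ) = 1) (hE0 : E0 = p * z + θ)
    (hlog : Real.log (1 / (p * z ^ 2)) = θ * E0) (hlt : p * (p - 1) * z ^ 2 < 1)
    {ε : ℝ} (hε : 0 < ε) :
    ∀ᶠ n : ℕ in atTop, E0 - ε ≤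
      (∫ g, supTensor p g ∂(stdGaussian (EuclideanSpace ℝ (Fin p → Fin (n + 2))))) /
        Real.sqrt (n + 2) := by
  have hp0 : (0 : ℝ) < p := by exact_mod_cast (by omega : 0 < p)
  have hE0p : 0 < E0 := by rw [hE0]; positivity
  obtain ⟨δ, hδ0, hδε, hδE⟩ : ∃ δ, 0 < δ ∧ δ ≤ ε ∧ δ ≤ E0 :=
    ⟨min ε E0, lt_min hε hE0p, min_le_left _ _, min_le_right _ _⟩
  set E := E0 - δ / 3 with hE
  have hE2 : E ^ 2 < E0 ^ 2 := by rw [hE]; nlinarith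
  have hev1 : ∀ᶠ s : ℝ in nhdsWithin 0 (Set.Ioi 0), 3 * s < p := by
    have : ContinuousAt (fun s : ℝ => 3 * s) 0 := by fun_prop
    exact (this.eventually_lt_const (by simpa using hp0)).filter_mono nhdsWithin_le_nhds
  have hev2 : ∀ᶠ s : ℝ in nhdsWithin 0 (Set.Ioi 0), E ^ 2 < (1 - 3 * (s / p)) * E0 ^ 2 := by
    have : ContinuousAt (fun s : ℝ => (1 - 3 * (s / p)) * E0 ^ 2) 0 := by fun_prop
    exact (this.eventually_const_lt (by simpa using hE2)).filter_mono nhdsWithin_le_nhds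
  have hev3 := (tendsto_decayRate hp E).eventually_lt_const (show 0 < δ / 3 by positivity)
  obtain ⟨s, hs, hs1, hs2, hs3⟩ :=
    ((eventually_mem_nhdsWithin (a := (0 : ℝ)) (s := Set.Ioi 0)).and
      (hev1.and (hev2.and hev3))).exists
  have hs : 0 < s := hs
  set η := δ / (48 * E0) with hη
  have hη0 : 0 < η := by positivity
  have hηE : 4 * (η * E0) = δ / 12 := by rw [hη]; field_simp; norm_num
  have hroot : Tendsto (fun n : ℕ => Real.sqrt ((n : ℝ) + 2)) atTop atTop :=
    Real.tendsto_sqrt_atTop.comp (tendsto_atTop_add_const_right _ _ tendsto_natCast_atTop_atTop)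
  filter_upwards [lintegral_pair_le hp hs hs1 hz hθ h1 hE0 hlog hlt hs2 hη0,
    hroot.eventually_ge_atTop (4 / δ)] with n hn hn2
  have hr0 : 0 < Real.sqrt ((n : ℝ) + 2) := Real.sqrt_pos.mpr (by positivity)
  have h := integral_supTensor_ge hp hs hη0 (by rw [hE]; linarith) hn
  rw [le_div_iff₀ hr0]
  refine le_trans ?_ h
  set r := Real.sqrt ((n : ℝ) + 2)
  set t := Real.sqrt (2 * s * decayRate p s E) / p
  have ht0 : 0 ≤ t := by positivity
  have hrδ : 4 ≤ r * δ := by rwa [div_le_iff₀ hδ0] at hn2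
  have h6 : E0 - δ + δ / 4 ≤ (E - t) * (1 - 4 * η) := by
    have : 0 ≤ η * (δ / 3 + t) := by positivity
    have e : (E - t) * (1 - 4 * η) = E0 - δ / 3 - t - 4 * (η * E0) + 4 * (η * (δ / 3 + t)) := by
      rw [hE]; ring
    rw [e, hηE]
    linarith
  have h7 := mul_le_mul_of_nonneg_left h6 hr0.le
  nlinarith

lemma integrable_gaussianReal_iff {f : ℝ → ℝ} :
    Integrable f (gaussianReal 0 1) ↔ Integrable fun x => f x * gaussianPDFReal 0 1 x := by
  rw [gaussianReal_of_var_ne_zero 0 one_ne_zero, integrable_withDensity_iff_integrable_smul'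
    (measurable_gaussianPDF 0 1) (Eventually.of_forall fun x => ENNReal.ofReal_lt_top)]
  simp [toReal_gaussianPDF, mul_comm]

lemma hasDerivAt_gaussianPDFReal (x : ℝ) :
    HasDerivAt (gaussianPDFReal 0 1) (-x * gaussianPDFReal 0 1 x) x := by
  rw [gaussianPDFReal_def]
  have h : HasDerivAt (fun x : ℝ => -(x - 0) ^ 2 / (2 * ((1 : ℝ≥0) : ℝ))) (-x) x := by
    refine (((hasDerivAt_id' x).sub_const 0).fun_pow 2).fun_neg.div_const _ |>.congr_deriv ?_
    push_cast
    ring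
  refine (h.exp.const_mul (Real.sqrt (2 * Real.pi * ((1 : ℝ≥0) : ℝ)))⁻¹).congr_deriv ?_
  ring

/-- Gaussian integration by parts on the line. -/
lemma integral_mul_gaussianReal_eq {h h' : ℝ → ℝ} (hd : ∀ t, HasDerivAt h (h' t) t)
    (hi : Integrable h (gaussianReal 0 1)) (hi' : Integrable h' (gaussianReal 0 1))
    (hit : Integrable (fun t => t * h t) (gaussianReal 0 1)) :
    ∫ t, t * h t ∂(gaussianReal 0 1) = ∫ t, h' t ∂(gaussianReal 0 1) := by
  rw [integral_gaussianReal_eq_integral_smul one_ne_zero,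
    integral_gaussianReal_eq_integral_smul one_ne_zero]
  rw [integrable_gaussianReal_iff] at hi hi' hit
  have e : ∀ t, h t * (-t * gaussianPDFReal 0 1 t) = -(t * h t * gaussianPDFReal 0 1 t) :=
    fun t => by ring
  have key := integral_mul_deriv_eq_deriv_mul_of_integrable (u := h) (u' := h')
    (v := gaussianPDFReal 0 1) (v' := fun t => -t * gaussianPDFReal 0 1 t)
    (fun t _ => hd t) (fun t _ => hasDerivAt_gaussianPDFReal t)
    (hit.neg.congr (Eventually.of_forall fun t => (e t).symm)) hi' hi
  simp_rw [e, integral_neg, neg_inj] at key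
  simp_rw [smul_eq_mul]
  rw [integral_congr_ae (Eventually.of_forall fun t => mul_comm _ _), key]
  exact integral_congr_ae (Eventually.of_forall fun t => mul_comm _ _)

section
variable {V : Type*} [NormedAddCommGroup V] [InnerProductSpace ℝ V] [FiniteDimensional ℝ V]
  [MeasurableSpace V] [BorelSpace V]

/-- Resampling the component of a Gaussian vector in a fixed direction preserves its law. -/
lemma map_resample_stdGaussian {u : V} (hu : ‖u‖ = 1) :
    ((gaussianReal 0 1).prod (stdGaussian V)).map
      (fun v : ℝ × V => v.2 - ⟪u, v.2⟫ • u + v.1 • u) = stdGaussian V := by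
  have hm : Measurable (fun v : ℝ × V => v.2 - ⟪u, v.2⟫ • u + v.1 • u) :=
    Continuous.measurable (by fun_prop)
  have := Measure.isProbabilityMeasure_map (μ := (gaussianReal 0 1).prod (stdGaussian V))
    hm.aemeasurable
  refine Measure.ext_of_charFun ?_
  ext w
  rw [charFun_stdGaussian, charFun_apply, integral_map hm.aemeasurable
    (Measurable.aestronglyMeasurable (by fun_prop))]
  have e : ∀ v : ℝ × V, Complex.exp (⟪v.2 - ⟪u, v.2⟫ • u + v.1 • u, w⟫ * Complex.I) =
      Complex.exp (⟪u, w⟫ * v.1 * Complex.I) *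
        Complex.exp (⟪v.2, w - ⟪u, w⟫ • u⟫ * Complex.I) := by
    intro v
    rw [← Complex.exp_add]
    congr 1
    rw [inner_add_left, inner_sub_left, inner_smul_left, inner_smul_left, inner_sub_right,
      inner_smul_right, real_inner_comm v.2 u]
    push_cast
    simp
    ring
  simp_rw [e]
  rw [integral_prod_mul (f := fun t : ℝ => Complex.exp (⟪u, w⟫ * t * Complex.I))
    (g := fun x : V => Complex.exp (⟪x, w - ⟪u, w⟫ • u⟫ * Complex.I)), ← charFun_apply_real,
    charFun_gaussianReal, ← charFun_apply, charFun_stdGaussian, ← Complex.exp_add]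
  congr 1
  have h : ‖w - ⟪u, w⟫ • u‖ ^ 2 = ‖w‖ ^ 2 - ⟪u, w⟫ ^ 2 := by
    rw [norm_sub_sq_real, norm_smul, hu, inner_smul_right, real_inner_comm u w,
      Real.norm_eq_abs, mul_one, sq_abs]
    ring
  have h' : ((‖w - ⟪u, w⟫ • u‖ : ℝ) : ℂ) ^ 2 = (‖w‖ : ℂ) ^ 2 - (⟪u, w⟫ : ℂ) ^ 2 := by
    exact_mod_cast h
  rw [h']
  push_cast
  ring

/-- Gaussian integration by parts in a unit direction. -/
lemma integral_inner_mul_stdGaussian_of_norm_eq_one {u : V} (hu : ‖u‖ = 1) {Φ Φ' : V → ℝ}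
    (hd : ∀ x, HasDerivAt (fun a : ℝ => Φ (x + a • u)) (Φ' x) 0)
    (hi : Integrable Φ (stdGaussian V)) (hi' : Integrable Φ' (stdGaussian V))
    (hit : Integrable (fun x => ⟪u, x⟫ * Φ x) (stdGaussian V)) :
    ∫ x, ⟪u, x⟫ * Φ x ∂(stdGaussian V) = ∫ x, Φ' x ∂(stdGaussian V) := by
  set R : ℝ × V → V := fun v => v.2 - ⟪u, v.2⟫ • u + v.1 • u with hR
  have hRm : Measurable R := Continuous.measurable (by fun_prop)
  have hmap : ((gaussianReal 0 1).prod (stdGaussian V)).map R = stdGaussian V :=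
    map_resample_stdGaussian hu
  have hcomp : ∀ {f : V → ℝ}, Integrable f (stdGaussian V) →
      Integrable (fun v => f (R v)) ((gaussianReal 0 1).prod (stdGaussian V)) ∧
      ∫ x, f x ∂(stdGaussian V) = ∫ x, ∫ t, f (R (t, x)) ∂(gaussianReal 0 1) ∂(stdGaussian V) := by
    intro f hf
    have h1 : Integrable (fun v => f (R v)) ((gaussianReal 0 1).prod (stdGaussian V)) := by
      rw [← hmap] at hf
      exact hf.comp_measurable hRm
    refine ⟨h1, ?_⟩
    rw [← integral_prod_symm _ h1]
    conv_lhs => rw [← hmap]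
    exact integral_map hRm.aemeasurable (by rw [hmap]; exact hf.1)
  have hu1 : ⟪u, u⟫ = 1 := by rw [real_inner_self_eq_norm_sq, hu, one_pow]
  have hinner : ∀ t x, ⟪u, R (t, x)⟫ = t := by
    intro t x
    simp only [hR]
    rw [inner_add_right, inner_sub_right, inner_smul_right, inner_smul_right, hu1]
    ring
  obtain ⟨h1, -⟩ := hcomp hi
  obtain ⟨h2, h2'⟩ := hcomp hi'
  obtain ⟨h3, h3'⟩ := hcomp hit
  rw [h2', h3']
  refine integral_congr_ae ?_
  filter_upwards [h1.prod_left_ae, h2.prod_left_ae, h3.prod_left_ae] with x hx1 hx2 hx3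
  simp only [hinner] at hx3 ⊢
  refine integral_mul_gaussianReal_eq (fun t => ?_) hx1 hx2 hx3
  have h4 : HasDerivAt (fun a => Φ (R (t, x) + a • u)) (Φ' (R (t, x))) (t - t) := by
    rw [sub_self]; exact hd _
  refine (h4.comp_sub_const t t).congr_of_eventuallyEq (Eventually.of_forall fun a => ?_)
  simp only [hR]
  congr 1
  module

/-- Gaussian integration by parts. -/
lemma integral_inner_mul_stdGaussian {w : V} {Φ Φ' : V → ℝ}
    (hd : ∀ x, HasDerivAt (fun a : ℝ => Φ (x + a • w)) (Φ' x) 0)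
    (hi : Integrable Φ (stdGaussian V)) (hi' : Integrable Φ' (stdGaussian V))
    (hit : Integrable (fun x => ⟪w, x⟫ * Φ x) (stdGaussian V)) :
    ∫ x, ⟪w, x⟫ * Φ x ∂(stdGaussian V) = ∫ x, Φ' x ∂(stdGaussian V) := by
  rcases eq_or_ne w 0 with rfl | hw
  · have : ∀ x, Φ' x = 0 := fun x => (hd x).unique (by simpa using hasDerivAt_const _ _)
    simp [this]
  have hw0 : 0 < ‖w‖ := norm_pos_iff.mpr hw
  have hinner : ∀ x, ⟪w, x⟫ = ‖w‖ * ⟪‖w‖⁻¹ • w, x⟫ := fun x => by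
    rw [inner_smul_left]; simp [hw0.ne']
  have h := integral_inner_mul_stdGaussian_of_norm_eq_one (u := ‖w‖⁻¹ • w) (Φ := Φ)
    (Φ' := fun x => ‖w‖⁻¹ * Φ' x) (by rw [norm_smul, norm_inv, norm_norm, inv_mul_cancel₀ hw0.ne'])
    (fun x => ?_) hi (hi'.const_mul _) ?_
  · simp_rw [hinner, mul_assoc, integral_const_mul, h]
    rw [integral_const_mul, mul_inv_cancel_left₀ hw0.ne']
  · have hd0 : HasDerivAt (fun a : ℝ => Φ (x + a • w)) (Φ' x) (‖w‖⁻¹ * 0) := by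
      rw [mul_zero]; exact hd x
    have := hd0.scomp (h := fun a : ℝ => ‖w‖⁻¹ * a) 0 (hasDerivAt_const_mul ‖w‖⁻¹)
    refine this.congr_of_eventuallyEq (Eventually.of_forall fun a => ?_)
    simp [smul_smul, mul_comm]
  · refine (hit.const_mul ‖w‖⁻¹).congr (Eventually.of_forall fun x => ?_)
    simp only [hinner x]
    rw [← mul_assoc, inv_mul_cancel_left₀ hw0.ne']

end

section SoftMax
variable {ι : Type*} [Fintype ι]

/-- The partition function `∑ exp (k yₜ)`. -/
def softSum (k : ℝ) (y : ι → ℝ) : ℝ := ∑ t, Real.exp (k * y t)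

/-- The smooth approximation `(∑ exp (k yₜ))^(1/k)` of `exp (max yₜ)`. -/
def softExp (k : ℝ) (y : ι → ℝ) : ℝ := Real.exp (Real.log (softSum k y) / k)

/-- The partial derivatives of `softExp`. -/
def softGrad (k : ℝ) (y : ι → ℝ) (t : ι) : ℝ :=
  Real.exp (k * y t + (1 / k - 1) * Real.log (softSum k y))

/-- The Gibbs weights associated with `softSum`. -/
def softWeight (k : ℝ) (y : ι → ℝ) (t : ι) : ℝ := Real.exp (k * y t) / softSum k y

lemma continuous_softSum (k : ℝ) : Continuous (softSum k : (ι → ℝ) → ℝ) := by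
  unfold softSum; fun_prop

lemma softExp_pos (k : ℝ) (y : ι → ℝ) : 0 < softExp k y := Real.exp_pos _

lemma softGrad_pos (k : ℝ) (y : ι → ℝ) (t : ι) : 0 < softGrad k y t := Real.exp_pos _

variable [Nonempty ι]

lemma softSum_pos (k : ℝ) (y : ι → ℝ) : 0 < softSum k y :=
  Finset.sum_pos (fun _ _ => Real.exp_pos _) Finset.univ_nonempty

lemma softWeight_nonneg (k : ℝ) (y : ι → ℝ) (t : ι) : 0 ≤ softWeight k y t :=
  div_nonneg (Real.exp_pos _).le (softSum_pos k y).le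

lemma sum_softWeight (k : ℝ) (y : ι → ℝ) : ∑ t, softWeight k y t = 1 := by
  simp only [softWeight]
  rw [← Finset.sum_div]
  exact div_self (softSum_pos k y).ne'

lemma softGrad_eq (k : ℝ) (y : ι → ℝ) (t : ι) :
    softGrad k y t = softExp k y * softWeight k y t := by
  have h : softWeight k y t = Real.exp (k * y t - Real.log (softSum k y)) := by
    rw [Real.exp_sub, Real.exp_log (softSum_pos k y), softWeight]
  rw [h, softGrad, softExp, ← Real.exp_add]
  congr 1
  ring

lemma sum_softGrad (k : ℝ) (y : ι → ℝ) : ∑ t, softGrad k y t = softExp k y := by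
  simp_rw [softGrad_eq, ← Finset.mul_sum, sum_softWeight, mul_one]

lemma softWeight_le_one (k : ℝ) (y : ι → ℝ) (t : ι) : softWeight k y t ≤ 1 := by
  rw [← sum_softWeight k y]
  exact Finset.single_le_sum (fun s _ => softWeight_nonneg k y s) (Finset.mem_univ t)

lemma softGrad_le (k : ℝ) (y : ι → ℝ) (t : ι) : softGrad k y t ≤ softExp k y := by
  rw [softGrad_eq]
  exact mul_le_of_le_one_right (Real.exp_pos _).le (softWeight_le_one k y t)

lemma le_log_softExp {k : ℝ} (hk : 0 < k) (y : ι → ℝ) (t : ι) :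
    y t ≤ Real.log (softExp k y) := by
  rw [softExp, Real.log_exp, le_div_iff₀ hk, Real.le_log_iff_exp_le (softSum_pos k y), mul_comm]
  exact Finset.single_le_sum (f := fun s => Real.exp (k * y s)) (fun s _ => (Real.exp_pos _).le)
    (Finset.mem_univ t)

lemma softExp_le {k M : ℝ} (hk : 0 < k) {y : ι → ℝ} (hM : ∀ t, y t ≤ M) :
    softExp k y ≤ Real.exp (Real.log (Fintype.card ι) / k) * Real.exp M := by
  have hc : (0 : ℝ) < Fintype.card ι := by exact_mod_cast Fintype.card_pos
  have h : softSum k y ≤ Fintype.card ι * Real.exp (k * M) := by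
    rw [softSum, ← nsmul_eq_mul]
    exact Finset.sum_le_card_nsmul _ _ _ fun t _ =>
      Real.exp_le_exp.mpr (mul_le_mul_of_nonneg_left (hM t) hk.le)
  have h2 := Real.log_le_log (softSum_pos k y) h
  rw [Real.log_mul hc.ne' (Real.exp_pos _).ne', Real.log_exp] at h2
  rw [softExp, ← Real.exp_add, Real.exp_le_exp, div_le_iff₀ hk, add_mul, div_mul_cancel₀ _ hk.ne']
  linarith

lemma continuous_softExp (k : ℝ) : Continuous (softExp k : (ι → ℝ) → ℝ) := by
  unfold softExp
  exact Real.continuous_exp.comp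
    (((continuous_softSum k).log fun y => (softSum_pos k y).ne').div_const k)

lemma continuous_softWeight (k : ℝ) (t : ι) : Continuous fun y : ι → ℝ => softWeight k y t := by
  unfold softWeight
  exact Continuous.div (by fun_prop) (continuous_softSum k) fun y => (softSum_pos k y).ne'

lemma continuous_softGrad (k : ℝ) (t : ι) : Continuous fun y : ι → ℝ => softGrad k y t := by
  simp_rw [softGrad_eq]
  exact (continuous_softExp k).mul (continuous_softWeight k t)

lemma hasDerivAt_log_softSum {k a : ℝ} {y : ℝ → ι → ℝ} {d : ι → ℝ}
    (hy : ∀ t, HasDerivAt (fun b => y b t) (d t) a) :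
    HasDerivAt (fun b => Real.log (softSum k (y b))) (k * ∑ t, d t * softWeight k (y a) t) a := by
  have h : HasDerivAt (fun b => softSum k (y b)) (∑ t, Real.exp (k * y a t) * (k * d t)) a := by
    unfold softSum
    exact HasDerivAt.fun_sum fun t _ => ((hy t).const_mul k).exp
  refine (h.log (softSum_pos k _).ne').congr_deriv ?_
  rw [Finset.sum_div, Finset.mul_sum]
  refine Finset.sum_congr rfl fun t _ => ?_
  rw [softWeight]
  ring

lemma hasDerivAt_softExp {k a : ℝ} (hk : 0 < k) {y : ℝ → ι → ℝ} {d : ι → ℝ}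
    (hy : ∀ t, HasDerivAt (fun b => y b t) (d t) a) :
    HasDerivAt (fun b => softExp k (y b)) (∑ t, d t * softGrad k (y a) t) a := by
  unfold softExp
  refine ((hasDerivAt_log_softSum hy).div_const k).exp.congr_deriv ?_
  rw [mul_div_cancel_left₀ _ hk.ne', Finset.mul_sum]
  refine Finset.sum_congr rfl fun t _ => ?_
  rw [softGrad_eq, softExp]
  ring

lemma hasDerivAt_softGrad {k a : ℝ} (hk : 0 < k) {y : ℝ → ι → ℝ} {d : ι → ℝ} (t : ι)
    (hy : ∀ t, HasDerivAt (fun b => y b t) (d t) a) :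
    HasDerivAt (fun b => softGrad k (y b) t)
      (softGrad k (y a) t * (k * d t + (1 - k) * ∑ s, d s * softWeight k (y a) s)) a := by
  unfold softGrad
  refine (((hy t).const_mul k).fun_add ((hasDerivAt_log_softSum hy).const_mul _)).exp.congr_deriv ?_
  field_simp

end SoftMax

lemma abs_inner_le_of_norm_le {V : Type*} [NormedAddCommGroup V] [InnerProductSpace ℝ V]
    {R : ℝ} {v : V} (hv : ‖v‖ ≤ R) (x : V) : |⟪v, x⟫| ≤ R * ‖x‖ :=
  (abs_real_inner_le_norm v x).trans (mul_le_mul_of_nonneg_right hv (norm_nonneg x))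

lemma continuous_inner_family {ι V : Type*} [NormedAddCommGroup V]
    [InnerProductSpace ℝ V] (v : ι → V) : Continuous fun x : V => fun t => ⟪v t, x⟫ := by
  fun_prop

lemma norm_le_sum_norm {ι V : Type*} [Fintype ι] [NormedAddCommGroup V] (v : ι → V) (t : ι) :
    ‖v t‖ ≤ ∑ s, ‖v s‖ :=
  Finset.single_le_sum (f := fun s => ‖v s‖) (fun _ _ => norm_nonneg _) (Finset.mem_univ t)

lemma softExp_inner_le {ι V : Type*} [Fintype ι] [Nonempty ι] [NormedAddCommGroup V]
    [InnerProductSpace ℝ V] {k R : ℝ} (hk : 0 < k) {v : ι → V} (hv : ∀ t, ‖v t‖ ≤ R) (x : V) :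
    softExp k (fun t => ⟪v t, x⟫) ≤
      Real.exp (Real.log (Fintype.card ι) / k) * Real.exp (R * ‖x‖) :=
  softExp_le hk fun t => (le_abs_self _).trans (abs_inner_le_of_norm_le (hv t) x)

lemma abs_inner_mul_softGrad_le {ι V : Type*} [Fintype ι] [Nonempty ι] [NormedAddCommGroup V]
    [InnerProductSpace ℝ V] {k R : ℝ} (hk : 0 < k) {v : ι → V} {w : V}
    (hv : ∀ t, ‖v t‖ ≤ R) (hw : ‖w‖ ≤ R) (t : ι) (x : V) :
    |⟪w, x⟫ * softGrad k (fun t => ⟪v t, x⟫) t| ≤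
      Real.exp (Real.log (Fintype.card ι) / k) * Real.exp (2 * R * ‖x‖) := by
  rw [abs_mul, abs_of_pos (softGrad_pos k (fun t => ⟪v t, x⟫) t)]
  have h1 : |⟪w, x⟫| ≤ Real.exp (R * ‖x‖) := by
    have := Real.add_one_le_exp (R * ‖x‖)
    linarith [abs_inner_le_of_norm_le hw x]
  have h2 := (softGrad_le k (fun t => ⟪v t, x⟫) t).trans (softExp_inner_le hk hv x)
  refine (mul_le_mul h1 h2 (Real.exp_pos _).le (Real.exp_pos _).le).trans_eq ?_
  rw [mul_left_comm, ← Real.exp_add]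
  ring_nf

section Comparison
variable {ι : Type*} [Fintype ι] [Nonempty ι]
  {V : Type*} [NormedAddCommGroup V] [InnerProductSpace ℝ V] [FiniteDimensional ℝ V]
  [MeasurableSpace V] [BorelSpace V]

lemma integrable_exp_norm_stdGaussian (c : ℝ) :
    Integrable (fun x => Real.exp (c * ‖x‖)) (stdGaussian V) := by
  have h := integrable_exp_neg_sum_sq_basis (stdOrthonormalBasis ℝ V) (D := fun _ => -(1 / 2))
    fun _ => by norm_num
  refine (h.const_mul (Real.exp (c ^ 2))).mono'
    (Continuous.aestronglyMeasurable (by fun_prop)) (Eventually.of_forall fun x => ?_)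
  rw [Real.norm_of_nonneg (Real.exp_pos _).le, ← Real.exp_add, Real.exp_le_exp, ← Finset.mul_sum,
    (stdOrthonormalBasis ℝ V).sum_sq_inner_right]
  nlinarith [sq_nonneg (c - ‖x‖ / 2)]

lemma integrable_softExp {k : ℝ} (hk : 0 < k) (v : ι → V) :
    Integrable (fun x => softExp k fun t => ⟪v t, x⟫) (stdGaussian V) := by
  refine ((integrable_exp_norm_stdGaussian (∑ s, ‖v s‖)).const_mul
    (Real.exp (Real.log (Fintype.card ι) / k))).mono'
    ((continuous_softExp k).comp (continuous_inner_family v)).aestronglyMeasurable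
    (Eventually.of_forall fun x => ?_)
  rw [Real.norm_of_nonneg (softExp_pos _ _).le]
  exact softExp_inner_le hk (norm_le_sum_norm v) x

lemma integrable_softGrad {k : ℝ} (hk : 0 < k) (v : ι → V) (t : ι) :
    Integrable (fun x => softGrad k (fun t => ⟪v t, x⟫) t) (stdGaussian V) := by
  refine (integrable_softExp hk v).mono'
    ((continuous_softGrad k t).comp (continuous_inner_family v)).aestronglyMeasurable
    (Eventually.of_forall fun x => ?_)
  rw [Real.norm_of_nonneg (softGrad_pos _ _ _).le]
  exact softGrad_le _ _ _

lemma integrable_inner_mul_softGrad {k : ℝ} (hk : 0 < k) (v : ι → V) (w : V) (t : ι) :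
    Integrable (fun x => ⟪w, x⟫ * softGrad k (fun t => ⟪v t, x⟫) t) (stdGaussian V) := by
  have hR : 0 ≤ ∑ s, ‖v s‖ := Finset.sum_nonneg fun s _ => norm_nonneg _
  refine ((integrable_exp_norm_stdGaussian (2 * (∑ s, ‖v s‖ + ‖w‖))).const_mul _).mono'
    (Continuous.aestronglyMeasurable ?_) (Eventually.of_forall fun x =>
      abs_inner_mul_softGrad_le hk
        (fun t => (norm_le_sum_norm v t).trans (le_add_of_nonneg_right (norm_nonneg _)))
        (le_add_of_nonneg_left hR) t x)
  exact (continuous_const.inner continuous_id).mul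
    ((continuous_softGrad k t).comp (continuous_inner_family v))

lemma integral_inner_mul_softGrad {k : ℝ} (hk : 0 < k) (v : ι → V) (w : V) (t : ι) :
    Integrable (fun x => softGrad k (fun t => ⟪v t, x⟫) t *
        (k * ⟪v t, w⟫ + (1 - k) * ∑ s, ⟪v s, w⟫ * softWeight k (fun t => ⟪v t, x⟫) s))
        (stdGaussian V) ∧
    ∫ x, ⟪w, x⟫ * softGrad k (fun t => ⟪v t, x⟫) t ∂(stdGaussian V) =
      ∫ x, softGrad k (fun t => ⟪v t, x⟫) t *
        (k * ⟪v t, w⟫ + (1 - k) * ∑ s, ⟪v s, w⟫ * softWeight k (fun t => ⟪v t, x⟫) s)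
        ∂(stdGaussian V) := by
  have hInt : Integrable (fun x => softGrad k (fun t => ⟪v t, x⟫) t *
        (k * ⟪v t, w⟫ + (1 - k) * ∑ s, ⟪v s, w⟫ * softWeight k (fun t => ⟪v t, x⟫) s))
        (stdGaussian V) := by
    refine (integrable_softGrad hk v t).mul_bdd (c := |k * ⟪v t, w⟫| + |1 - k| * ∑ s, |⟪v s, w⟫|)
      ?_ (Eventually.of_forall fun x => ?_)
    · refine Continuous.aestronglyMeasurable (continuous_const.add (continuous_const.mul
        (continuous_finsetSum _ fun s _ => continuous_const.mul
          ((continuous_softWeight k s).comp (continuous_inner_family v)))))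
    · refine (abs_add_le _ _).trans (add_le_add_right ?_ _)
      rw [abs_mul]
      refine mul_le_mul_of_nonneg_left ((Finset.abs_sum_le_sum_abs _ _).trans
        (Finset.sum_le_sum fun s _ => ?_)) (abs_nonneg _)
      rw [abs_mul, abs_of_nonneg (softWeight_nonneg _ _ _)]
      exact mul_le_of_le_one_right (abs_nonneg _) (softWeight_le_one _ _ _)
  refine ⟨hInt, integral_inner_mul_stdGaussian (fun x => ?_) (integrable_softGrad hk v t) hInt
    (integrable_inner_mul_softGrad hk v w t)⟩
  have := hasDerivAt_softGrad (a := 0) hk (y := fun b t => ⟪v t, x + b • w⟫)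
    (d := fun t => ⟪v t, w⟫) t fun s => by
      simp_rw [inner_add_right, inner_smul_right]
      simpa using ((hasDerivAt_id' (0 : ℝ)).mul_const ⟪v s, w⟫).const_add ⟪v s, x⟫
  simpa using this

lemma le_sum_integral_inner_mul_softGrad {k τ : ℝ} (hk : 1 ≤ k) (v w : ι → V)
    (hle : ∀ s t, ⟪v s, w t⟫ ≤ τ) (heq : ∀ t, ⟪v t, w t⟫ = τ) :
    τ * ∫ x, softExp k (fun t => ⟪v t, x⟫) ∂(stdGaussian V) ≤
      ∑ t, ∫ x, ⟪w t, x⟫ * softGrad k (fun t => ⟪v t, x⟫) t ∂(stdGaussian V) := by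
  have hk0 : 0 < k := by linarith
  simp_rw [← sum_softGrad]
  rw [integral_finsetSum _ fun t _ => integrable_softGrad hk0 v t, Finset.mul_sum]
  refine Finset.sum_le_sum fun t _ => ?_
  obtain ⟨hi, he⟩ := integral_inner_mul_softGrad hk0 v (w t) t
  rw [he, ← integral_const_mul]
  refine integral_mono ((integrable_softGrad hk0 v t).const_mul τ) hi fun x => ?_
  simp only
  rw [mul_comm τ]
  refine mul_le_mul_of_nonneg_left ?_ (Real.exp_pos _).le
  have h : ∑ s, ⟪v s, w t⟫ * softWeight k (fun t => ⟪v t, x⟫) s ≤ τ := by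
    calc _ ≤ ∑ s, τ * softWeight k (fun t => ⟪v t, x⟫) s := Finset.sum_le_sum fun s _ =>
          mul_le_mul_of_nonneg_right (hle s t) (softWeight_nonneg _ _ _)
      _ = τ := by rw [← Finset.mul_sum, sum_softWeight, mul_one]
  rw [heq]
  nlinarith

lemma hasDerivAt_integral_softExp {k : ℝ} (hk : 0 < k) (A B : ι → V) (φ : ℝ) :
    HasDerivAt (fun φ : ℝ => ∫ x, softExp k (fun t => ⟪Real.cos φ • A t + Real.sin φ • B t, x⟫)
        ∂(stdGaussian V))
      (∑ t, ∫ x, ⟪-Real.sin φ • A t + Real.cos φ • B t, x⟫ *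
        softGrad k (fun t => ⟪Real.cos φ • A t + Real.sin φ • B t, x⟫) t ∂(stdGaussian V)) φ := by
  set R : ℝ := ∑ s, (‖A s‖ + ‖B s‖) with hR
  have hR0 : 0 ≤ R := Finset.sum_nonneg fun s _ => by positivity
  have hnorm : ∀ (a b : ℝ) (t : ι), |a| ≤ 1 → |b| ≤ 1 → ‖a • A t + b • B t‖ ≤ R := by
    intro a b t ha hb
    have h1 : ‖A t‖ + ‖B t‖ ≤ R := Finset.single_le_sum (f := fun s => ‖A s‖ + ‖B s‖)
      (fun s _ => by positivity) (Finset.mem_univ t)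
    refine (norm_add_le _ _).trans (le_trans ?_ h1)
    rw [norm_smul, norm_smul]
    exact add_le_add (mul_le_of_le_one_left (norm_nonneg _) ha)
      (mul_le_of_le_one_left (norm_nonneg _) hb)
  have key := hasDerivAt_integral_of_dominated_loc_of_deriv_le (μ := stdGaussian V) (x₀ := φ)
    (s := Set.univ)
    (F := fun φ x => softExp k (fun t => ⟪Real.cos φ • A t + Real.sin φ • B t, x⟫))
    (F' := fun φ x => ∑ t, ⟪-Real.sin φ • A t + Real.cos φ • B t, x⟫ *
        softGrad k (fun t => ⟪Real.cos φ • A t + Real.sin φ • B t, x⟫) t)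
    (bound := fun x => ∑ _t : ι, Real.exp (Real.log (Fintype.card ι) / k) *
      Real.exp (2 * R * ‖x‖)) univ_mem
    (Eventually.of_forall fun ψ => (integrable_softExp hk _).1) (integrable_softExp hk _)
    (integrable_finsetSum _ fun t _ => integrable_inner_mul_softGrad hk
      (fun t => Real.cos φ • A t + Real.sin φ • B t) _ t).1
    (Eventually.of_forall fun x ψ _ => ?_)
    (integrable_finsetSum _ fun t _ => (integrable_exp_norm_stdGaussian _).const_mul _)
    (Eventually.of_forall fun x ψ _ => ?_)
  · refine key.2.congr_deriv (integral_finsetSum _ fun t _ => integrable_inner_mul_softGrad hk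
      (fun t => Real.cos φ • A t + Real.sin φ • B t) _ t)
  · refine (Finset.abs_sum_le_sum_abs _ _).trans (Finset.sum_le_sum fun t _ => ?_)
    exact abs_inner_mul_softGrad_le hk
      (fun t => hnorm _ _ t (Real.abs_cos_le_one ψ) (Real.abs_sin_le_one ψ))
      (hnorm _ _ t (by rw [abs_neg]; exact Real.abs_sin_le_one ψ) (Real.abs_cos_le_one ψ)) t x
  · refine hasDerivAt_softExp hk (y := fun ψ t => ⟪Real.cos ψ • A t + Real.sin ψ • B t, x⟫)
      fun t => ?_
    simp_rw [inner_add_left, inner_smul_left]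
    exact ((Real.hasDerivAt_cos ψ).mul_const _).add ((Real.hasDerivAt_sin ψ).mul_const _)

/-- Slepian-type comparison inequality for two Gaussian families, one of which is shifted by an
independent centred Gaussian variable of variance `κ`. -/
lemma exp_mul_integral_softExp_le {k κ : ℝ} (hk : 1 ≤ k) (A B : ι → V)
    (horth : ∀ s t, ⟪A s, B t⟫ = 0) (hle : ∀ s t, ⟪B s, B t⟫ ≤ ⟪A s, A t⟫ + κ)
    (heq : ∀ t, ⟪B t, B t⟫ = ⟪A t, A t⟫ + κ) :
    Real.exp (κ / 2) * ∫ x, softExp k (fun t => ⟪A t, x⟫) ∂(stdGaussian V) ≤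
      ∫ x, softExp k (fun t => ⟪B t, x⟫) ∂(stdGaussian V) := by
  have hk0 : 0 < k := by linarith
  set f : ℝ → ℝ := fun φ => ∫ x, softExp k (fun t => ⟪Real.cos φ • A t + Real.sin φ • B t, x⟫)
    ∂(stdGaussian V) with hf
  set m : ℝ → ℝ := fun φ => Real.exp (κ * Real.cos φ ^ 2 / 2) * f φ with hm
  have hd : ∀ φ, HasDerivAt m (Real.exp (κ * Real.cos φ ^ 2 / 2) *
      (∑ t, (∫ x, ⟪-Real.sin φ • A t + Real.cos φ • B t, x⟫ *
        softGrad k (fun t => ⟪Real.cos φ • A t + Real.sin φ • B t, x⟫) t ∂(stdGaussian V)) -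
        κ * (Real.cos φ * Real.sin φ) * f φ)) φ := by
    intro φ
    have h1 : HasDerivAt (fun φ => κ * Real.cos φ ^ 2 / 2)
        (-(κ * (Real.cos φ * Real.sin φ))) φ := by
      refine ((((Real.hasDerivAt_cos φ).fun_pow 2).const_mul κ).div_const 2).congr_deriv ?_
      push_cast
      ring
    refine (h1.exp.mul (hasDerivAt_integral_softExp hk0 A B φ)).congr_deriv ?_
    simp only [hf]
    ring
  have hmono : MonotoneOn m (Set.Icc 0 (Real.pi / 2)) := by
    refine monotoneOn_of_deriv_nonneg (convex_Icc _ _)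
      (fun φ _ => (hd φ).continuousAt.continuousWithinAt)
      (fun φ _ => (hd φ).differentiableAt.differentiableWithinAt) fun φ hφ => ?_
    rw [interior_Icc] at hφ
    have hs : 0 < Real.sin φ := Real.sin_pos_of_pos_of_lt_pi hφ.1 (by linarith [hφ.2, Real.pi_pos])
    have hc : 0 < Real.cos φ := Real.cos_pos_of_mem_Ioo ⟨by linarith [hφ.1, Real.pi_pos], hφ.2⟩
    rw [(hd φ).deriv]
    refine mul_nonneg (Real.exp_pos _).le (sub_nonneg.mpr ?_)
    have hip : ∀ s t, ⟪Real.cos φ • A s + Real.sin φ • B s, -Real.sin φ • A t + Real.cos φ • B t⟫ =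
        Real.cos φ * Real.sin φ * (⟪B s, B t⟫ - ⟪A s, A t⟫) := by
      intro s t
      simp only [inner_add_left, inner_add_right, inner_smul_left, inner_smul_right, horth,
        real_inner_comm (A t) (B s), conj_trivial]
      ring
    refine le_sum_integral_inner_mul_softGrad hk _ _ (fun s t => ?_) fun t => ?_
    · rw [hip, mul_comm κ]
      exact mul_le_mul_of_nonneg_left (by linarith [hle s t]) (by positivity)
    · rw [hip, mul_comm κ, heq]
      ring
  have h := hmono (Set.left_mem_Icc.mpr (by positivity)) (Set.right_mem_Icc.mpr (by positivity))
    (by positivity : (0 : ℝ) ≤ Real.pi / 2)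
  simpa [hm, hf] using h

end Comparison

section Coordinates
variable {α γ : Type*}

/-- The vector of those coordinates of `x` that are indexed by the range of `f`. -/
def coordRestrict (f : α → γ) (x : EuclideanSpace ℝ γ) : EuclideanSpace ℝ α :=
  WithLp.toLp 2 fun a => x (f a)

lemma coordRestrict_apply (f : α → γ) (x : EuclideanSpace ℝ γ) (a : α) :
    coordRestrict f x a = x (f a) := rfl

lemma continuous_coordRestrict (f : α → γ) : Continuous (coordRestrict f) := by
  unfold coordRestrict
  fun_prop

variable [Fintype α]

/-- The adjoint of `coordRestrict`. -/
def coordExtend (f : α → γ) (u : EuclideanSpace ℝ α) : EuclideanSpace ℝ γ :=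
  open Classical in ∑ a, u a • EuclideanSpace.single (f a) (1 : ℝ)

lemma coordRestrict_coordExtend {f : α → γ} (hf : Function.Injective f)
    (u : EuclideanSpace ℝ α) : coordRestrict f (coordExtend f u) = u := by
  classical
  ext a
  simp [coordRestrict_apply, coordExtend, Pi.single_apply, hf.eq_iff]

variable [Fintype γ]

lemma inner_coordExtend (f : α → γ) (u : EuclideanSpace ℝ α) (x : EuclideanSpace ℝ γ) :
    ⟪coordExtend f u, x⟫ = ⟪u, coordRestrict f x⟫ := by
  classical
  simp only [coordExtend, sum_inner, real_inner_smul_left, EuclideanSpace.inner_single_left,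
    conj_trivial, one_mul]
  rw [PiLp.inner_apply]
  exact Finset.sum_congr rfl fun a _ => mul_comm _ _

lemma map_coordRestrict_stdGaussian {f : α → γ} (hf : Function.Injective f) :
    (stdGaussian (EuclideanSpace ℝ γ)).map (coordRestrict f) =
      stdGaussian (EuclideanSpace ℝ α) := by
  have hm : Measurable (coordRestrict f) := (continuous_coordRestrict f).measurable
  have : IsProbabilityMeasure ((stdGaussian (EuclideanSpace ℝ γ)).map (coordRestrict f)) :=
    Measure.isProbabilityMeasure_map hm.aemeasurable
  refine Measure.ext_of_charFun ?_
  ext u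
  have h : ‖coordExtend f u‖ ^ 2 = ‖u‖ ^ 2 := by
    rw [← real_inner_self_eq_norm_sq, inner_coordExtend, coordRestrict_coordExtend hf,
      real_inner_self_eq_norm_sq]
  have h' : charFun ((stdGaussian (EuclideanSpace ℝ γ)).map (coordRestrict f)) u =
      charFun (stdGaussian (EuclideanSpace ℝ γ)) (coordExtend f u) := by
    rw [charFun_apply, charFun_apply, integral_map hm.aemeasurable (by fun_prop)]
    refine integral_congr_ae (ae_of_all _ fun x => ?_)
    simp only
    rw [real_inner_comm, real_inner_comm _ x, inner_coordExtend]
  rw [h', charFun_stdGaussian, charFun_stdGaussian]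
  norm_cast
  rw [h]

lemma integral_comp_coordRestrict {f : α → γ} (hf : Function.Injective f)
    {φ : EuclideanSpace ℝ α → ℝ} (hφ : Continuous φ) :
    ∫ x, φ (coordRestrict f x) ∂stdGaussian (EuclideanSpace ℝ γ) =
      ∫ y, φ y ∂stdGaussian (EuclideanSpace ℝ α) := by
  rw [← map_coordRestrict_stdGaussian hf,
    integral_map (continuous_coordRestrict f).measurable.aemeasurable
      hφ.aestronglyMeasurable]

end Coordinates

lemma mul_inner_le_inner_pow {p N : ℕ} {e f : EuclideanSpace ℝ (Fin N)}
    (he : ‖e‖ = 1) (hf : ‖f‖ = 1) : p * ⟪e, f⟫ ≤ ⟪e, f⟫ ^ p + (p - 1) := by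
  have h := abs_real_inner_le_norm e f
  rw [he, hf, mul_one] at h
  have h1 := one_add_mul_le_pow (a := ⟪e, f⟫ - 1) (by linarith [(abs_le.mp h).1]) p
  rw [add_sub_cancel] at h1
  linarith

lemma exp_mul_integral_softExp_tensorPow_le {ι : Type*} [Fintype ι] [Nonempty ι] {p N : ℕ}
    {k : ℝ} (hk : 1 ≤ k) (c : ℝ) {e : ι → EuclideanSpace ℝ (Fin N)} (he : ∀ t, ‖e t‖ = 1) :
    Real.exp (c ^ 2 * (p - 1) / 2) *
        ∫ g, softExp k (fun t => ⟪c • tensorPow p (e t), g⟫)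
          ∂stdGaussian (EuclideanSpace ℝ (Fin p → Fin N)) ≤
      ∫ y, softExp k (fun t => ⟪(c * Real.sqrt p) • e t, y⟫)
        ∂stdGaussian (EuclideanSpace ℝ (Fin N)) := by
  have hp : Real.sqrt p * Real.sqrt p = p := Real.mul_self_sqrt (Nat.cast_nonneg p)
  have hl : Function.Injective (Sum.inl : (Fin p → Fin N) → (Fin p → Fin N) ⊕ Fin N) :=
    Sum.inl_injective
  have hr : Function.Injective (Sum.inr : Fin N → (Fin p → Fin N) ⊕ Fin N) := Sum.inr_injective
  have hA := integral_comp_coordRestrict hl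
    ((continuous_softExp k).comp (continuous_inner_family fun t => c • tensorPow p (e t)))
  have hB := integral_comp_coordRestrict hr
    ((continuous_softExp k).comp (continuous_inner_family fun t => (c * Real.sqrt p) • e t))
  simp only [Function.comp_def] at hA hB
  rw [← hA, ← hB]
  simp_rw [← inner_coordExtend]
  refine exp_mul_integral_softExp_le hk _ _ (fun s t => ?_) (fun s t => ?_) (fun t => ?_)
  · classical
    rw [inner_coordExtend]
    convert inner_zero_right (𝕜 := ℝ) (c • tensorPow p (e s))
    ext j
    simp [coordRestrict_apply, coordExtend]
  · rw [inner_coordExtend, inner_coordExtend, coordRestrict_coordExtend hl,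
      coordRestrict_coordExtend hr, real_inner_smul_left, real_inner_smul_right,
      real_inner_smul_left, real_inner_smul_right, inner_tensorPow]
    have := mul_le_mul_of_nonneg_left (mul_inner_le_inner_pow (p := p) (he s) (he t))
      (sq_nonneg c)
    linear_combination this + c ^ 2 * ⟪e s, e t⟫ * hp
  · rw [inner_coordExtend, inner_coordExtend, coordRestrict_coordExtend hl,
      coordRestrict_coordExtend hr, real_inner_smul_left, real_inner_smul_right,
      real_inner_smul_left, real_inner_smul_right, inner_tensorPow,
      real_inner_self_eq_norm_sq, he]
    simp only [one_pow, mul_one]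
    linear_combination c ^ 2 * hp

lemma integral_pos_of_forall_pos {Ω : Type*} [MeasurableSpace Ω] {μ : Measure Ω}
    [IsProbabilityMeasure μ] {F : Ω → ℝ} (hF : ∀ x, 0 < F x) (hFi : Integrable F μ) :
    0 < ∫ x, F x ∂μ := by
  rw [integral_pos_iff_support_of_nonneg (fun x => (hF x).le) hFi]
  have : Function.support F = Set.univ := Set.eq_univ_of_forall fun x => (hF x).ne'
  simp [this]

lemma integral_log_le_log_integral {Ω : Type*} [MeasurableSpace Ω] {μ : Measure Ω}
    [IsProbabilityMeasure μ] {F φ : Ω → ℝ} (hF : ∀ x, 0 < F x) (hFi : Integrable F μ)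
    (hφ : Integrable φ μ) (h : ∀ x, φ x ≤ Real.log (F x)) :
    ∫ x, φ x ∂μ ≤ Real.log (∫ x, F x ∂μ) := by
  set m := ∫ x, F x ∂μ with hm
  have hpos : 0 < m := integral_pos_of_forall_pos hF hFi
  have h1 : ∀ x, φ x ≤ F x / m + (Real.log m - 1) := fun x => by
    have := Real.log_le_sub_one_of_pos (div_pos (hF x) hpos)
    rw [Real.log_div (hF x).ne' hpos.ne'] at this
    linarith [h x]
  have hi : Integrable (fun x => F x / m) μ := hFi.div_const m
  have h2 : ∫ x, φ x ∂μ ≤ ∫ x, (F x / m + (Real.log m - 1)) ∂μ :=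
    integral_mono hφ (hi.add (integrable_const _)) h1
  rw [integral_add hi (integrable_const _), integral_div, ← hm, div_self hpos.ne'] at h2
  simpa using h2

lemma exists_finset_net {p N : ℕ} (hN : 1 ≤ N) {ε : ℝ} (hε : 0 < ε) :
    ∃ T : Finset (EuclideanSpace ℝ (Fin N)), T.Nonempty ∧ (∀ e ∈ T, ‖e‖ = 1) ∧
      ∀ f : EuclideanSpace ℝ (Fin N), ‖f‖ = 1 → ∃ e ∈ T, ‖tensorPow p f - tensorPow p e‖ ≤ ε := by
  obtain ⟨t, ht, hcov⟩ := (isCompact_sphere (0 : EuclideanSpace ℝ (Fin N)) 1).elim_nhds_subcover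
    (fun e => {f | ‖tensorPow p f - tensorPow p e‖ < ε}) (fun e _ => by
      refine IsOpen.mem_nhds ?_ (by simpa using hε)
      exact isOpen_lt ((continuous_tensorPow.sub continuous_const).norm) continuous_const)
  have key : ∀ f : EuclideanSpace ℝ (Fin N), ‖f‖ = 1 →
      ∃ e ∈ t, ‖tensorPow p f - tensorPow p e‖ ≤ ε := fun f hf => by
    have := hcov (by simpa using hf : f ∈ Metric.sphere (0 : EuclideanSpace ℝ (Fin N)) 1)
    simp only [Set.mem_iUnion] at this
    obtain ⟨e, he, h⟩ := this
    exact ⟨e, he, le_of_lt h⟩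
  refine ⟨t, ?_, fun e he => by simpa using ht e he, key⟩
  obtain ⟨e, he⟩ := nonempty_sphere hN
  obtain ⟨f, hf, -⟩ := key e (by simpa using he)
  exact ⟨f, hf⟩

lemma mul_integral_supTensor_le_of_net {p N : ℕ} (hN : 1 ≤ N) {c ε k : ℝ} (hc : 0 < c)
    (hk : 1 ≤ k) {T : Finset (EuclideanSpace ℝ (Fin N))} (hT : T.Nonempty)
    (hT1 : ∀ e ∈ T, ‖e‖ = 1)
    (hnet : ∀ f : EuclideanSpace ℝ (Fin N), ‖f‖ = 1 →
      ∃ e ∈ T, ‖tensorPow p f - tensorPow p e‖ ≤ ε) :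
    c * ∫ g, supTensor p g ∂stdGaussian (EuclideanSpace ℝ (Fin p → Fin N)) ≤
      Real.log (∫ y, Real.exp (c * Real.sqrt p * ‖y‖) ∂stdGaussian (EuclideanSpace ℝ (Fin N)))
        - c ^ 2 * (p - 1) / 2 + Real.log T.card / k
        + c * ε * ∫ g, ‖g‖ ∂stdGaussian (EuclideanSpace ℝ (Fin p → Fin N)) := by
  have : Nonempty T := hT.to_subtype
  have hk0 : 0 < k := by linarith
  have he : ∀ t : T, ‖t.1‖ = 1 := fun t => hT1 _ t.2
  set FA : EuclideanSpace ℝ (Fin p → Fin N) → ℝ :=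
    fun g => softExp k (fun t : T => ⟪c • tensorPow p t.1, g⟫) with hFA
  have hFAi : Integrable FA (stdGaussian _) := integrable_softExp hk0 _
  have hni : Integrable (fun g : EuclideanSpace ℝ (Fin p → Fin N) => ‖g‖) (stdGaussian _) :=
    IsGaussian.integrable_id.norm
  have hsi := integrable_supTensor (p := p) hN
  have h1 : ∫ g, (c * supTensor p g - c * ε * ‖g‖)
      ∂stdGaussian (EuclideanSpace ℝ (Fin p → Fin N)) ≤
      Real.log (∫ g, FA g ∂stdGaussian (EuclideanSpace ℝ (Fin p → Fin N))) := by
    refine integral_log_le_log_integral (fun g => softExp_pos _ _) hFAi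
      ((hsi.const_mul c).sub (hni.const_mul (c * ε))) fun g => ?_
    have h : supTensor p g ≤ Real.log (FA g) / c + ε * ‖g‖ := by
      refine supTensor_le hN fun f hf => ?_
      obtain ⟨e, heT, hfe⟩ := hnet f hf
      have h2 := le_log_softExp hk0 (fun t : T => ⟪c • tensorPow p t.1, g⟫) ⟨e, heT⟩
      have h3 := (real_inner_le_norm (tensorPow p f - tensorPow p e) g).trans
        (mul_le_mul_of_nonneg_right hfe (norm_nonneg g))
      rw [inner_sub_left] at h3
      simp only [real_inner_smul_left] at h2
      have h4 : ⟪tensorPow p e, g⟫ ≤ Real.log (FA g) / c := by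
        rw [le_div_iff₀ hc, mul_comm]
        simpa only [hFA, real_inner_smul_left] using h2
      linarith
    have h5 := mul_le_mul_of_nonneg_left h hc.le
    rw [mul_add, mul_div_cancel₀ _ hc.ne'] at h5
    linarith
  rw [integral_sub (hsi.const_mul c) (hni.const_mul (c * ε)), integral_const_mul,
    integral_const_mul] at h1
  have hpos : 0 < ∫ g, FA g ∂stdGaussian (EuclideanSpace ℝ (Fin p → Fin N)) :=
    integral_pos_of_forall_pos (fun g => softExp_pos _ _) hFAi
  have hEi := integrable_exp_norm_stdGaussian (V := EuclideanSpace ℝ (Fin N)) (c * Real.sqrt p)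
  have hEpos : 0 < ∫ y, Real.exp (c * Real.sqrt p * ‖y‖)
      ∂stdGaussian (EuclideanSpace ℝ (Fin N)) := integral_exp_pos hEi
  have h2 : Real.exp (c ^ 2 * (p - 1) / 2) *
      ∫ g, FA g ∂stdGaussian (EuclideanSpace ℝ (Fin p → Fin N)) ≤
      Real.exp (Real.log T.card / k) * ∫ y, Real.exp (c * Real.sqrt p * ‖y‖)
      ∂stdGaussian (EuclideanSpace ℝ (Fin N)) := by
    refine (exp_mul_integral_softExp_tensorPow_le hk c he).trans ?_
    rw [← integral_const_mul]
    refine integral_mono (integrable_softExp hk0 _) (hEi.const_mul _) fun y => ?_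
    have := softExp_le (M := c * Real.sqrt p * ‖y‖) hk0
      (y := fun t : T => ⟪(c * Real.sqrt p) • t.1, y⟫) (fun t => by
        refine (real_inner_le_norm _ _).trans_eq ?_
        rw [norm_smul, he, mul_one, Real.norm_of_nonneg (by positivity)])
    simpa using this
  have h3 := Real.log_le_log (by positivity) h2
  rw [Real.log_mul (Real.exp_pos _).ne' hpos.ne', Real.log_mul (Real.exp_pos _).ne' hEpos.ne',
    Real.log_exp, Real.log_exp] at h3
  linarith

lemma mul_integral_supTensor_le {p N : ℕ} (hN : 1 ≤ N) {c : ℝ} (hc : 0 < c) :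
    c * ∫ g, supTensor p g ∂stdGaussian (EuclideanSpace ℝ (Fin p → Fin N)) ≤
      Real.log (∫ y, Real.exp (c * Real.sqrt p * ‖y‖) ∂stdGaussian (EuclideanSpace ℝ (Fin N)))
        - c ^ 2 * (p - 1) / 2 := by
  set I := ∫ g, ‖g‖ ∂stdGaussian (EuclideanSpace ℝ (Fin p → Fin N)) with hI
  set R := Real.log (∫ y, Real.exp (c * Real.sqrt p * ‖y‖)
    ∂stdGaussian (EuclideanSpace ℝ (Fin N))) - c ^ 2 * (p - 1) / 2 with hR
  have step : ∀ ε : ℝ, 0 < ε →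
      c * ∫ g, supTensor p g ∂stdGaussian (EuclideanSpace ℝ (Fin p → Fin N)) ≤
        R + c * ε * I := fun ε hε => by
    obtain ⟨T, hT, hT1, hnet⟩ := exists_finset_net (p := p) hN hε
    have hlim : Tendsto (fun k : ℝ => R + Real.log T.card / k + c * ε * I) atTop
        (nhds (R + 0 + c * ε * I)) :=
      (tendsto_const_nhds.add (tendsto_const_nhds.div_atTop tendsto_id)).add tendsto_const_nhds
    rw [add_zero] at hlim
    refine ge_of_tendsto hlim ?_
    filter_upwards [eventually_ge_atTop 1] with k hk
    exact mul_integral_supTensor_le_of_net hN hc hk hT hT1 hnet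
  have hlim : Tendsto (fun ε : ℝ => R + c * ε * I) (nhdsWithin 0 (Set.Ioi 0))
      (nhds (R + c * 0 * I)) :=
    ((by fun_prop : Continuous fun ε : ℝ => R + c * ε * I).tendsto 0).mono_left
      nhdsWithin_le_nhds
  rw [mul_zero, zero_mul, add_zero] at hlim
  refine ge_of_tendsto hlim ?_
  filter_upwards [self_mem_nhdsWithin] with ε hε
  exact step ε hε

lemma integral_exp_mul_norm_le {N : ℕ} {a l : ℝ} (hl : 0 < l) (hl1 : 2 * l < 1) :
    ∫ y, Real.exp (a * ‖y‖) ∂stdGaussian (EuclideanSpace ℝ (Fin N)) ≤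
      Real.exp (a ^ 2 / (4 * l)) * (Real.sqrt (1 - 2 * l))⁻¹ ^ N := by
  have hD : ∀ _ : Fin N, -1 < -(2 * l) := fun _ => by linarith
  have h1 := integral_exp_neg_sum_sq_basis (EuclideanSpace.basisFun (Fin N) ℝ) hD
  have h2 := integrable_exp_neg_sum_sq_basis (EuclideanSpace.basisFun (Fin N) ℝ) hD
  rw [Finset.prod_const, Finset.card_univ, Fintype.card_fin, ← sub_eq_add_neg] at h1
  rw [← h1, ← integral_const_mul]
  refine integral_mono (integrable_exp_norm_stdGaussian a) (h2.const_mul _) fun y => ?_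
  rw [← Real.exp_add, Real.exp_le_exp, ← Finset.mul_sum]
  have h3 : ∑ i, ⟪EuclideanSpace.basisFun (Fin N) ℝ i, y⟫ ^ 2 = ‖y‖ ^ 2 :=
    (EuclideanSpace.basisFun (Fin N) ℝ).sum_sq_inner_right y
  rw [h3]
  have h4 : a ^ 2 / (4 * l) - a * ‖y‖ + l * ‖y‖ ^ 2 = (a - 2 * l * ‖y‖) ^ 2 / (4 * l) := by
    field_simp
    ring
  have h5 : 0 ≤ (a - 2 * l * ‖y‖) ^ 2 / (4 * l) := by positivity
  linarith

lemma integral_supTensor_le {p N : ℕ} (hN : 1 ≤ N) {E0 z θ : ℝ} (hz : 0 < z) (hθ : 0 < θ)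
    (h1 : p * z * (z + θ) = 1) (hE0 : E0 = p * z + θ)
    (hlog : Real.log (1 / (p * z ^ 2)) = θ * E0) :
    ∫ g, supTensor p g ∂stdGaussian (EuclideanSpace ℝ (Fin p → Fin N)) ≤
      E0 * Real.sqrt N := by
  have hN0 : (0 : ℝ) < N := by exact_mod_cast hN
  have hs : 0 < Real.sqrt N := Real.sqrt_pos.mpr hN0
  have hss : Real.sqrt N * Real.sqrt N = N := Real.mul_self_sqrt hN0.le
  have hpp : Real.sqrt p * Real.sqrt p = p := Real.mul_self_sqrt (Nat.cast_nonneg p)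
  have hzθ : 0 < z + θ := by positivity
  have hp0 : (0 : ℝ) < p := by
    rcases (Nat.cast_nonneg (α := ℝ) p).lt_or_eq with h | h
    · exact h
    · rw [← h] at h1; simp at h1
  set c := θ * Real.sqrt N with hc
  set l := θ / (2 * (z + θ)) with hl
  have hl0 : 0 < l := by positivity
  have hpz : 1 - 2 * l = p * z ^ 2 := by
    rw [hl]
    field_simp
    linear_combination (-z) * h1
  have hpz0 : 0 < p * z ^ 2 := by positivity
  have hB := integral_exp_mul_norm_le (N := N) (a := c * Real.sqrt p) hl0 (by linarith)
  have hpos : 0 < ∫ y, Real.exp (c * Real.sqrt p * ‖y‖)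
      ∂stdGaussian (EuclideanSpace ℝ (Fin N)) :=
    integral_exp_pos (integrable_exp_norm_stdGaussian (c * Real.sqrt p))
  have hB' := Real.log_le_log hpos hB
  have hsq : 0 < Real.sqrt (p * z ^ 2) := Real.sqrt_pos.mpr hpz0
  rw [hpz, Real.log_mul (Real.exp_pos _).ne' (pow_pos (inv_pos.mpr hsq) _).ne', Real.log_exp,
    Real.log_pow, Real.log_inv, Real.log_sqrt hpz0.le] at hB'
  rw [one_div, Real.log_inv] at hlog
  have hc0 : 0 < c := by positivity
  have hmain := mul_integral_supTensor_le (p := p) hN hc0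
  have hc2 : c ^ 2 = θ ^ 2 * N := by rw [hc]; linear_combination θ ^ 2 * hss
  have ha : (c * Real.sqrt p) ^ 2 / (4 * l) = N * (p * θ * (z + θ) / 2) := by
    have : (c * Real.sqrt p) ^ 2 = θ ^ 2 * N * p := by
      rw [← hc2]; linear_combination c ^ 2 * hpp
    rw [this, hl]
    field_simp
    ring
  rw [ha] at hB'
  rw [hc2] at hmain
  refine le_of_mul_le_mul_left (hmain.trans ?_) hc0
  have hfin : c * (E0 * Real.sqrt N) = N * (θ * E0) := by
    rw [hc]; linear_combination θ * E0 * hss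
  rw [hfin]
  have : Real.log (p * z ^ 2) = - (θ * E0) := by linarith
  rw [this] at hB'
  have e1 : N * (p * θ * (z + θ) / 2) + N * -(-(θ * E0) / 2) - θ ^ 2 * N * (p - 1) / 2 =
    N * (θ * E0) := by
    rw [hE0]; ring
  linarith

/-- The coordinates of order `p` among all the couplings. -/
def topIndex {p : ℕ} (hp : 3 ≤ p) (N : ℕ) (j : Fin p → Fin N) : GIdx N p :=
  ⟨⟨p, Finset.mem_Icc.mpr ⟨by omega, le_rfl⟩⟩, j⟩

lemma topIndex_injective {p : ℕ} (hp : 3 ≤ p) (N : ℕ) : Function.Injective (topIndex hp N) :=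
  fun _ _ h => eq_of_heq (Sigma.mk.inj h).2

lemma integral_comp_couplings {Ω : Type*} [MeasureSpace Ω] [IsProbabilityMeasure (ℙ : Measure Ω)]
    {p N : ℕ} (hp : 3 ≤ p) {G : Ω → (k : ℕ) → (Fin k → Fin N) → ℝ}
    (hG : StdGaussianCouplings N p G) {φ : EuclideanSpace ℝ (Fin p → Fin N) → ℝ}
    (hφ : Continuous φ) :
    ∫ ω, φ (WithLp.toLp 2 (G ω p)) ∂ℙ =
      ∫ g, φ g ∂stdGaussian (EuclideanSpace ℝ (Fin p → Fin N)) := by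
  have hG' : Measure.map (fun ω => flatten N p (G ω)) ℙ =
      Measure.pi fun _ => gaussianReal 0 1 := hG
  have hm : AEMeasurable (fun ω => flatten N p (G ω)) (ℙ : Measure Ω) := by
    refine AEMeasurable.of_map_ne_zero ?_
    rw [hG']
    exact IsProbabilityMeasure.ne_zero _
  have hc : Continuous fun y : GIdx N p → ℝ =>
      φ (coordRestrict (topIndex hp N) (WithLp.toLp 2 y)) :=
    hφ.comp ((continuous_coordRestrict _).comp (PiLp.continuous_toLp 2 _))
  have h1 : ∫ ω, φ (WithLp.toLp 2 (G ω p)) ∂ℙ =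
      ∫ y, φ (coordRestrict (topIndex hp N) (WithLp.toLp 2 y))
        ∂Measure.pi fun _ : GIdx N p => gaussianReal 0 1 := by
    rw [← hG', integral_map hm hc.aestronglyMeasurable]
    rfl
  rw [h1, ← integral_comp_coordRestrict (topIndex_injective hp N) hφ,
    ← map_pi_eq_stdGaussian, integral_map (WithLp.measurable_toLp 2 _).aemeasurable]
  exact (hφ.comp (continuous_coordRestrict _)).aestronglyMeasurable

lemma hamiltonian_pureC {p N : ℕ} (hp : 3 ≤ p) (g : (k : ℕ) → (Fin k → Fin N) → ℝ)
    (σ : Fin N → ℝ) :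
    hamiltonian N p (pureC p) g σ =
      (N : ℝ) ^ (-(((p : ℝ) - 1) / 2)) * ∑ j : Fin p → Fin N, g p j * ∏ i, σ (j i) := by
  rw [hamiltonian, Finset.sum_eq_single p]
  · simp [pureC]
  · intro k _ hk
    simp [pureC, hk]
  · intro h
    exact absurd (Finset.mem_Icc.mpr ⟨by omega, le_rfl⟩) h

lemma hamiltonian_sqrt_smul {p N : ℕ} (hp : 3 ≤ p) (hN : 1 ≤ N)
    (g : (k : ℕ) → (Fin k → Fin N) → ℝ) (e : EuclideanSpace ℝ (Fin N)) :
    hamiltonian N p (pureC p) g (fun i => Real.sqrt N * e i) =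
      Real.sqrt N * ⟪tensorPow p e, WithLp.toLp 2 (g p)⟫ := by
  have hN0 : (0 : ℝ) < N := by exact_mod_cast hN
  rw [hamiltonian_pureC hp, PiLp.inner_apply]
  simp_rw [Finset.prod_mul_distrib, Finset.prod_const, Finset.card_univ, Fintype.card_fin]
  have h1 : ∀ j : Fin p → Fin N, g p j * (Real.sqrt N ^ p * ∏ i, e (j i)) =
      Real.sqrt N ^ p * ⟪tensorPow p e j, WithLp.toLp 2 (g p) j⟫ := fun j => by
    simp only [tensorPow, elemTensor_apply, RCLike.inner_apply, conj_trivial]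
    ring
  simp_rw [h1]
  rw [← Finset.mul_sum, ← mul_assoc]
  congr 1
  rw [Real.sqrt_eq_rpow, ← Real.rpow_natCast, ← Real.rpow_mul hN0.le, ← Real.rpow_add hN0]
  congr 1
  ring

lemma maxH_eq_sqrt_mul_supTensor {p N : ℕ} (hp : 3 ≤ p) (hN : 1 ≤ N)
    (g : (k : ℕ) → (Fin k → Fin N) → ℝ) :
    maxH N p (pureC p) g = Real.sqrt N * supTensor p (WithLp.toLp 2 (g p)) := by
  have hN0 : (0 : ℝ) < N := by exact_mod_cast hN
  have hs : 0 < Real.sqrt N := Real.sqrt_pos.mpr hN0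
  have hsq : Real.sqrt N ^ 2 = N := Real.sq_sqrt hN0.le
  have hmem : ∀ e : EuclideanSpace ℝ (Fin N), ‖e‖ = 1 →
      (fun i => Real.sqrt N * e i) ∈ sphereSet N := fun e he => by
    have h := EuclideanSpace.real_norm_sq_eq e
    rw [he] at h
    change ∑ i, (Real.sqrt N * e i) ^ 2 = N
    simp_rw [mul_pow]
    rw [← Finset.mul_sum, ← h, hsq]
    ring
  have hle : ∀ σ : sphereSet N, hamiltonian N p (pureC p) g σ.1 ≤
      Real.sqrt N * supTensor p (WithLp.toLp 2 (g p)) := fun σ => by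
    have hσ : ∑ i, σ.1 i ^ 2 = (N : ℝ) := σ.2
    set e : EuclideanSpace ℝ (Fin N) := WithLp.toLp 2 fun i => (Real.sqrt N)⁻¹ * σ.1 i with he
    have he1 : ‖e‖ = 1 := by
      have h : ‖e‖ ^ 2 = 1 := by
        rw [EuclideanSpace.real_norm_sq_eq]
        simp only [he, mul_pow]
        rw [← Finset.mul_sum, hσ, inv_pow, hsq, inv_mul_cancel₀ hN0.ne']
      exact (pow_eq_one_iff_of_nonneg (norm_nonneg _) two_ne_zero).mp h
    have hσe : σ.1 = fun i => Real.sqrt N * e i := by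
      funext i
      simp only [he]
      rw [mul_inv_cancel_left₀ hs.ne']
    rw [hσe, hamiltonian_sqrt_smul hp hN]
    exact mul_le_mul_of_nonneg_left (le_supTensor he1 _) hs.le
  have hbdd : BddAbove (Set.range fun σ : sphereSet N => hamiltonian N p (pureC p) g σ.1) :=
    ⟨_, by rintro _ ⟨σ, rfl⟩; exact hle σ⟩
  obtain ⟨e, he⟩ := nonempty_sphere hN
  have : Nonempty (sphereSet N) := ⟨⟨_, hmem e (by simpa using he)⟩⟩
  refine le_antisymm (ciSup_le hle) ?_
  rw [← le_div_iff₀' hs]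
  refine supTensor_le hN fun f hf => ?_
  rw [le_div_iff₀' hs, ← hamiltonian_sqrt_smul hp hN]
  exact le_ciSup hbdd ⟨_, hmem f hf⟩

lemma integral_maxH_div {Ω : Type*} [MeasureSpace Ω] [IsProbabilityMeasure (ℙ : Measure Ω)]
    {p N : ℕ} (hp : 3 ≤ p) (hN : 1 ≤ N) {G : Ω → (k : ℕ) → (Fin k → Fin N) → ℝ}
    (hG : StdGaussianCouplings N p G) :
    (∫ ω, maxH N p (pureC p) (G ω) ∂ℙ) / N =
      (∫ g, supTensor p g ∂stdGaussian (EuclideanSpace ℝ (Fin p → Fin N))) / Real.sqrt N := by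
  have hN0 : (0 : ℝ) < N := by exact_mod_cast hN
  have hs : 0 < Real.sqrt N := Real.sqrt_pos.mpr hN0
  simp_rw [maxH_eq_sqrt_mul_supTensor hp hN]
  rw [integral_const_mul, integral_comp_couplings hp hG (continuous_supTensor hN),
    div_eq_div_iff hN0.ne' hs.ne']
  linear_combination (∫ g, supTensor p g ∂stdGaussian (EuclideanSpace ℝ (Fin p → Fin N))) *
    Real.mul_self_sqrt hN0.le

/-- the ground-state energy of the pure p-spin spherical model equals `E₀`,
the zero of the annealed complexity. -/
theorem statement_7 {Ω : Type*} [MeasureSpace Ω] [IsProbabilityMeasure (ℙ : Measure Ω)]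
    (p : ℕ) (hp : 3 ≤ p)
    (G : (N : ℕ) → Ω → (k : ℕ) → (Fin k → Fin N) → ℝ)
    (hG : ∀ N, 1 ≤ N → StdGaussianCouplings N p (G N))
    (E0 : ℝ) (hE0thr : THRp p < E0) (hE0zero : SigmaPure p E0 = 0) :
    Tendsto (fun N : ℕ => (∫ ω, maxH N p (pureC p) (G N ω) ∂ℙ) / N) atTop (nhds E0) := by
  obtain ⟨z, θ, hz, hθ, h1, hE0, hlog, hlt⟩ := exists_rsb_parameters p hp E0 hE0thr hE0zero
  rw [← tendsto_add_atTop_iff_nat 2]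
  have heq : ∀ n : ℕ, (∫ ω, maxH (n + 2) p (pureC p) (G (n + 2) ω) ∂ℙ) / ((n + 2 : ℕ) : ℝ) =
      (∫ g, supTensor p g ∂stdGaussian (EuclideanSpace ℝ (Fin p → Fin (n + 2)))) /
        Real.sqrt ((n + 2 : ℕ) : ℝ) := fun n =>
    integral_maxH_div hp (by omega) (hG (n + 2) (by omega))
  simp_rw [heq]
  refine tendsto_order.mpr ⟨fun a ha => ?_, fun a ha => Eventually.of_forall fun n => ?_⟩
  · filter_upwards [eventually_le_integral_supTensor hp hz hθ h1 hE0 hlog hlt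
      (ε := (E0 - a) / 2) (by linarith)] with n hn
    push_cast
    linarith
  · refine lt_of_le_of_lt ?_ ha
    have hs : 0 < Real.sqrt ((n + 2 : ℕ) : ℝ) := Real.sqrt_pos.mpr (by positivity)
    rw [div_le_iff₀ hs]
    exact integral_supTensor_le (by omega) hz hθ h1 hE0 hlog
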